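/- arXiv:1204.6530 — 2 statements merged into one kernel-verified Lean document; each statement's English description precedes it below -/
import Mathlib

section
/- For every positive real δ and every integer k ≥ 3, there exists a positive real ε such that the following holds for all sufficiently large n: every subset A ⊆ {1,…,n} with |A| ≥ δn contains at least ε·n² k-term arithmetic progressions, i.e., there are at least ε·n² pairs (a,d) of positive integers with d ≥ 1 such that {a, a+d, …, a+(k−1)d} ⊆ A. -/
namespace Varn
open MeasureTheory Filter Topology

section sig
variable {ι : Type*}

/-- The σ-algebra on bit configurations generated by the coordinates in `S`. -/
@[reducible] def sig (S : Set ι) : MeasurableSpace (ι → Bool) :=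
  ⨆ i ∈ S, MeasurableSpace.comap (fun x : ι → Bool => x i) ⊤

lemma sig_le (S : Set ι) : sig S ≤ (MeasurableSpace.pi : MeasurableSpace (ι → Bool)) := by
  refine iSup₂_le fun i _ => ?_
  exact le_iSup (fun i => MeasurableSpace.comap (fun x : ι → Bool => x i) ⊤) i

lemma sig_mono {S T : Set ι} (h : S ⊆ T) : sig S ≤ sig T :=
  biSup_mono h

lemma measurable_coord {S : Set ι} {i : ι} (hi : i ∈ S) :
    @Measurable _ _ (sig S) ⊤ (fun x : ι → Bool => x i) := by
  rw [measurable_iff_comap_le]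
  exact le_iSup₂ (f := fun i (_ : i ∈ S) => MeasurableSpace.comap (fun x : ι → Bool => x i) ⊤) i hi

lemma sig_iUnion {α : Type*} (S : α → Set ι) : sig (⋃ n, S n) = ⨆ n, sig (S n) := by
  unfold sig
  apply le_antisymm
  · refine iSup₂_le fun i hi => ?_
    obtain ⟨n, hn⟩ := Set.mem_iUnion.1 hi
    exact le_trans (le_iSup₂ (f := fun i (_ : i ∈ S n) =>
      MeasurableSpace.comap (fun x : ι → Bool => x i) ⊤) i hn)
      (le_iSup (fun n => ⨆ i ∈ S n, MeasurableSpace.comap (fun x : ι → Bool => x i) ⊤) n)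
  · refine iSup_le fun n => ?_
    exact sig_mono (Set.subset_iUnion S n)

lemma dep_set {S : Set ι} {A : Set (ι → Bool)} (hA : MeasurableSet[sig S] A) {x y : ι → Bool}
    (h : ∀ i ∈ S, x i = y i) : x ∈ A ↔ y ∈ A := by
  have h1 : sig S ≤ MeasurableSpace.comap (S.domRestrict : (ι → Bool) → (S → Bool)) ⊤ := by
    refine iSup₂_le fun i hi => ?_
    rintro _ ⟨B, -, rfl⟩
    exact ⟨(fun z : S → Bool => z ⟨i, hi⟩) ⁻¹' B, trivial, rfl⟩
  obtain ⟨B, -, rfl⟩ := h1 _ hA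
  have : S.domRestrict x = S.domRestrict y := by
    ext i; exact h i i.2
  simp [Set.mem_preimage, this]

lemma dep_fun {S : Set ι} {f : (ι → Bool) → ℝ} (hf : StronglyMeasurable[sig S] f)
    {x y : ι → Bool} (h : ∀ i ∈ S, x i = y i) : f x = f y := by
  have h1 : MeasurableSet[sig S] (f ⁻¹' {f y}) := hf.measurable (measurableSet_singleton _)
  exact (dep_set h1 h).2 rfl

lemma measurable_reindex {S T : Set ι} (σ : ι → ι) (h : ∀ i ∈ S, σ i ∈ T) :
    @Measurable _ _ (sig T) (sig S) (fun (x : ι → Bool) i => x (σ i)) := by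
  rw [measurable_iff_comap_le]
  unfold sig
  simp only [MeasurableSpace.comap_iSup, MeasurableSpace.comap_comp]
  refine iSup₂_le fun i hi => ?_
  exact le_iSup₂ (f := fun i (_ : i ∈ T) =>
    MeasurableSpace.comap (fun x : ι → Bool => x i) ⊤) (σ i) (h i hi)

lemma measurable_merge {S T : Set ι} (c : ι → Bool) (P : ι → Prop) [DecidablePred P]
    (h : ∀ i ∈ S, ¬ P i → i ∈ T) :
    @Measurable _ _ (sig T) (sig S) (fun (x : ι → Bool) i => if P i then c i else x i) := by
  rw [measurable_iff_comap_le]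
  conv_lhs => unfold sig
  simp only [MeasurableSpace.comap_iSup, MeasurableSpace.comap_comp]
  refine iSup₂_le fun i hi => ?_
  rw [← measurable_iff_comap_le]
  by_cases hP : P i
  · simp only [Function.comp_def, hP, if_true]
    exact measurable_const
  · simp only [Function.comp_def, hP, if_false]
    exact measurable_coord (h i hi hP)

lemma meas_cyl {S : Set ι} (K : Finset ι) (a : ι → Bool) (h : ∀ i ∈ K, i ∈ S) :
    MeasurableSet[sig S] {x : ι → Bool | ∀ i ∈ K, x i = a i} := by
  have : {x : ι → Bool | ∀ i ∈ K, x i = a i} = ⋂ i ∈ K, (fun x : ι → Bool => x i) ⁻¹' {a i} := by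
    ext x; simp
  rw [this]
  refine @Finset.measurableSet_biInter _ _ (sig S) _ K (fun i hi => ?_)
  exact measurable_coord (h i hi) trivial

end sig

variable {k : ℕ}

abbrev Idx (k : ℕ) := Fin k × (Fin k → ℕ)
abbrev Cfg (k : ℕ) := Idx k → Bool
def Z (p : Idx k) : Finset (Fin k) := Finset.univ.filter (fun i => p.2 i = 0)
lemma mem_Z {p : Idx k} {i : Fin k} : i ∈ Z p ↔ p.2 i = 0 := by simp [Z]
def bd (M : ℕ) : Set (Idx k) := {p | ∀ i, p.2 i ≤ M}

lemma bd_mono : Monotone (bd : ℕ → Set (Idx k)) := fun _ _ h _ hp i => (hp i).trans h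
lemma bd_union : ⋃ n, (bd n : Set (Idx k)) = Set.univ := by
  refine Set.eq_univ_of_forall fun p => Set.mem_iUnion.2 ⟨∑ i, p.2 i, fun i => ?_⟩
  exact Finset.single_le_sum (f := p.2) (fun _ _ => Nat.zero_le _) (Finset.mem_univ i)

lemma bd_finite (M : ℕ) : (bd M : Set (Idx k)).Finite := by
  have : (bd M : Set (Idx k)) = Set.univ ×ˢ Set.Iic (fun _ => M) := by
    ext p; simp [bd, Pi.le_def]
  rw [this]
  exact Set.finite_univ.prod (Set.finite_Iic _)

def filt (R : Set (Idx k)) (S : Set (Idx k)) :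
    Filtration ℕ (MeasurableSpace.pi : MeasurableSpace (Cfg k)) where
  seq n := sig (R ∪ (S ∩ bd n))
  mono' := fun _ _ h => sig_mono (Set.union_subset_union_right _ (Set.inter_subset_inter_right _ (bd_mono h)))
  le' := fun _ => sig_le _

lemma filt_iSup (R S : Set (Idx k)) : ⨆ n, filt R S n = sig (R ∪ S) := by
  change ⨆ n, sig (R ∪ (S ∩ bd n)) = _
  rw [← sig_iUnion, ← Set.union_iUnion, ← Set.inter_iUnion, bd_union, Set.inter_univ]

/-- invariance under permuting sampled vertices in each class -/
def act (s : Fin k → Equiv.Perm ℕ) (x : Cfg k) : Cfg k := fun p => x (p.1, fun i => s i (p.2 i))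

def Inv (μ : Measure (Cfg k)) : Prop :=
  ∀ s : Fin k → Equiv.Perm ℕ, MeasurePreserving (act s) μ μ

def tau (e : Finset (Fin k)) (M : ℕ) : Fin k → Equiv.Perm ℕ :=
  fun i => if i ∈ e then Equiv.refl ℕ else Equiv.swap 0 (M+1)

lemma tau_fix (e : Finset (Fin k)) (M : ℕ) (p : Idx k) (hp : p ∈ bd M) (hZ : Z p ⊆ e) :
    (p.1, fun i => tau e M i (p.2 i)) = p := by
  ext i
  · rfl
  · simp only [tau]
    split_ifs with h
    · rfl
    · rw [Equiv.swap_apply_of_ne_of_ne]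
      · intro h0; exact h (hZ (by simp [Z, h0]))
      · have := hp i; omega

lemma tau_Z (e : Finset (Fin k)) (M : ℕ) (p : Idx k) (hp : p ∈ bd M) :
    Z (p.1, fun i => tau e M i (p.2 i)) = Z p ∩ e := by
  ext i
  simp only [mem_Z, tau, Finset.mem_inter]
  split_ifs with h
  · simp [h]
  · simp only [h, and_false, iff_false]
    have := hp i
    intro h0
    rw [Equiv.swap_apply_eq_iff] at h0
    simp at h0; omega

lemma abs_setIntegral_sub_le {X : Type*} [MeasurableSpace X] {μ : Measure X} {u v : X → ℝ}
    (hu : Integrable u μ) (hv : Integrable v μ) (t : Set X) :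
    |∫ x in t, u x ∂μ - ∫ x in t, v x ∂μ| ≤ (eLpNorm (u - v) 1 μ).toReal := by
  rw [← integral_sub hu.integrableOn hv.integrableOn]
  rw [eLpNorm_one_eq_lintegral_enorm, ← integral_norm_eq_lintegral_enorm (hu.sub hv).aestronglyMeasurable]
  refine (norm_integral_le_integral_norm (fun x => u x - v x)).trans ?_
  exact setIntegral_le_integral (hu.sub hv).norm (Eventually.of_forall fun _ => norm_nonneg _)

theorem relindep (μ : Measure (Cfg k)) [IsProbabilityMeasure μ] (hinv : Inv μ)
    (e : Finset (Fin k)) (T : Set (Idx k)) (hT : ∀ p ∈ T, ∀ q, Z q ⊂ Z p → q ∈ T)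
    (f : Cfg k → ℝ) (hfi : Integrable f μ) (hf : StronglyMeasurable[sig {p | Z p ⊆ e}] f) :
    μ[f | sig T] =ᵐ[μ] μ[f | sig (T ∩ {p | Z p ⊆ e})] := by
  set S : Set (Idx k) := {p | Z p ⊆ e} with hS
  set f0 := μ[f | sig (T ∩ S)] with hf0
  set u := f - f0 with hu
  have hf0i : Integrable f0 μ := integrable_condExp
  have hui : Integrable u μ := hfi.sub hf0i
  have hf0m : StronglyMeasurable[sig (T ∩ S)] f0 := stronglyMeasurable_condExp
  have hum : StronglyMeasurable[sig S] u :=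
    hf.sub (hf0m.mono (sig_mono Set.inter_subset_right))
  have hlev : Tendsto (fun n => (eLpNorm (μ[u | filt ∅ S n] - u) 1 μ).toReal) atTop (𝓝 0) := by
    have := hui.tendsto_eLpNorm_condExp (ℱ := filt ∅ S) (by rw [filt_iSup, Set.empty_union]; exact hum)
    simpa [Function.comp_def] using (ENNReal.tendsto_toReal ENNReal.zero_ne_top).comp this
  -- key claim
  have key : ∀ (M0 : ℕ) (t : Set (Cfg k)), MeasurableSet[sig (T ∩ bd M0)] t →
      ∫ x in t, u x ∂μ = 0 := by
    intro M0 t ht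
    have htm : MeasurableSet t := sig_le _ _ ht
    have hb : ∀ M, M0 ≤ M → |∫ x in t, u x ∂μ| ≤
        (eLpNorm (μ[u | filt ∅ S M] - u) 1 μ).toReal +
        (eLpNorm (μ[u | filt ∅ S M] - u) 1 μ).toReal := by
      intro M hM
      set v := μ[u | filt ∅ S M] with hv
      have hvi : Integrable v μ := integrable_condExp
      have hvm : StronglyMeasurable[sig (∅ ∪ (S ∩ bd M))] v := stronglyMeasurable_condExp
      have hvm0 : StronglyMeasurable v := hvm.mono (sig_le _)
      set τ := act (tau e M) with hτ
      have hmp : MeasurePreserving τ μ μ := hinv _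
      have e1 : ∫ x in t, v x ∂μ = ∫ x in τ ⁻¹' t, v x ∂μ := by
        conv_lhs => rw [← hmp.map_eq]
        rw [setIntegral_map htm hvm0.aestronglyMeasurable hmp.measurable.aemeasurable]
        congr 1
        ext x
        refine dep_fun hvm ?_
        intro p hp
        rw [Set.empty_union] at hp
        simp only [hτ, act]
        rw [tau_fix e M p hp.2 hp.1]
      have e2 : MeasurableSet[sig (T ∩ S)] (τ ⁻¹' t) := by
        refine measurable_reindex (S := T ∩ bd M0) (T := T ∩ S) (fun p => (p.1, fun i => tau e M i (p.2 i))) ?_ ht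
        rintro p ⟨hpT, hpb⟩
        have hpb' := bd_mono hM hpb
        have hz := tau_Z e M p hpb'
        refine ⟨?_, ?_⟩
        · by_cases hpe : Z p ⊆ e
          · rw [tau_fix e M p hpb' hpe]; exact hpT
          · refine hT p hpT _ ?_
            rw [hz, Finset.ssubset_iff_subset_ne]
            refine ⟨Finset.inter_subset_left, fun h => hpe (Finset.inter_eq_left.1 h)⟩
        · change Z _ ⊆ e
          rw [hz]; exact Finset.inter_subset_right
      have e3 : ∫ x in τ ⁻¹' t, u x ∂μ = 0 := by
        have := setIntegral_condExp (μ := μ) (sig_le (T ∩ S)) hfi e2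
        simp only [hu, Pi.sub_apply]
        rw [integral_sub hfi.integrableOn hf0i.integrableOn, this, sub_self]
      have b1 := abs_setIntegral_sub_le hvi hui t
      have b2 := abs_setIntegral_sub_le hvi hui (τ ⁻¹' t)
      rw [e3, ← e1] at b2
      rw [abs_le] at *
      constructor <;> linarith [b1.1, b1.2, b2.1, b2.2]
    have hlim : Tendsto (fun M => (eLpNorm (μ[u | filt ∅ S M] - u) 1 μ).toReal +
        (eLpNorm (μ[u | filt ∅ S M] - u) 1 μ).toReal) atTop (𝓝 0) := by
      simpa using hlev.add hlev
    have : |∫ x in t, u x ∂μ| ≤ 0 :=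
      ge_of_tendsto hlim (eventually_atTop.2 ⟨M0, hb⟩)
    exact abs_nonpos_iff.1 this
  have hz : ∀ n, μ[u | filt ∅ T n] =ᵐ[μ] 0 := by
    intro n
    symm
    refine ae_eq_condExp_of_forall_setIntegral_eq ((filt ∅ T).le n) hui
      (fun _ _ _ => (integrable_zero _ _ _).integrableOn) ?_ ?_
    · intro s hs _
      have hs' : MeasurableSet[sig (T ∩ bd n)] s := by
        have : MeasurableSet[sig (∅ ∪ (T ∩ bd n))] s := hs
        rwa [Set.empty_union] at this
      rw [key n s hs']; simp
    · exact aestronglyMeasurable_zero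
  have hz2 : μ[u | sig T] =ᵐ[μ] 0 := by
    have h1 := tendsto_ae_condExp (μ := μ) (ℱ := filt ∅ T) u
    rw [filt_iSup, Set.empty_union] at h1
    filter_upwards [h1, ae_all_iff.2 hz] with x hx hx2
    refine tendsto_nhds_unique hx ?_
    simp only [hx2]
    exact tendsto_const_nhds
  have h3 : μ[u | sig T] =ᵐ[μ] μ[f | sig T] - μ[f0 | sig T] := condExp_sub hfi hf0i _
  have h4 : μ[f0 | sig T] = f0 :=
    condExp_of_stronglyMeasurable (sig_le _) (hf0m.mono (sig_mono Set.inter_subset_left)) hf0i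
  rw [h4] at h3
  filter_upwards [hz2, h3] with x h5 h6
  rw [h6] at h5
  simp only [Pi.sub_apply, Pi.zero_apply] at h5
  linarith

end Varn

namespace Varn
open MeasureTheory Filter Topology
variable {k : ℕ}

lemma setInt_ind {X : Type*} [MeasurableSpace X] (μ : Measure X) [IsFiniteMeasure μ] (W A : Set X)
    (hA : MeasurableSet A) : ∫ x in W, A.indicator (fun _ => (1:ℝ)) x ∂μ = μ.real (W ∩ A) := by
  rw [setIntegral_indicator hA]; simp

/-- keep the bits in `K`, zero out the others -/
def lft (K : Finset (Idx k)) (x : Cfg k) : Cfg k := fun p => if p ∈ K then x p else false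

lemma lft_finite (K : Finset (Idx k)) : (Set.range (lft K)).Finite := by
  refine (Set.finite_range (fun (a : K → Bool) (p : Idx k) =>
    if h : p ∈ K then a ⟨p, h⟩ else false)).subset ?_
  rintro _ ⟨x, rfl⟩
  refine ⟨fun p => x p, ?_⟩
  ext p
  simp [lft]

lemma lft_apply {K : Finset (Idx k)} {x : Cfg k} {p : Idx k} (h : p ∈ K) : lft K x p = x p := by
  simp [lft, h]

def mrg (D : ℕ) (c y : Cfg k) : Cfg k := fun p => if D ≤ (Z p).card then c p else y p

lemma mrg_ge {D : ℕ} {c y : Cfg k} {p : Idx k} (h : D ≤ (Z p).card) : mrg D c y p = c p := by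
  simp [mrg, h]
lemma mrg_lt {D : ℕ} {c y : Cfg k} {p : Idx k} (h : (Z p).card < D) : mrg D c y p = y p := by
  simp [mrg, h]
lemma mrg_self {D : ℕ} {c : Cfg k} : mrg D c c = c := by
  ext p; simp [mrg]

def Good (μ : Measure (Cfg k)) (D : ℕ) (Q : Fin k → Set (Cfg k)) : Prop :=
  (∃ I : Finset (Idx k), (∀ p ∈ I, D ≤ (Z p).card) ∧
    ∀ j, MeasurableSet[sig {p | Z p ⊆ Finset.univ.erase j ∧ ((Z p).card < D ∨ p ∈ I)}] (Q j)) ∧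
  ∀ c, μ {y | ∀ j, mrg D c y ∈ Q j} = 0

set_option maxHeartbeats 1000000 in
theorem step (μ : Measure (Cfg k)) [IsProbabilityMeasure μ] (hinv : Inv μ) (D : ℕ) (hD : D < k)
    (Q : Fin k → Set (Cfg k)) (hQ : Good μ (D+1) Q) (ε : ℝ) (hε : 0 < ε) :
    ∃ Q', Good μ D Q' ∧ ∀ j, μ.real (Q j \ Q' j) ≤ ε := by
  classical
  obtain ⟨⟨I, hI, hQm⟩, hnull⟩ := hQ
  have hkpos : (0:ℝ) < k := by exact_mod_cast (by omega : 0 < k)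
  set U : Fin k → Set (Idx k) := fun j => {p | Z p ⊆ Finset.univ.erase j} with hU
  set Qc : Fin k → Cfg k → Set (Cfg k) := fun j c => {y | mrg (D+1) c y ∈ Q j} with hQc
  have Qc_meas : ∀ j c, MeasurableSet[sig (U j ∩ {p | (Z p).card < D + 1})] (Qc j c) := by
    intro j c
    refine measurable_merge c (fun p => D + 1 ≤ (Z p).card) ?_ (hQm j)
    rintro p ⟨h1, h2⟩ h3
    exact ⟨h1, not_le.1 h3⟩
  have Qc_congr : ∀ j c c', (∀ p ∈ I, p ∈ U j → c p = c' p) → Qc j c = Qc j c' := by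
    intro j c c' h
    ext y
    refine dep_set (hQm j) ?_
    rintro p ⟨h1, h2⟩
    by_cases h3 : D + 1 ≤ (Z p).card
    · rw [mrg_ge h3, mrg_ge h3]
      exact h p (h2.resolve_left (by omega)) h1
    · rw [mrg_lt (by omega), mrg_lt (by omega)]
  have Qc_meas0 : ∀ j c, MeasurableSet (Qc j c) := fun j c => sig_le _ _ (Qc_meas j c)
  set ind : Fin k → Cfg k → Cfg k → ℝ := fun j c => (Qc j c).indicator (fun _ => (1:ℝ)) with hind
  have ind_int : ∀ j c, Integrable (ind j c) μ := fun j c =>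
    (integrable_const (1:ℝ)).indicator (Qc_meas0 j c)
  have ind_sm : ∀ j c, StronglyMeasurable[sig (U j ∩ {p | (Z p).card < D + 1})] (ind j c) :=
    fun j c => (stronglyMeasurable_const (b := (1:ℝ))).indicator (Qc_meas j c)
  -- choice of approximation level
  set Lb := (lft_finite I).toFinset with hLb
  set η : ℝ := ε / (2 * k * (Lb.card + 1)) with hη
  have hηpos : 0 < η := by positivity
  have hlev : ∀ᶠ n in atTop, ∀ j, ∀ a ∈ Lb,
      (eLpNorm (μ[ind j a | filt (U j ∩ {p | (Z p).card < D}) (U j ∩ {p | (Z p).card = D}) n]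
        - ind j a) 1 μ).toReal < η := by
    rw [eventually_all]
    intro j
    rw [eventually_all_finset]
    intro a _
    have h1 := (ind_int j a).tendsto_eLpNorm_condExp
      (ℱ := filt (U j ∩ {p | (Z p).card < D}) (U j ∩ {p | (Z p).card = D})) (by
        rw [filt_iSup, ← Set.inter_union_distrib_left]
        convert ind_sm j a using 4
        ext p; simp; omega)
    have h2 : Tendsto (fun n => (eLpNorm (μ[ind j a | filt (U j ∩ {p | (Z p).card < D}) (U j ∩ {p | (Z p).card = D}) n]
        - ind j a) 1 μ).toReal) atTop (𝓝 0) := by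
      simpa [Function.comp_def] using (ENNReal.tendsto_toReal ENNReal.zero_ne_top).comp h1
    exact h2.eventually_lt_const hηpos
  obtain ⟨n, hn⟩ := hlev.exists
  set L : Finset (Idx k) := (bd_finite n).toFinset.filter (fun p => (Z p).card = D) with hL
  have hLD : ∀ p ∈ L, (Z p).card = D := fun p hp => (Finset.mem_filter.1 hp).2
  set R : Fin k → Set (Idx k) := fun j => {p | (Z p).card < D ∨ p ∈ L} ∩ U j with hR
  have hfR : ∀ j, (filt (U j ∩ {p | (Z p).card < D}) (U j ∩ {p | (Z p).card = D}) n) = sig (R j) := by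
    intro j
    change sig _ = sig _
    congr 1
    ext p
    simp [hR, hL]
    tauto
  set g : Fin k → Cfg k → Cfg k → ℝ := fun j c => μ[ind j c | sig (R j)] with hg
  have g_int : ∀ j c, Integrable (g j c) μ := fun j c => integrable_condExp
  have g_sm : ∀ j c, StronglyMeasurable[sig (R j)] (g j c) := fun j c => stronglyMeasurable_condExp
  have g_congr : ∀ j c c', (∀ p ∈ I, p ∈ U j → c p = c' p) → g j c = g j c' := by
    intro j c c' h
    simp only [hg, hind, Qc_congr j c c' h]
  have hn' : ∀ j, ∀ a ∈ Lb, (eLpNorm (g j a - ind j a) 1 μ).toReal < η := by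
    intro j a ha
    have := hn j a ha
    rwa [hfR j] at this
  set CE : Finset (Fin k) → Cfg k → Set (Cfg k) :=
    fun e c => {y | ∀ p ∈ L.filter (fun p => Z p = e), y p = c p} with hCE
  have CE_meas : ∀ e c, MeasurableSet[sig {p | Z p ⊆ e}] (CE e c) := by
    intro e c
    refine meas_cyl _ c ?_
    intro p hp
    exact (Finset.mem_filter.1 hp).2.subset
  have CE_meas0 : ∀ e c, MeasurableSet (CE e c) := fun e c => sig_le _ _ (CE_meas e c)
  have CE_congr : ∀ e c c', (∀ p ∈ L, Z p = e → c p = c' p) → CE e c = CE e c' := by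
    intro e c c' h
    ext y
    simp only [hCE, Finset.mem_filter, Set.mem_ofPred_eq]
    constructor
    · intro h1 p hp; rw [h1 p hp, h p hp.1 hp.2]
    · intro h1 p hp; rw [h1 p hp, h p hp.1 hp.2]
  set ie : Finset (Fin k) → Cfg k → Cfg k → ℝ := fun e c => (CE e c).indicator (fun _ => (1:ℝ)) with hie
  have ie_int : ∀ e c, Integrable (ie e c) μ := fun e c =>
    (integrable_const (1:ℝ)).indicator (CE_meas0 e c)
  have ie_sm : ∀ e c, StronglyMeasurable[sig {p | Z p ⊆ e}] (ie e c) :=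
    fun e c => (stronglyMeasurable_const (b := (1:ℝ))).indicator (CE_meas e c)
  set pe : Finset (Fin k) → Cfg k → Cfg k → ℝ := fun e c => μ[ie e c | sig {p | Z p ⊂ e}] with hpe
  have pe_int : ∀ e c, Integrable (pe e c) μ := fun e c => integrable_condExp
  have pe_sm : ∀ e c, StronglyMeasurable[sig {p | Z p ⊂ e}] (pe e c) :=
    fun e c => stronglyMeasurable_condExp
  have pe_congr : ∀ e c c', (∀ p ∈ L, Z p = e → c p = c' p) → pe e c = pe e c' := by
    intro e c c' h
    simp only [hpe, hie, CE_congr e c c' h]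
  set θ : ℝ := 1 - 1 / (2 * k) with hθ
  set G : Fin k → Cfg k → Set (Cfg k) := fun j c =>
    {x | θ < g j c x ∧ ∀ e ∈ Finset.powersetCard D (Finset.univ.erase j), 0 < pe e c x} with hG
  have hQ'm : ∀ j, MeasurableSet[sig {p | Z p ⊆ Finset.univ.erase j ∧ ((Z p).card < D ∨ p ∈ I ∪ L)}]
      {x | x ∈ G j x} := by
    intro j
    set K := (I ∪ L).filter (fun p => Z p ⊆ Finset.univ.erase j) with hK
    set V : Set (Idx k) := {p | Z p ⊆ Finset.univ.erase j ∧ ((Z p).card < D ∨ p ∈ I ∪ L)} with hV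
    have G_congr : ∀ c c', (∀ p ∈ K, c p = c' p) → G j c = G j c' := by
      intro c c' h
      have h1 := g_congr j c c' (fun p hp hpU => h p (by simp [hK, hp]; exact hpU))
      have h2 : ∀ e ∈ Finset.powersetCard D (Finset.univ.erase j), pe e c = pe e c' := by
        intro e he
        refine pe_congr e c c' (fun p hp hpe => h p ?_)
        simp only [hK, Finset.mem_filter, Finset.mem_union, hp, or_true, true_and]
        rw [hpe]; exact (Finset.mem_powersetCard.1 he).1
      ext x
      simp only [hG, Set.mem_ofPred_eq, h1]
      constructor
      · rintro ⟨a, b⟩; exact ⟨a, fun e he => by rw [← h2 e he]; exact b e he⟩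
      · rintro ⟨a, b⟩; exact ⟨a, fun e he => by rw [h2 e he]; exact b e he⟩
    have G_meas : ∀ c, MeasurableSet[sig V] (G j c) := by
      intro c
      have h1 : MeasurableSet[sig V] {x | θ < g j c x} := by
        refine measurableSet_lt (measurable_const) ((g_sm j c).mono (sig_mono ?_)).measurable
        rintro p ⟨h1, h2⟩
        refine ⟨h2, ?_⟩
        rcases h1 with h1 | h1
        · exact Or.inl h1
        · exact Or.inr (Finset.mem_union_right _ h1)
      have h2 : MeasurableSet[sig V] (⋂ e ∈ Finset.powersetCard D (Finset.univ.erase j), {x | 0 < pe e c x}) := by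
        refine @Finset.measurableSet_biInter _ _ (sig V) _ _ (fun e he => ?_)
        refine measurableSet_lt (measurable_const) ((pe_sm e c).mono (sig_mono ?_)).measurable
        intro p hp
        obtain ⟨h3, h4⟩ := Finset.mem_powersetCard.1 he
        have := Finset.card_lt_card hp
        exact ⟨hp.subset.trans h3, Or.inl (by omega)⟩
      convert h1.inter h2 using 1
      ext x; simp [hG]
    have : {x | x ∈ G j x} = ⋃ a ∈ Set.range (lft K), ({x | ∀ p ∈ K, x p = a p} ∩ G j a) := by
      ext x
      simp only [Set.mem_ofPred_eq, Set.mem_iUnion, Set.mem_inter_iff]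
      constructor
      · intro hx
        refine ⟨lft K x, ⟨x, rfl⟩, fun p hp => (lft_apply hp).symm, ?_⟩
        rw [G_congr (lft K x) x (fun p hp => lft_apply hp)]
        exact hx
      · rintro ⟨a, _, h1, h2⟩
        rw [G_congr x a h1]; exact h2
    rw [this]
    refine @Set.Finite.measurableSet_biUnion _ _ (sig V) _ _ (lft_finite K) (fun a _ => ?_)
    refine MeasurableSet.inter (meas_cyl K a ?_) (G_meas a)
    intro p hp
    obtain ⟨h1, h2⟩ := Finset.mem_filter.1 hp
    exact ⟨h2, Or.inr h1⟩
  refine ⟨fun j => {x | x ∈ G j x}, ⟨⟨I ∪ L, ?_, hQ'm⟩, ?_⟩, ?_⟩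
  · intro p hp
    rcases Finset.mem_union.1 hp with h | h
    · have := hI p h; omega
    · exact (hLD p h).ge
  · -- formal nullity
    intro c
    by_contra hN0
    set N : Set (Cfg k) := {y | ∀ j, mrg D c y ∈ {x | x ∈ G j x}} with hN
    have hNm : MeasurableSet[sig {p : Idx k | (Z p).card < D}] N := by
      have : N = ⋂ j, mrg D c ⁻¹' {x | x ∈ G j x} := by
        ext y; simp [hN]
      rw [this]
      refine MeasurableSet.iInter fun j => ?_
      refine measurable_merge c (fun p => D ≤ (Z p).card) ?_ (hQ'm j)
      intro p _ h
      exact not_le.1 h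
    have hNG : ∀ y ∈ N, ∀ j, mrg D c y ∈ G j c := by
      intro y hy j
      have h0 : mrg D c y ∈ G j (mrg D c y) := hy j
      have h1 : g j (mrg D c y) = g j c :=
        g_congr j _ _ (fun p hp _ => mrg_ge (by have := hI p hp; omega))
      have h2 : ∀ e, pe e (mrg D c y) = pe e c :=
        fun e => pe_congr e _ _ (fun p hp _ => mrg_ge (hLD p hp).ge)
      simp only [hG, Set.mem_ofPred_eq, h1, h2] at h0 ⊢
      exact h0
    have hNpe : ∀ y ∈ N, ∀ e : Finset (Fin k), e.card = D → 0 < pe e c y := by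
      intro y hy e he
      obtain ⟨j, hj⟩ : ∃ j, j ∉ e := by
        by_contra! h
        have : e = Finset.univ := Finset.eq_univ_of_forall h
        rw [this, Finset.card_univ, Fintype.card_fin] at he
        omega
      have h1 := (hNG y hy j).2 e (Finset.mem_powersetCard.2 ⟨by
        intro i hi
        simp only [Finset.mem_erase, Finset.mem_univ, and_true]
        rintro rfl; exact hj hi, he⟩)
      have h2 : pe e c (mrg D c y) = pe e c y := by
        refine dep_fun (pe_sm e c) ?_
        intro p hp
        have := Finset.card_lt_card hp
        exact mrg_lt (by omega)
      rwa [h2] at h1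
    have hcells : ∀ E : Finset (Finset (Fin k)), (∀ e ∈ E, e.card = D) →
        μ (N ∩ {y | ∀ p ∈ L.filter (fun p => Z p ∈ E), y p = c p}) ≠ 0 := by
      intro E
      induction E using Finset.induction_on with
      | empty => intro _; simpa using hN0
      | insert e E heE ih =>
        intro hE
        have ih' := ih (fun e' he' => hE e' (Finset.mem_insert_of_mem he'))
        have he : e.card = D := hE e (Finset.mem_insert_self _ _)
        set W := N ∩ {y | ∀ p ∈ L.filter (fun p => Z p ∈ E), y p = c p} with hW
        set T : Set (Idx k) := {p | (Z p).card < D ∨ (p ∈ L ∧ Z p ≠ e)} with hT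
        have hWT : MeasurableSet[sig T] W := by
          refine MeasurableSet.inter (sig_mono (fun p hp => Or.inl hp) _ hNm) (meas_cyl _ c ?_)
          intro p hp
          obtain ⟨h1, h2⟩ := Finset.mem_filter.1 hp
          exact Or.inr ⟨h1, fun h => heE (h ▸ h2)⟩
        have hTdown : ∀ p ∈ T, ∀ q, Z q ⊂ Z p → q ∈ T := by
          intro p hp q hq
          have h1 := Finset.card_lt_card hq
          have h2 : (Z p).card ≤ D := by
            rcases hp with h | h
            · exact le_of_lt h
            · exact (hLD p h.1).le
          exact Or.inl (by omega)
        have hTe : T ∩ {p | Z p ⊆ e} = {p | Z p ⊂ e} := by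
          ext p
          constructor
          · rintro ⟨h1, h2⟩
            refine Finset.ssubset_iff_subset_ne.2 ⟨h2, ?_⟩
            rcases h1 with h | h
            · intro h3; rw [h3] at h; omega
            · exact h.2
          · intro h
            have := Finset.card_lt_card h
            exact ⟨Or.inl (by omega), (Finset.ssubset_iff_subset_ne.1 h).1⟩
        have hrel := relindep μ hinv e T hTdown (ie e c) (ie_int e c) (ie_sm e c)
        rw [hTe] at hrel
        have hWm : MeasurableSet W := sig_le _ _ hWT
        have i1 : ∫ x in W, pe e c x ∂μ = μ.real (W ∩ CE e c) := by
          rw [← setInt_ind μ W (CE e c) (CE_meas0 e c)]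
          have := setIntegral_condExp (μ := μ) (sig_le T) (ie_int e c) hWT
          rw [← this]
          exact setIntegral_congr_ae hWm (hrel.mono fun x hx _ => hx.symm)
        have i2 : 0 < ∫ x in W, pe e c x ∂μ := by
          rw [setIntegral_pos_iff_support_of_nonneg_ae]
          · refine lt_of_lt_of_le (pos_iff_ne_zero.2 ih') (measure_mono ?_)
            intro y hy
            exact ⟨(hNpe y hy.1 e he).ne', hy⟩
          · rw [EventuallyLE, ae_restrict_iff' hWm]
            exact Eventually.of_forall fun y hy => (hNpe y hy.1 e he).le
          · exact (pe_int e c).integrableOn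
        rw [i1] at i2
        have i3 : μ (W ∩ CE e c) ≠ 0 := by
          intro h; simp [Measure.real, h] at i2
        refine fun h => i3 (measure_mono_null ?_ h)
        rintro y ⟨⟨h1, h2⟩, h3⟩
        refine ⟨h1, ?_⟩
        intro p hp
        obtain ⟨h4, h5⟩ := Finset.mem_filter.1 hp
        rcases Finset.mem_insert.1 h5 with h6 | h6
        · exact h3 p (Finset.mem_filter.2 ⟨h4, h6⟩)
        · exact h2 p (Finset.mem_filter.2 ⟨h4, h6⟩)
    set W := N ∩ {y | ∀ p ∈ L, y p = c p} with hW
    have hW0 : μ W ≠ 0 := by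
      refine fun h => hcells (Finset.powersetCard D Finset.univ)
        (fun e he => (Finset.mem_powersetCard.1 he).2) (measure_mono_null ?_ h)
      rintro y ⟨h1, h2⟩
      refine ⟨h1, fun p hp => h2 p (Finset.mem_filter.2 ⟨hp, ?_⟩)⟩
      exact Finset.mem_powersetCard.2 ⟨Finset.subset_univ _, hLD p hp⟩
    set T : Set (Idx k) := {p | (Z p).card < D ∨ p ∈ L} with hT
    have hWT : MeasurableSet[sig T] W :=
      MeasurableSet.inter (sig_mono (fun p hp => Or.inl hp) _ hNm) (meas_cyl _ c fun p hp => Or.inr hp)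
    have hWm : MeasurableSet W := sig_le _ _ hWT
    have hTdown : ∀ p ∈ T, ∀ q, Z q ⊂ Z p → q ∈ T := by
      intro p hp q hq
      have h1 := Finset.card_lt_card hq
      have h2 : (Z p).card ≤ D := by
        rcases hp with h | h
        · exact le_of_lt h
        · exact (hLD p h).le
      exact Or.inl (by omega)
    have hWpos : 0 < μ.real W := by
      rw [Measure.real]
      exact ENNReal.toReal_pos hW0 (measure_ne_top _ _)
    have hj : ∀ j, μ.real (W \ Qc j c) ≤ 1 / (2 * k) * μ.real W := by
      intro j
      have hrel := relindep μ hinv (Finset.univ.erase j) T hTdown (ind j c) (ind_int j c)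
        ((ind_sm j c).mono (sig_mono Set.inter_subset_left))
      have i1 : ∫ x in W, g j c x ∂μ = μ.real (W ∩ Qc j c) := by
        rw [← setInt_ind μ W (Qc j c) (Qc_meas0 j c)]
        have := setIntegral_condExp (μ := μ) (sig_le T) (ind_int j c) hWT
        rw [← this]
        exact setIntegral_congr_ae hWm (hrel.mono fun x hx _ => hx.symm)
      have i2 : θ * μ.real W ≤ ∫ x in W, g j c x ∂μ := by
        have : ∫ x in W, θ ∂μ = θ * μ.real W := by
          simp [mul_comm]
        rw [← this]
        refine setIntegral_mono_on (integrable_const _).integrableOn (g_int j c).integrableOn hWm ?_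
        intro y hy
        have h1 := (hNG y hy.1 j).1
        have h2 : g j c (mrg D c y) = g j c y := by
          refine dep_fun (g_sm j c) ?_
          rintro p ⟨hp, -⟩
          rcases hp with hp | hp
          · exact mrg_lt hp
          · rw [mrg_ge (hLD p hp).ge, hy.2 p hp]
        rw [h2] at h1
        exact h1.le
      have i3 := measureReal_inter_add_sdiff (μ := μ) (s := W) (Qc_meas0 j c)
      rw [i1] at i2
      rw [hθ] at i2
      linarith
    have hcov : μ.real W ≤ ∑ j, μ.real (W \ Qc j c) := by
      have h1 : W ⊆ (⋃ j, W \ Qc j c) ∪ {y | ∀ j, mrg (D+1) c y ∈ Q j} := by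
        intro y hy
        by_cases h : ∀ j, y ∈ Qc j c
        · exact Or.inr h
        · push Not at h
          obtain ⟨j, hj⟩ := h
          exact Or.inl (Set.mem_iUnion.2 ⟨j, hy, hj⟩)
      have h2 : μ.real {y | ∀ j, mrg (D+1) c y ∈ Q j} = 0 := by
        simp [Measure.real, hnull c]
      calc μ.real W ≤ μ.real ((⋃ j, W \ Qc j c) ∪ {y | ∀ j, mrg (D+1) c y ∈ Q j}) :=
            measureReal_mono h1
        _ ≤ μ.real (⋃ j, W \ Qc j c) + μ.real {y | ∀ j, mrg (D+1) c y ∈ Q j} :=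
            measureReal_union_le _ _
        _ = μ.real (⋃ j, W \ Qc j c) := by rw [h2, add_zero]
        _ ≤ _ := measureReal_iUnion_fintype_le _
    have hsum : ∑ j : Fin k, μ.real (W \ Qc j c) ≤ ∑ j : Fin k, 1 / (2 * k) * μ.real W :=
      Finset.sum_le_sum fun j _ => hj j
    rw [Finset.sum_const, Finset.card_univ, Fintype.card_fin, nsmul_eq_mul] at hsum
    have : (k:ℝ) * (1 / (2 * k) * μ.real W) = μ.real W / 2 := by field_simp
    linarith
  · -- loss
    intro j
    set La := (lft_finite L).toFinset with hLa
    set PD := Finset.powersetCard D (Finset.univ.erase j) with hPD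
    have hsub : Q j \ {x | x ∈ G j x} ⊆
        (⋃ a ∈ Lb, (Qc j a ∩ {x | g j a x ≤ θ})) ∪
        (⋃ e ∈ PD, ⋃ a ∈ La, (CE e a ∩ {x | pe e a x ≤ 0})) := by
      rintro x ⟨hx, hxG⟩
      have hxG' : ¬ (θ < g j x x ∧ ∀ e ∈ PD, 0 < pe e x x) := hxG
      by_cases h : θ < g j x x
      · right
        have h2 : ∃ e ∈ PD, pe e x x ≤ 0 := by
          by_contra! h3; exact hxG' ⟨h, h3⟩
        obtain ⟨e, he, h3⟩ := h2
        simp only [Set.mem_iUnion]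
        refine ⟨e, he, lft L x, by simp [hLa], fun p hp => ?_, ?_⟩
        · exact (lft_apply (Finset.mem_filter.1 hp).1).symm
        · rw [Set.mem_ofPred_eq, pe_congr e (lft L x) x fun p hp _ => lft_apply hp]
          exact h3
      · left
        simp only [Set.mem_iUnion]
        refine ⟨lft I x, by simp [hLb], ?_, ?_⟩
        · rw [Qc_congr j (lft I x) x fun p hp _ => lft_apply hp]
          change mrg (D+1) x x ∈ Q j
          rw [mrg_self]; exact hx
        · rw [Set.mem_ofPred_eq, g_congr j (lft I x) x fun p hp _ => lft_apply hp]
          exact not_lt.1 h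
    have hb1 : ∀ a ∈ Lb, μ.real (Qc j a ∩ {x | g j a x ≤ θ}) ≤ 2 * k * η := by
      intro a ha
      set B := Qc j a ∩ {x | g j a x ≤ θ} with hB
      have hBm : MeasurableSet B :=
        (Qc_meas0 j a).inter (measurableSet_le ((g_sm j a).mono (sig_le _)).measurable measurable_const)
      have h1 := abs_setIntegral_sub_le (g_int j a) (ind_int j a) B
      rw [setInt_ind μ B _ (Qc_meas0 j a), Set.inter_eq_left.2 Set.inter_subset_left] at h1
      have h2 : ∫ x in B, g j a x ∂μ ≤ θ * μ.real B := by
        have : ∫ x in B, θ ∂μ = θ * μ.real B := by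
          simp [mul_comm]
        rw [← this]
        exact setIntegral_mono_on (g_int j a).integrableOn (integrable_const _).integrableOn hBm
          (fun y hy => hy.2)
      have h3 := (hn' j a ha).le
      have h4 := (abs_le.1 (h1.trans h3)).1
      have h5 : 1 / (2 * k) * μ.real B ≤ η := by
        rw [hθ] at h2; linarith
      rw [div_mul_eq_mul_div, one_mul, div_le_iff₀ (by positivity)] at h5
      linarith
    have hb2 : ∀ e, ∀ a, μ (CE e a ∩ {x | pe e a x ≤ 0}) = 0 := by
      intro e a
      have hBm : MeasurableSet[sig {p | Z p ⊂ e}] {x | pe e a x ≤ 0} :=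
        measurableSet_le (pe_sm e a).measurable measurable_const
      have h1 := setIntegral_condExp (μ := μ) (sig_le _) (ie_int e a) hBm
      have h2 : ∫ x in {x | pe e a x ≤ 0}, pe e a x ∂μ ≤ 0 :=
        setIntegral_nonpos (sig_le _ _ hBm) (fun x hx => hx)
      have h3 := setInt_ind μ {x | pe e a x ≤ 0} (CE e a) (CE_meas0 e a)
      have h4 : μ.real (CE e a ∩ {x | pe e a x ≤ 0}) = 0 := by
        refine le_antisymm ?_ measureReal_nonneg
        rw [Set.inter_comm, ← h3]
        calc _ = _ := h1.symm
          _ ≤ 0 := h2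
      exact (measureReal_eq_zero_iff).1 h4
    have hb3 : μ.real (⋃ e ∈ PD, ⋃ a ∈ La, (CE e a ∩ {x | pe e a x ≤ 0})) = 0 := by
      have h0 : μ (⋃ e ∈ PD, ⋃ a ∈ La, (CE e a ∩ {x | pe e a x ≤ 0})) = 0 := by
        refine (measure_biUnion_null_iff (Finset.countable_toSet PD)).2 fun e _ => ?_
        exact (measure_biUnion_null_iff (Finset.countable_toSet La)).2 fun a _ => hb2 e a
      simp only [Measure.real, h0, ENNReal.toReal_zero]
    calc μ.real (Q j \ {x | x ∈ G j x}) ≤ _ := measureReal_mono hsub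
      _ ≤ _ := measureReal_union_le _ _
      _ = μ.real (⋃ a ∈ Lb, (Qc j a ∩ {x | g j a x ≤ θ})) := by rw [hb3, add_zero]
      _ ≤ ∑ a ∈ Lb, μ.real (Qc j a ∩ {x | g j a x ≤ θ}) := measureReal_biUnion_finset_le _ _
      _ ≤ ∑ a ∈ Lb, 2 * k * η := Finset.sum_le_sum hb1
      _ = Lb.card * (2 * k * η) := by rw [Finset.sum_const, nsmul_eq_mul]
      _ ≤ (Lb.card + 1) * (2 * k * η) := by gcongr; linarith
      _ = ε := by rw [hη]; field_simp

end Varn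

namespace Varn
open MeasureTheory Filter Topology
variable {k : ℕ}

/-- The coordinate carrying the main event for label `j`. -/
def mainbit (j : Fin k) : Idx k := (j, fun i => if i = j then 1 else 0)

lemma Z_mainbit (j : Fin k) : Z (mainbit j) = Finset.univ.erase j := by
  ext i; simp [mem_Z, mainbit]

lemma card_Z_mainbit (j : Fin k) : (Z (mainbit j)).card < k := by
  rw [Z_mainbit, Finset.card_erase_of_mem (Finset.mem_univ _), Finset.card_univ, Fintype.card_fin]
  have := j.2
  omega

def Q0 (j : Fin k) : Set (Cfg k) := {x | x (mainbit j) = true}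

theorem removal (μ : Measure (Cfg k)) [IsProbabilityMeasure μ] (hinv : Inv μ)
    (h0 : μ {x | ∀ j, x ∈ Q0 j} = 0) (ε : ℝ) (hε : 0 < ε) :
    ∃ F : Fin k → Set (Cfg k), (∃ I : Finset (Idx k),
      ∀ j, MeasurableSet[sig {p | Z p ⊆ Finset.univ.erase j ∧ p ∈ I}] (F j)) ∧
      (∀ c, ¬ ∀ j, c ∈ F j) ∧ ∀ j, μ.real (Q0 j \ F j) ≤ ε := by
  have hk1 : (0:ℝ) < k + 1 := by positivity
  have key : ∀ t : ℕ, t ≤ k → ∃ Q : Fin k → Set (Cfg k), Good μ (k - t) Q ∧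
      ∀ j, μ.real (Q0 j \ Q j) ≤ t * (ε / (k + 1)) := by
    intro t
    induction t with
    | zero =>
      intro _
      refine ⟨Q0, ⟨⟨∅, by simp, fun j => ?_⟩, fun c => ?_⟩, by simp⟩
      · have hm : mainbit j ∈ {p : Idx k | Z p ⊆ Finset.univ.erase j ∧
            ((Z p).card < k - 0 ∨ p ∈ (∅ : Finset (Idx k)))} :=
          ⟨(Z_mainbit j).le, Or.inl (card_Z_mainbit j)⟩
        exact measurable_coord hm (t := {true}) trivial
      · convert h0 using 3
        ext y
        refine forall_congr' fun j => ?_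
        change mrg k c y (mainbit j) = true ↔ y (mainbit j) = true
        rw [mrg_lt (card_Z_mainbit j)]
    | succ t ih =>
      intro ht
      obtain ⟨Q, hQ, hQe⟩ := ih (by omega)
      have e1 : k - t = (k - (t+1)) + 1 := by omega
      rw [e1] at hQ
      obtain ⟨Q', hQ', he⟩ := step μ hinv (k - (t+1)) (by omega) Q hQ (ε / (k+1)) (by positivity)
      refine ⟨Q', hQ', fun j => ?_⟩
      have : Q0 j \ Q' j ⊆ (Q0 j \ Q j) ∪ (Q j \ Q' j) := by
        intro x hx
        by_cases h : x ∈ Q j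
        · exact Or.inr ⟨h, hx.2⟩
        · exact Or.inl ⟨hx.1, h⟩
      calc μ.real (Q0 j \ Q' j) ≤ μ.real ((Q0 j \ Q j) ∪ (Q j \ Q' j)) := measureReal_mono this
        _ ≤ _ := measureReal_union_le _ _
        _ ≤ t * (ε / (k + 1)) + ε / (k+1) := add_le_add (hQe j) (he j)
        _ = _ := by push_cast; ring
  obtain ⟨Q, ⟨⟨I, -, hm⟩, hn⟩, he⟩ := key k le_rfl
  refine ⟨Q, ⟨I, fun j => ?_⟩, fun c hc => ?_, fun j => (he j).trans ?_⟩
  · refine sig_mono ?_ _ (hm j)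
    rintro p ⟨h1, h2⟩
    exact ⟨h1, by rcases h2 with h2 | h2; · omega
                  · exact h2⟩
  · have := hn c
    rw [Nat.sub_self] at this
    have h2 : {y : Cfg k | ∀ j, mrg 0 c y ∈ Q j} = Set.univ := by
      refine Set.eq_univ_of_forall fun y j => ?_
      have : mrg 0 c y = c := by ext p; rw [mrg_ge (Nat.zero_le _)]
      rw [this]; exact hc j
    rw [h2, measure_univ] at this
    exact one_ne_zero this
  · rw [mul_div_assoc', div_le_iff₀ hk1]
    nlinarith
end Varn

namespace Varn
open MeasureTheory Filter Topology
variable {k : ℕ}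
set_option linter.unusedSectionVars false
variable {N : ℕ} [NeZero N]

lemma Q0_clopen (j : Fin k) : IsClopen (Q0 j) :=
  (isClopen_discrete {true}).preimage (continuous_apply (mainbit j))

lemma Q0_meas (j : Fin k) : MeasurableSet (Q0 j) := (Q0_clopen j).2.measurableSet

abbrev HH (k N : ℕ) := Fin k × ℕ → ZMod N

/-- normalized Haar measure on a compact group -/
noncomputable def nh (G : Type*) [TopologicalSpace G] [AddCommGroup G] [IsTopologicalAddGroup G]
    [CompactSpace G] [MeasurableSpace G] [BorelSpace G] : Measure G :=
  Measure.addHaarMeasure (⊤ : TopologicalSpace.PositiveCompacts G)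

section
variable {G H : Type*} [TopologicalSpace G] [AddCommGroup G] [IsTopologicalAddGroup G]
    [CompactSpace G] [MeasurableSpace G] [BorelSpace G] [TopologicalSpace H] [AddCommGroup H] [IsTopologicalAddGroup H]
    [CompactSpace H] [MeasurableSpace H] [BorelSpace H]

instance : IsProbabilityMeasure (nh G) := ⟨by
  have := Measure.addHaarMeasure_self (K₀ := (⊤ : TopologicalSpace.PositiveCompacts G))
  rw [TopologicalSpace.PositiveCompacts.coe_top] at this
  exact this⟩

instance : (nh G).IsAddHaarMeasure := by unfold nh; infer_instance

lemma nh_mp [SecondCountableTopology H] (f : G →+ H) (hf : Continuous f) (hs : Function.Surjective f) :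
    MeasurePreserving f (nh G) (nh H) :=
  AddMonoidHom.measurePreserving hf hs (by simp)
end

lemma nh_finite {G : Type*} [TopologicalSpace G] [AddCommGroup G] [IsTopologicalAddGroup G]
    [CompactSpace G] [MeasurableSpace G] [BorelSpace G] [DiscreteTopology G] [Fintype G]
    (A : Finset G) : (nh G).real (A : Set G) = (A.card : ℝ) / Fintype.card G := by
  have h1 : ∀ a : G, (nh G).real {a} = (nh G).real {0} := by
    intro a
    have := measure_preimage_add (nh G) a {a}
    have e : (fun h => a + h) ⁻¹' ({a} : Set G) = {0} := by ext x; simp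
    rw [e] at this
    rw [measureReal_def, measureReal_def, this]
  have h2 : ∀ B : Finset G, (nh G).real (B : Set G) = B.card * (nh G).real {0} := by
    intro B
    rw [← sum_measureReal_singleton, Finset.sum_congr rfl (fun a _ => h1 a)]
    simp
  have h3 := h2 Finset.univ
  simp only [Finset.coe_univ, probReal_univ, Finset.card_univ] at h3
  have h4 : (0:ℝ) < Fintype.card G := by exact_mod_cast Fintype.card_pos
  rw [h2, eq_div_iff h4.ne', mul_assoc, mul_comm _ (Fintype.card G : ℝ), ← h3, mul_one]

/-- the linear form attached to an index -/
def form (p : Idx k) (x : HH k N) : ZMod N :=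
  ∑ i : Fin k, (((i : ℕ) : ZMod N) - ((p.1 : ℕ) : ZMod N)) * x (i, p.2 i)

open Classical in
noncomputable def bits (A : Finset (ZMod N)) (x : HH k N) : Cfg k := fun p => decide (form p x ∈ A)

lemma continuous_form (p : Idx k) : Continuous (form p : HH k N → ZMod N) := by
  unfold form; fun_prop

lemma continuous_bits (A : Finset (ZMod N)) : Continuous (bits A : HH k N → Cfg k) := by
  refine continuous_pi fun p => ?_
  exact (continuous_of_discreteTopology (f := fun a : ZMod N => decide (a ∈ A))).comp (continuous_form p)

noncomputable def mm (k : ℕ) (A : Finset (ZMod N)) : Measure (Cfg k) := (nh (HH k N)).map (bits A)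

instance (A : Finset (ZMod N)) : IsProbabilityMeasure (mm k A) :=
  Measure.isProbabilityMeasure_map (continuous_bits A).measurable.aemeasurable

lemma mm_apply (A : Finset (ZMod N)) {B : Set (Cfg k)} (hB : MeasurableSet B) :
    (mm k A).real B = (nh (HH k N)).real (bits A ⁻¹' B) :=
  map_measureReal_apply (continuous_bits A).measurable hB

lemma continuous_act (s : Fin k → Equiv.Perm ℕ) : Continuous (act s) := by
  unfold act; fun_prop

lemma mm_inv (A : Finset (ZMod N)) : Inv (mm k A) := by
  intro s
  refine ⟨(continuous_act s).measurable, ?_⟩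
  let f : HH k N →+ HH k N :=
    { toFun := fun x q => x (q.1, s q.1 q.2)
      map_zero' := rfl
      map_add' := fun _ _ => rfl }
  have hf : MeasurePreserving f (nh (HH k N)) (nh (HH k N)) := by
    refine nh_mp f ?_ ?_
    · change Continuous (fun (x : HH k N) (q : Fin k × ℕ) => x (q.1, s q.1 q.2)); fun_prop
    · intro y
      refine ⟨fun q => y (q.1, (s q.1).symm q.2), ?_⟩
      funext q
      simp [f]
  unfold mm
  rw [Measure.map_map (continuous_act s).measurable (continuous_bits A).measurable]
  have : act s ∘ bits A = (bits A : HH k N → Cfg k) ∘ f := rfl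
  rw [this, ← Measure.map_map (continuous_bits A).measurable hf.measurable, hf.map_eq]

open Classical in
lemma mm_count (hk : 2 ≤ k) (A : Finset (ZMod N)) :
    (mm k A).real {x | ∀ j, x ∈ Q0 j} =
      ((Finset.univ.filter (fun q : ZMod N × ZMod N => ∀ j : Fin k, q.1 + (j : ℕ) * q.2 ∈ A)).card : ℝ)
        / (N : ℝ) ^ 2 := by
  have hm : MeasurableSet {x : Cfg k | ∀ j, x ∈ Q0 j} := by
    rw [Set.ofPred_forall]
    refine MeasurableSet.iInter fun j => ?_
    exact Q0_meas j
  rw [mm_apply A hm]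
  let f : HH k N →+ ZMod N × ZMod N :=
    { toFun := fun x => (∑ i : Fin k, ((i : ℕ) : ZMod N) * x (i, 0), - ∑ i : Fin k, x (i, 0))
      map_zero' := by simp
      map_add' := fun x y => by
        simp [mul_add, Finset.sum_add_distrib, add_comm] }
  have hf : MeasurePreserving f (nh (HH k N)) (nh (ZMod N × ZMod N)) := by
    refine nh_mp f ?_ ?_
    · change Continuous (fun x : HH k N => (∑ i : Fin k, ((i : ℕ) : ZMod N) * x (i, 0), - ∑ i : Fin k, x (i, 0)))
      fun_prop
    · rintro ⟨a, d⟩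
      let i0 : Fin k := ⟨0, by omega⟩
      let i1 : Fin k := ⟨1, by omega⟩
      have h01 : i0 ≠ i1 := by simp [i0, i1]
      refine ⟨fun q => if q.1 = i1 then a else if q.1 = i0 then - d - a else 0, ?_⟩
      have e1 : ∑ i : Fin k, ((i : ℕ) : ZMod N) * (if i = i1 then a else if i = i0 then - d - a else 0) = a := by
        rw [Finset.sum_eq_single i1]
        · simp [i1]
        · intro b _ hb
          by_cases hb0 : b = i0
          · simp [hb0, i0]
          · simp [hb, hb0]
        · simp
      have e2 : ∑ i : Fin k, (if i = i1 then a else if i = i0 then - d - a else 0) = - d := by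
        rw [← Finset.sum_subset (Finset.subset_univ {i0, i1})]
        · rw [Finset.sum_pair h01]; simp [h01]
        · intro b _ hb
          simp only [Finset.mem_insert, Finset.mem_singleton, not_or] at hb
          simp [hb.1, hb.2]
      change (_, _) = _
      simp only [Prod.mk.injEq]
      exact ⟨e1, by rw [e2, neg_neg]⟩
  have hs : bits A ⁻¹' {x : Cfg k | ∀ j, x ∈ Q0 j} = f ⁻¹'
      ((Finset.univ.filter (fun q : ZMod N × ZMod N => ∀ j : Fin k, q.1 + (j : ℕ) * q.2 ∈ A) : Finset _) : Set (ZMod N × ZMod N)) := by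
    ext x
    have e : ∀ j : Fin k, form (mainbit j) x = (f x).1 + (j : ℕ) * (f x).2 := by
      intro j
      change _ = (∑ i : Fin k, ((i : ℕ) : ZMod N) * x (i, 0)) + (j : ℕ) * (- ∑ i : Fin k, x (i, 0))
      rw [mul_neg, Finset.mul_sum, ← sub_eq_add_neg, ← Finset.sum_sub_distrib]
      refine Finset.sum_congr rfl fun i _ => ?_
      by_cases h : i = j
      · simp [mainbit, h]
      · simp [mainbit, h]; ring
    simp only [Set.mem_preimage, Finset.coe_filter, Finset.mem_univ, true_and]
    refine forall_congr' fun j => ?_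
    rw [← e j]
    change decide _ = true ↔ _
    simp
  rw [hs, measureReal_def, hf.measure_preimage (Set.toFinite _).measurableSet.nullMeasurableSet, ← measureReal_def, nh_finite]
  simp [ZMod.card, sq]

lemma mm_dens (hk : 2 ≤ k) (A : Finset (ZMod N)) (F : Fin k → Set (Cfg k)) (I : Finset (Idx k))
    (hF : ∀ j, MeasurableSet[sig {p | Z p ⊆ Finset.univ.erase j ∧ p ∈ I}] (F j))
    (hFe : ∀ c, ¬ ∀ j, c ∈ F j) :
    (A.card : ℝ) / N ≤ ∑ j, (mm k A).real (Q0 j \ F j) := by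
  classical
  have hQ0m : ∀ j : Fin k, MeasurableSet (Q0 j) := Q0_meas
  have hFm : ∀ j, MeasurableSet (F j) := fun j => sig_le _ _ (hF j)
  let i0 : Fin k := ⟨0, by omega⟩
  let i1 : Fin k := ⟨1, by omega⟩
  let g : HH k N →+ ZMod N :=
    { toFun := fun x => ∑ i : Fin k, ((i : ℕ) : ZMod N) * x (i, 0)
      map_zero' := by simp
      map_add' := fun x y => by simp [mul_add, Finset.sum_add_distrib] }
  have hg : MeasurePreserving g (nh (HH k N)) (nh (ZMod N)) := by
    refine nh_mp g ?_ ?_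
    · change Continuous (fun x : HH k N => ∑ i : Fin k, ((i : ℕ) : ZMod N) * x (i, 0))
      fun_prop
    · intro a
      refine ⟨fun q => if q.1 = i1 then a else 0, ?_⟩
      change ∑ i : Fin k, ((i : ℕ) : ZMod N) * (if i = i1 then a else 0) = a
      rw [Finset.sum_eq_single i1]
      · simp [i1]
      · intro b _ hb; simp [hb]
      · simp
  let Φ : HH k N →+ HH k N :=
    { toFun := fun x q => if q = (i0, 0) then - ∑ i ∈ Finset.univ.erase i0, x (i, 0) else x q
      map_zero' := by funext q; simp
      map_add' := fun x y => by
        funext q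
        by_cases h : q = (i0, 0)
        · simp [h, Finset.sum_add_distrib, add_comm]
        · simp [h] }
  have Φ0 : ∀ x, Φ x (i0, 0) = - ∑ i ∈ Finset.univ.erase i0, x (i, 0) := fun x => by
    simp [Φ]
  have Φ1 : ∀ x q, q ≠ (i0, 0) → Φ x q = x q := fun x q h => if_neg h
  have hΦc : Continuous Φ := by
    refine continuous_pi fun q => ?_
    by_cases h : q = (i0, 0)
    · subst h; simp only [Φ0]; fun_prop
    · simp only [fun x => Φ1 x q h]; fun_prop
  -- invariance
  have inv : ∀ j, (nh (HH k N)).real (Φ ⁻¹' (bits A ⁻¹' (Q0 j \ F j))) =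
      (nh (HH k N)).real (bits A ⁻¹' (Q0 j \ F j)) := by
    intro j
    let W := {q : Fin k × ℕ // q ≠ (j, 0)} → ZMod N
    let π : HH k N →+ W :=
      { toFun := fun x q => x q.1
        map_zero' := rfl
        map_add' := fun _ _ => rfl }
    let e : W → HH k N := fun w q => if h : q ≠ (j, 0) then w ⟨q, h⟩ else 0
    have hπc : Continuous π := by
      refine continuous_pi fun q => ?_
      exact continuous_apply q.1
    have hec : Continuous e := by
      refine continuous_pi fun q => ?_
      by_cases h : q = (j, 0)
      · simp only [e, h]; simp; fun_prop
      · simp only [e, ne_eq, h, not_false_eq_true, dif_pos]; fun_prop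
    have hπe : ∀ w, π (e w) = w := by
      intro w; funext q; exact dif_pos q.2
    have m1 : MeasurePreserving π (nh (HH k N)) (nh W) := nh_mp π hπc (fun w => ⟨e w, hπe w⟩)
    have m2 : MeasurePreserving (π.comp Φ) (nh (HH k N)) (nh W) := by
      refine nh_mp _ (hπc.comp hΦc) ?_
      intro w
      by_cases hj : j = i0
      · refine ⟨e w, ?_⟩
        funext q
        change Φ (e w) q.1 = _
        rw [Φ1 _ _ (by rw [← hj]; exact q.2)]
        exact congrFun (hπe w) q
      · -- choose coordinate at j to make the sum right
        let x : HH k N := fun q => if q = (j, 0) then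
          - e w (i0, 0) - ∑ i ∈ (Finset.univ.erase i0).erase j, e w (i, 0) else e w q
        refine ⟨x, ?_⟩
        funext q
        change Φ x q.1 = _
        by_cases hq : q.1 = (i0, 0)
        · rw [hq, Φ0, ← Finset.add_sum_erase _ _ (Finset.mem_erase.2 ⟨hj, Finset.mem_univ j⟩)]
          have : ∑ i ∈ (Finset.univ.erase i0).erase j, x (i, 0) = ∑ i ∈ (Finset.univ.erase i0).erase j, e w (i, 0) := by
            refine Finset.sum_congr rfl fun i hi => ?_
            have : i ≠ j := (Finset.mem_erase.1 hi).1
            simp [x, this]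
          rw [this]
          have h2 : x (j, 0) = - e w (i0, 0) - ∑ i ∈ (Finset.univ.erase i0).erase j, e w (i, 0) := if_pos rfl
          rw [h2]
          have h3 : e w (i0, 0) = w q := by rw [← hq]; exact congrFun (hπe w) q
          rw [h3]; ring
        · rw [Φ1 _ _ hq]
          have : x q.1 = e w q.1 := if_neg q.2
          rw [this]; exact congrFun (hπe w) q
    have hdep : ∀ x, x ∈ bits A ⁻¹' (Q0 j \ F j) ↔ e (π x) ∈ bits A ⁻¹' (Q0 j \ F j) := by
      intro x
      have hb : ∀ p : Idx k, Z p ⊆ Finset.univ.erase j → bits A x p = bits A (e (π x)) p := by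
        intro p hp
        have : form p x = form p (e (π x)) := by
          refine Finset.sum_congr rfl fun i _ => ?_
          have hne : ((i, p.2 i) : Fin k × ℕ) ≠ (j, 0) := by
            intro h
            have h1 : i = j := congrArg Prod.fst h
            have h2 : p.2 i = 0 := congrArg Prod.snd h
            have := hp (mem_Z.2 h2)
            simp [h1] at this
          have : e (π x) (i, p.2 i) = x (i, p.2 i) := dif_pos hne
          rw [this]
        simp only [bits, this]
      have a1 : bits A x ∈ Q0 j ↔ bits A (e (π x)) ∈ Q0 j := by
        change _ = true ↔ _ = true
        rw [hb _ (Z_mainbit j).le]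
      have a2 : bits A x ∈ F j ↔ bits A (e (π x)) ∈ F j :=
        dep_set (hF j) fun p hp => hb p hp.1
      simp only [Set.mem_preimage, Set.mem_sdiff, a1, a2]
    have hBm : MeasurableSet (bits A ⁻¹' (Q0 j \ F j) : Set (HH k N)) :=
      (continuous_bits A).measurable ((hQ0m j).diff (hFm j))
    have hCm : MeasurableSet (e ⁻¹' (bits A ⁻¹' (Q0 j \ F j))) := hec.measurable hBm
    have s1 : (bits A ⁻¹' (Q0 j \ F j) : Set (HH k N)) = π ⁻¹' (e ⁻¹' (bits A ⁻¹' (Q0 j \ F j))) := by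
      ext x; exact hdep x
    have s2 : Φ ⁻¹' (bits A ⁻¹' (Q0 j \ F j)) = (π.comp Φ) ⁻¹' (e ⁻¹' (bits A ⁻¹' (Q0 j \ F j))) := by
      ext x; exact hdep (Φ x)
    rw [s2, measureReal_def, m2.measure_preimage hCm.nullMeasurableSet]
    conv_rhs => rw [s1, measureReal_def, m1.measure_preimage hCm.nullMeasurableSet]
  have hA : (nh (HH k N)).real (g ⁻¹' (A : Set (ZMod N))) = (A.card : ℝ) / N := by
    rw [measureReal_def, hg.measure_preimage (Set.toFinite _).measurableSet.nullMeasurableSet, ← measureReal_def, nh_finite, ZMod.card]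
  have hsub : g ⁻¹' (A : Set (ZMod N)) ⊆ ⋃ j, Φ ⁻¹' (bits A ⁻¹' (Q0 j \ F j)) := by
    intro x hx
    have hs : ∑ i : Fin k, Φ x (i, 0) = 0 := by
      rw [← Finset.add_sum_erase _ _ (Finset.mem_univ i0), Φ0]
      have h1 : ∑ i ∈ Finset.univ.erase i0, Φ x (i, 0) = ∑ i ∈ Finset.univ.erase i0, x (i, 0) := by
        refine Finset.sum_congr rfl fun i hi => ?_
        exact Φ1 x (i, 0) (by simpa using (Finset.mem_erase.1 hi).1)
      rw [h1]; ring
    have hQ : ∀ j, bits A (Φ x) ∈ Q0 j := by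
      intro j
      have : form (mainbit j) (Φ x) = g x := by
        have h1 : form (mainbit j) (Φ x) = ∑ i : Fin k, (((i : ℕ) : ZMod N) * x (i, 0) - (j : ℕ) * Φ x (i, 0)) := by
          refine Finset.sum_congr rfl fun i _ => ?_
          have h2 : ((i : ℕ) : ZMod N) * x (i, 0) = ((i : ℕ) : ZMod N) * Φ x (i, 0) := by
            by_cases h : i = i0
            · simp [h, i0]
            · rw [Φ1 _ _ (by simpa using h)]
          rw [h2]
          by_cases h : i = j
          · simp [mainbit, h]
          · simp [mainbit, h]; ring
        rw [h1, Finset.sum_sub_distrib, ← Finset.mul_sum, hs]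
        simp [g]
      change decide (form (mainbit j) (Φ x) ∈ A) = true
      rw [this]; simpa using hx
    obtain ⟨j, hj⟩ := not_forall.1 (hFe (bits A (Φ x)))
    exact Set.mem_iUnion.2 ⟨j, hQ j, hj⟩
  rw [← hA]
  calc _ ≤ (nh (HH k N)).real (⋃ j, Φ ⁻¹' (bits A ⁻¹' (Q0 j \ F j))) := measureReal_mono hsub
    _ ≤ ∑ j, (nh (HH k N)).real (Φ ⁻¹' (bits A ⁻¹' (Q0 j \ F j))) := measureReal_iUnion_fintype_le _
    _ = _ := by
      refine Finset.sum_congr rfl fun j _ => ?_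
      rw [inv, mm_apply A ((hQ0m j).diff (hFm j))]
end Varn

namespace Varn
open MeasureTheory Filter Topology
variable {k : ℕ}

lemma clopen_of_sig {S : Set (Idx k)} (hS : S.Finite) {B : Set (Cfg k)}
    (hB : MeasurableSet[sig S] B) : IsClopen B := by
  have h1 : sig S ≤ MeasurableSpace.comap (S.domRestrict : (Cfg k) → (S → Bool)) ⊤ := by
    refine iSup₂_le fun i hi => ?_
    rintro _ ⟨B, -, rfl⟩
    exact ⟨(fun z : S → Bool => z ⟨i, hi⟩) ⁻¹' B, trivial, rfl⟩
  obtain ⟨C, -, rfl⟩ := h1 _ hB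
  have := hS.to_subtype
  refine (isClopen_discrete C).preimage ?_
  refine continuous_pi fun i => ?_
  exact continuous_apply i.1

open Classical in
noncomputable def cnt (k N : ℕ) [NeZero N] (A : Finset (ZMod N)) : ℕ :=
  (Finset.univ.filter (fun q : ZMod N × ZMod N => ∀ j : Fin k, q.1 + (j : ℕ) * q.2 ∈ A)).card

lemma limit_tool (μs : ℕ → ProbabilityMeasure (Cfg k)) (hinv : ∀ m, Inv (μs m : Measure (Cfg k))) :
    ∃ μ : ProbabilityMeasure (Cfg k), Inv (μ : Measure (Cfg k)) ∧
      Tendsto μs (hyperfilter ℕ : Filter ℕ) (𝓝 μ) := by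
  let U : Ultrafilter (ProbabilityMeasure (Cfg k)) := (hyperfilter ℕ).map μs
  have hU : Tendsto μs (hyperfilter ℕ : Filter ℕ) (𝓝 U.lim) := U.le_nhds_lim
  refine ⟨U.lim, fun s => ⟨(continuous_act s).measurable, ?_⟩, hU⟩
  have h1 := (ProbabilityMeasure.continuous_map (continuous_act s)).tendsto U.lim |>.comp hU
  have h2 : (fun ν : ProbabilityMeasure (Cfg k) => ν.map (continuous_act s).measurable.aemeasurable) ∘ μs = μs := by
    funext m
    apply Subtype.ext
    exact (hinv m s).map_eq
  rw [h2] at h1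
  have h3 := tendsto_nhds_unique h1 hU
  exact congrArg (fun ν : ProbabilityMeasure (Cfg k) => (ν : Measure (Cfg k))) h3

theorem cyclic (hk : 2 ≤ k) (δ : ℝ) (hδ : 0 < δ) :
    ∃ ε : ℝ, 0 < ε ∧ ∀ (N : ℕ) [NeZero N] (A : Finset (ZMod N)), δ * N ≤ A.card →
      ε * (N : ℝ) ^ 2 ≤ cnt k N A := by
  by_contra hcon
  push Not at hcon
  have hc : ∀ m : ℕ, ∃ (N : ℕ) (_ : NeZero N) (A : Finset (ZMod N)), δ * N ≤ A.card ∧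
      (cnt k N A : ℝ) < 1 / ((m : ℝ) + 1) * (N : ℝ) ^ 2 := fun m => hcon _ (by positivity)
  choose N hN A hA hcnt using hc
  let μs : ℕ → ProbabilityMeasure (Cfg k) := fun m => ⟨mm k (A m), inferInstance⟩
  obtain ⟨μ, hinv, hlim⟩ := limit_tool μs (fun m => mm_inv (A m))
  have hNpos : ∀ m, (0:ℝ) < N m := fun m => by
    have := (hN m).pos; exact_mod_cast this
  -- clopen convergence
  have hcl : ∀ B : Set (Cfg k), IsClopen B →
      Tendsto (fun m => (mm k (A m)).real B) (hyperfilter ℕ : Filter ℕ) (𝓝 ((μ : Measure (Cfg k)).real B)) := by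
    intro B hB
    have := ProbabilityMeasure.tendsto_measure_of_isClopen_of_tendsto hlim hB
    exact (NNReal.continuous_coe.tendsto _).comp this
  have h0 : (μ : Measure (Cfg k)) {x | ∀ j, x ∈ Q0 j} = 0 := by
    have hclo : IsClopen {x : Cfg k | ∀ j, x ∈ Q0 j} := by
      rw [Set.ofPred_forall]
      exact isClopen_iInter_of_finite fun j => Q0_clopen j
    have h1 := hcl _ hclo
    have h2 : Tendsto (fun m : ℕ => 1 / ((m : ℝ) + 1)) (hyperfilter ℕ : Filter ℕ) (𝓝 0) :=
      tendsto_one_div_add_atTop_nhds_zero_nat.mono_left Nat.hyperfilter_le_atTop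
    have h3 : (μ : Measure (Cfg k)).real {x | ∀ j, x ∈ Q0 j} ≤ 0 := by
      refine le_of_tendsto_of_tendsto' h1 h2 fun m => ?_
      rw [mm_count hk, div_le_iff₀ (pow_pos (hNpos m) 2)]
      exact (hcnt m).le
    have h4 := le_antisymm h3 measureReal_nonneg
    rwa [measureReal_eq_zero_iff] at h4
  have hk0 : (0:ℝ) < k := by exact_mod_cast (by omega : 0 < k)
  obtain ⟨F, ⟨I, hF⟩, hFe, hFs⟩ := removal (μ : Measure (Cfg k)) hinv h0 (δ / (3 * k)) (by positivity)
  have hFc : ∀ j, IsClopen (F j) := fun j =>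
    clopen_of_sig (I.finite_toSet.subset fun p hp => hp.2) (hF j)
  have hev : ∀ j, ∀ᶠ m in (hyperfilter ℕ : Filter ℕ), (mm k (A m)).real (Q0 j \ F j) < δ / (2 * k) := by
    intro j
    refine (hcl _ ((Q0_clopen j).diff (hFc j))).eventually_lt_const ?_
    refine (hFs j).trans_lt ?_
    gcongr
    norm_num
  obtain ⟨m, hm⟩ := (eventually_all.2 hev).exists
  have h5 := mm_dens hk (A m) F I hF hFe
  have h6 : ∑ j, (mm k (A m)).real (Q0 j \ F j) ≤ δ / 2 := by
    calc _ ≤ ∑ _j : Fin k, δ / (2 * k) := Finset.sum_le_sum fun j _ => (hm j).le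
      _ = δ / 2 := by simp; field_simp
  have h7 : δ ≤ (A m).card / (N m : ℝ) := by
    rw [le_div_iff₀ (hNpos m)]; exact hA m
  linarith
end Varn

namespace Varn

lemma transfer (k n : ℕ) (hk : 3 ≤ k) (hn : 0 < n) [NeZero (2 * n)] (A : Finset ℕ)
    (hA : A ⊆ Finset.Icc 1 n) (T : Finset (ℕ × ℕ))
    (hT : ∀ a d, a ∈ Finset.Icc 1 n → d ∈ Finset.Icc 1 n → (∀ i < k, a + i * d ∈ A) → (a, d) ∈ T) :
    cnt k (2 * n) (A.image (Nat.cast : ℕ → ZMod (2 * n))) ≤ n + 2 * T.card := by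
  classical
  have hAn : A.card ≤ n := by simpa using Finset.card_le_card hA
  let c : ℕ → ZMod (2 * n) := Nat.cast
  have hsub : (Finset.univ.filter (fun q : ZMod (2 * n) × ZMod (2 * n) =>
      ∀ j : Fin k, q.1 + (j : ℕ) * q.2 ∈ A.image (Nat.cast : ℕ → ZMod (2 * n)))) ⊆
      (A.image fun a => (c a, 0)) ∪ ((T.image fun p => (c p.1, c p.2)) ∪
        (T.image fun p => (c p.1 + ((k - 1 : ℕ) : ZMod (2 * n)) * c p.2, - c p.2))) := by
    rintro ⟨q1, q2⟩ hq
    simp only [Finset.mem_filter, Finset.mem_univ, true_and, Finset.mem_image] at hq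
    have hq' : ∀ j : ℕ, ∃ m : ℕ, j < k → m ∈ A ∧ (m : ZMod (2 * n)) = q1 + j * q2 := by
      intro j
      by_cases h : j < k
      · obtain ⟨m, h1, h2⟩ := hq ⟨j, h⟩
        exact ⟨m, fun _ => ⟨h1, h2⟩⟩
      · exact ⟨0, fun h' => absurd h' h⟩
    choose t ht using hq'
    have htb : ∀ j, j < k → 1 ≤ t j ∧ t j ≤ n := fun j hj => by
      have := hA (ht j hj).1
      simpa using this
    obtain ⟨D, hD⟩ : ∃ D : ℤ, D = (t 1 : ℤ) - t 0 := ⟨_, rfl⟩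
    have e0 : (t 0 : ZMod (2 * n)) = q1 := by simpa using (ht 0 (by omega)).2
    have e1 : (t 1 : ZMod (2 * n)) = q1 + q2 := by simpa using (ht 1 (by omega)).2
    have eD : (D : ZMod (2 * n)) = q2 := by rw [hD]; push_cast; rw [e0, e1]; ring
    have b0 := htb 0 (by omega)
    have b1 := htb 1 (by omega)
    have hstep : ∀ j, j + 1 < k → (t (j + 1) : ℤ) = t j + D := by
      intro j hj
      have h1 : (((t (j + 1) : ℤ) - t j - D : ℤ) : ZMod (2 * n)) = 0 := by
        push_cast
        rw [(ht (j+1) hj).2, (ht j (by omega)).2, eD]; push_cast; ring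
      have h2 := (ZMod.intCast_zmod_eq_zero_iff_dvd _ _).1 h1
      have b2 := htb j (by omega)
      have b3 := htb (j+1) hj
      have h3 := Int.eq_zero_of_abs_lt_dvd h2 (by push_cast; rw [abs_lt]; omega)
      linarith
    have hlin : ∀ j, j < k → (t j : ℤ) = t 0 + j * D := by
      intro j
      induction j with
      | zero => simp
      | succ j ih =>
        intro hj
        rw [hstep j hj, ih (by omega)]; push_cast; ring
    simp only [Finset.mem_union, Finset.mem_image, Prod.mk.injEq]
    rcases lt_trichotomy D 0 with h | h | h
    · right; right
      obtain ⟨d, hd⟩ : ∃ d : ℕ, (d : ℤ) = - D := ⟨(-D).toNat, by omega⟩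
      have hcd : c d = - q2 := by
        rw [← eD]
        have : ((d : ℤ) : ZMod (2 * n)) = ((- D : ℤ) : ZMod (2 * n)) := by rw [hd]
        simpa [c] using this
      refine ⟨(t (k - 1), d), hT _ _ ?_ ?_ ?_, ?_, ?_⟩
      · simpa using htb (k-1) (by omega)
      · simp; omega
      · intro i hi
        have : t (k - 1) + i * d = t (k - 1 - i) := by
          zify
          rw [hlin (k-1) (by omega), hlin (k - 1 - i) (by omega), hd, Nat.cast_sub (show i ≤ k - 1 by omega)]
          ring
        rw [this]
        exact (ht _ (by omega)).1
      · simp only [hcd, c]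
        rw [(ht (k-1) (by omega)).2]; ring
      · simp only [hcd, neg_neg]
    · left
      refine ⟨t 0, (ht 0 (by omega)).1, e0, ?_⟩
      rw [← eD, h]; simp
    · right; left
      obtain ⟨d, hd⟩ : ∃ d : ℕ, (d : ℤ) = D := ⟨D.toNat, by omega⟩
      have hcd : c d = q2 := by
        rw [← eD]
        have : ((d : ℤ) : ZMod (2 * n)) = ((D : ℤ) : ZMod (2 * n)) := by rw [hd]
        simpa [c] using this
      refine ⟨(t 0, d), hT _ _ ?_ ?_ ?_, e0, hcd⟩
      · simpa using b0
      · simp; omega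
      · intro i hi
        have : t 0 + i * d = t i := by
          zify
          rw [hlin i hi, hd]
        rw [this]
        exact (ht _ hi).1
  have h0 : cnt k (2 * n) (A.image (Nat.cast : ℕ → ZMod (2 * n))) =
      (Finset.univ.filter (fun q : ZMod (2 * n) × ZMod (2 * n) =>
      ∀ j : Fin k, q.1 + (j : ℕ) * q.2 ∈ A.image (Nat.cast : ℕ → ZMod (2 * n)))).card := by
    unfold cnt
    congr
  rw [h0]
  refine (Finset.card_le_card hsub).trans ((Finset.card_union_le _ _).trans ?_)
  have h2 := Finset.card_union_le (T.image fun p => (c p.1, c p.2))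
        (T.image fun p => (c p.1 + ((k - 1 : ℕ) : ZMod (2 * n)) * c p.2, - c p.2))
  have h3 : (A.image fun a => (c a, (0 : ZMod (2 * n)))).card ≤ A.card := Finset.card_image_le
  have h4 : (T.image fun p => (c p.1, c p.2)).card ≤ T.card := Finset.card_image_le
  have h5 : (T.image fun p => (c p.1 + ((k - 1 : ℕ) : ZMod (2 * n)) * c p.2, - c p.2)).card ≤ T.card :=
    Finset.card_image_le
  omega

lemma card_cast (n : ℕ) (A : Finset ℕ) (hA : A ⊆ Finset.Icc 1 n) :
    (A.image (Nat.cast : ℕ → ZMod (2 * n))).card = A.card := by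
  refine Finset.card_image_of_injOn fun a ha b hb hab => ?_
  have h1 := Finset.mem_Icc.1 (hA ha)
  have h2 := Finset.mem_Icc.1 (hA hb)
  have := (ZMod.natCast_eq_natCast_iff' _ _ _).1 hab
  rwa [Nat.mod_eq_of_lt (by omega), Nat.mod_eq_of_lt (by omega)] at this

end Varn

attribute [local instance] Classical.propDecidable

/-- Lemma 4.2 (Varnavides): a robust version of Szemerédi's theorem.  Every subset of
`{1, …, n}` of size at least `δn` contains at least `εn²` `k`-term arithmetic
progressions, counted as pairs `(a, d)` with `a, d ≥ 1`. -/
theorem varnavides (δ : ℝ) (hδ : 0 < δ) (k : ℕ) (hk : 3 ≤ k) :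
    ∃ ε : ℝ, 0 < ε ∧ ∃ n₀ : ℕ, ∀ n : ℕ, n₀ ≤ n →
      ∀ A ⊆ Finset.Icc 1 n, δ * (n : ℝ) ≤ (A.card : ℝ) →
        ε * (n : ℝ) ^ 2 ≤
          (((Finset.Icc 1 n ×ˢ Finset.Icc 1 n).filter
              (fun ad : ℕ × ℕ => ∀ i < k, ad.1 + i * ad.2 ∈ A)).card : ℝ) := by
  obtain ⟨ε, hε, h⟩ := Varn.cyclic (k := k) (by omega) (δ / 2) (by positivity)
  refine ⟨ε, hε, ⌈1 / (2 * ε)⌉₊ + 1, fun n hn A hA hcard => ?_⟩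
  have hn0 : 0 < n := by omega
  have : NeZero (2 * n) := ⟨by omega⟩
  have h1 := h (2 * n) (A.image Nat.cast) (by
    rw [Varn.card_cast n A hA]; push_cast; linarith)
  set T := (Finset.Icc 1 n ×ˢ Finset.Icc 1 n).filter
              (fun ad : ℕ × ℕ => ∀ i < k, ad.1 + i * ad.2 ∈ A) with hT
  have h2 := Varn.transfer k n hk hn0 A hA T (by
    intro a d ha hd hi
    rw [hT, Finset.mem_filter]
    exact ⟨Finset.mem_product.2 ⟨ha, hd⟩, hi⟩)
  have h3 : (Varn.cnt k (2 * n) (A.image (Nat.cast : ℕ → ZMod (2 * n))) : ℝ) ≤ n + 2 * T.card := by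
    exact_mod_cast h2
  have h4 : ε * ((2 * n : ℕ) : ℝ) ^ 2 ≤ n + 2 * T.card := by
    refine le_trans ?_ h3
    convert h1
  have h5 : 1 / (2 * ε) ≤ (n : ℝ) := by
    refine (Nat.le_ceil _).trans ?_
    exact_mod_cast (by omega : ⌈1 / (2 * ε)⌉₊ ≤ n)
  rw [div_le_iff₀ (by positivity)] at h5
  push_cast at h4
  have h6 : (0:ℝ) < n := by exact_mod_cast hn0
  nlinarith [mul_le_mul_of_nonneg_left h5 h6.le]
end

section
/- For every positive real β, every integer ℓ ≥ 1, and every finite set F ⊆ ℕ^ℓ with |F| ≥ 2, there exist constants C and n₀ such that the following holds. For every integer n ≥ n₀, if m ≥ C·n^{ℓ − 1/(|F|−1)}, then the number of m-element subsets of [n]^ℓ = {1,…,n}^ℓ that contain no homothetic copy of F is at most binom(⌊β·n^ℓ⌋, m). -/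
attribute [local instance] Classical.propDecidable

namespace HC
open Finset Combinatorics
open scoped BigOperators

/-- real-valued indicator of a proposition -/
noncomputable def ind (p : Prop) : ℝ := if p then 1 else 0

lemma ind_nonneg (p : Prop) : 0 ≤ ind p := by unfold ind; split_ifs <;> norm_num
lemma ind_le_one (p : Prop) : ind p ≤ 1 := by unfold ind; split_ifs <;> norm_num
lemma ind_of {p : Prop} (h : p) : ind p = 1 := by simp [ind, h]
lemma ind_of_not {p : Prop} (h : ¬ p) : ind p = 0 := by simp [ind, h]
lemma ind_mono {p q : Prop} (h : p → q) : ind p ≤ ind q := by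
  by_cases hp : p
  · rw [ind_of hp, ind_of (h hp)]
  · rw [ind_of_not hp]; exact ind_nonneg _

/-- probability of a predicate under the uniform measure -/
noncomputable def pr {X : Type*} [Fintype X] (p : X → Prop) : ℝ := 𝔼 x, ind (p x)

section avg
variable {X Y : Type*} [Fintype X] [Fintype Y]

lemma pr_nonneg (p : X → Prop) : 0 ≤ pr p := expect_nonneg fun _ _ => ind_nonneg _

lemma exp_le_of_le [Nonempty X] {f : X → ℝ} {c : ℝ} (h : ∀ x, f x ≤ c) : 𝔼 x, f x ≤ c :=
  expect_le univ_nonempty fun x _ => h x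

lemma exp_mono {f g : X → ℝ} (h : ∀ x, f x ≤ g x) : 𝔼 x, f x ≤ 𝔼 x, g x :=
  expect_le_expect fun x _ => h x

lemma exp_congr {f g : X → ℝ} (h : ∀ x, f x = g x) : 𝔼 x, f x = 𝔼 x, g x :=
  expect_congr rfl fun x _ => h x

lemma pr_mono {p q : X → Prop} (h : ∀ x, p x → q x) : pr p ≤ pr q :=
  exp_mono fun x => ind_mono (h x)

lemma pr_le_one (p : X → Prop) : pr p ≤ 1 := by
  rcases isEmpty_or_nonempty X with hX | hX
  · simp [pr]
  · exact exp_le_of_le fun x => ind_le_one _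

lemma nonempty_of_exp_pos {f : X → ℝ} (h : 0 < 𝔼 x, f x) : Nonempty X := by
  by_contra hX
  rw [not_nonempty_iff] at hX
  simp at h

lemma exp_add (f g : X → ℝ) : 𝔼 x, (f x + g x) = 𝔼 x, f x + 𝔼 x, g x :=
  expect_add_distrib _ _ _

lemma exp_sub (f g : X → ℝ) : 𝔼 x, (f x - g x) = 𝔼 x, f x - 𝔼 x, g x :=
  expect_sub_distrib _ _ _

lemma exp_mul_left (c : ℝ) (f : X → ℝ) : 𝔼 x, c * f x = c * 𝔼 x, f x :=
  (mul_expect _ _ _).symm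

lemma exp_const [Nonempty X] (c : ℝ) : 𝔼 _x : X, c = c := Fintype.expect_const _

lemma exp_comm (f : X → Y → ℝ) : 𝔼 x, 𝔼 y, f x y = 𝔼 y, 𝔼 x, f x y :=
  expect_comm _ _ _

lemma exp_equiv (e : X ≃ Y) (g : Y → ℝ) : 𝔼 x, g (e x) = 𝔼 y, g y :=
  Fintype.expect_equiv e _ _ fun _ => rfl

/-- Markov-type inequality. -/
lemma markov_half {f : X → ℝ} {t : ℝ} (ht : 0 < t) (hf : ∀ x, f x ≤ 1) (h : t ≤ 𝔼 x, f x) :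
    t / 2 ≤ pr (fun x => t / 2 ≤ f x) := by
  have := nonempty_of_exp_pos (lt_of_lt_of_le ht h)
  have : 𝔼 x, f x ≤ 𝔼 x, (ind (t / 2 ≤ f x) + t / 2) := by
    apply exp_mono
    intro x
    by_cases hx : t / 2 ≤ f x
    · rw [ind_of hx]; linarith [hf x]
    · rw [ind_of_not hx]; linarith
  rw [exp_add, exp_const] at this
  unfold pr
  linarith

lemma exists_ge_of_le_exp {f : X → ℝ} {t : ℝ} (ht : 0 < t) (h : t ≤ 𝔼 x, f x) : ∃ x, t ≤ f x := by
  have := nonempty_of_exp_pos (lt_of_lt_of_le ht h)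
  obtain ⟨x, _, hx⟩ := exists_le_of_le_expect univ_nonempty h
  exact ⟨x, hx⟩

lemma pr_exists_le {κ : Type*} [Fintype κ] (p : κ → X → Prop) :
    pr (fun x => ∃ c, p c x) ≤ ∑ c, pr (p c) := by
  unfold pr
  rw [← expect_sum_comm]
  apply exp_mono
  intro x
  by_cases hx : ∃ c, p c x
  · obtain ⟨c, hc⟩ := hx
    rw [ind_of ⟨c, hc⟩, ← ind_of hc]
    exact single_le_sum (f := fun c => ind (p c x)) (fun i _ => ind_nonneg _) (mem_univ c)
  · rw [ind_of_not hx]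
    exact sum_nonneg fun i _ => ind_nonneg _

lemma pigeon {κ : Type*} [Fintype κ] (p : κ → X → Prop) {t : ℝ} (ht : 0 < t)
    (h : t ≤ pr (fun x => ∃ c, p c x)) : ∃ c, t / Fintype.card κ ≤ pr (p c) := by
  have h1 := h.trans (pr_exists_le p)
  by_contra! hcon
  rcases isEmpty_or_nonempty κ with hk | hk
  · simp at h1; linarith
  · have : ∑ c, pr (p c) < ∑ _c : κ, t / Fintype.card κ :=
      sum_lt_sum_of_nonempty univ_nonempty fun c _ => hcon c
    rw [sum_const, card_univ, nsmul_eq_mul] at this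
    have hc : (0 : ℝ) < Fintype.card κ := by exact_mod_cast Fintype.card_pos
    rw [mul_div_cancel₀ _ hc.ne'] at this
    linarith

/-- A nonempty event has probability at least `1 / card`. -/
lemma pr_ge_of_exists {p : X → Prop} (h : ∃ x, p x) : (1 : ℝ) / Fintype.card X ≤ pr p := by
  obtain ⟨x, hx⟩ := h
  unfold pr
  rw [Fintype.expect_eq_sum_div_card]
  gcongr
  rw [← ind_of hx]
  exact single_le_sum (f := fun c => ind (p c)) (fun i _ => ind_nonneg _) (mem_univ x)

lemma pr_not [Nonempty X] (p : X → Prop) : pr (fun x => ¬ p x) = 1 - pr p := by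
  have : ∀ x, ind (¬ p x) = 1 - ind (p x) := by
    intro x
    by_cases h : p x
    · rw [ind_of h, ind_of_not (by simpa using h)]; ring
    · rw [ind_of_not h, ind_of h]; ring
  unfold pr
  rw [exp_congr this, exp_sub, exp_const]

end avg

section split
variable {α : Type} [Fintype α]
variable {ι ι₁ ι₂ : Type} [Fintype ι] [DecidableEq ι] [Fintype ι₁] [DecidableEq ι₁]
  [Fintype ι₂] [DecidableEq ι₂]

lemma exp_sum_type (g : (ι₁ ⊕ ι₂ → α) → ℝ) :
    𝔼 z, g z = 𝔼 x : ι₁ → α, 𝔼 y : ι₂ → α, g (Sum.elim x y) := by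
  rw [← exp_equiv (Equiv.sumArrowEquivProdArrow ι₁ ι₂ α).symm g]
  rw [← univ_product_univ, expect_product]
  rfl

lemma exp_reindex (e : ι₁ ≃ ι₂) (g : (ι₁ → α) → ℝ) :
    𝔼 z, g z = 𝔼 x : ι₂ → α, g (x ∘ e) := by
  rw [← exp_equiv (Equiv.arrowCongr e.symm (Equiv.refl α)) g]
  rfl

lemma exists_split (ι : Type) [Fintype ι] (m : ℕ) (h : m ≤ Fintype.card ι) :
    Nonempty (Fin m ⊕ Fin (Fintype.card ι - m) ≃ ι) := by
  refine ⟨finSumFinEquiv.trans ((finCongr (by omega)).trans (Fintype.equivFin ι).symm)⟩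

lemma exp_split (e : ι₁ ⊕ ι₂ ≃ ι) (g : (ι → α) → ℝ) :
    𝔼 z, g z = 𝔼 x : ι₁ → α, 𝔼 y : ι₂ → α, g (Sum.elim x y ∘ e.symm) := by
  rw [exp_reindex e.symm, exp_sum_type]

end split

/-- Density Hales-Jewett for the alphabet `α` at density `δ`. -/
def DHJ (α : Type) [Fintype α] (δ : ℝ) : Prop :=
  ∃ N : ℕ, ∀ (ι : Type) [Fintype ι] [DecidableEq ι], N ≤ Fintype.card ι →
    ∀ A : Set (ι → α), δ ≤ pr (fun x => x ∈ A) → ∃ L : Line α ι, ∀ a, L a ∈ A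

/-- Multidimensional density Hales-Jewett. -/
def MDHJ (α : Type) [Fintype α] (d : ℕ) (δ : ℝ) : Prop :=
  ∃ N : ℕ, ∀ (ι : Type) [Fintype ι] [DecidableEq ι], N ≤ Fintype.card ι →
    ∀ A : Set (ι → α), δ ≤ pr (fun x => x ∈ A) → ∃ V : Subspace (Fin d) α ι, ∀ x, V x ∈ A

instance instFinLine {α ι : Type} [Finite α] [Finite ι] : Finite (Line α ι) :=
  Finite.of_injective (fun L => L.idxFun) (fun _ _ h => Line.ext h)

instance instFinSub {η α ι : Type} [Finite η] [Finite α] [Finite ι] : Finite (Subspace η α ι) :=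
  Finite.of_injective (fun L => L.idxFun) (fun _ _ h => Subspace.ext h)

noncomputable instance instFintypeLine {α ι : Type} [Finite α] [Finite ι] : Fintype (Line α ι) :=
  Fintype.ofFinite _

noncomputable instance instFintypeSub {η α ι : Type} [Finite η] [Finite α] [Finite ι] :
    Fintype (Subspace η α ι) := Fintype.ofFinite _

/-- glue a subspace in a fibre: fix the coordinates given by `κ`. -/
def subInl {η α ι₁ ι₂ : Type} (V : Subspace η α ι₁) (y : ι₂ → α) : Subspace η α (ι₁ ⊕ ι₂) where
  idxFun := Sum.elim V.idxFun (fun j => Sum.inl (y j))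
  proper e := let ⟨i, hi⟩ := V.proper e; ⟨Sum.inl i, hi⟩

lemma subInl_apply {η α ι₁ ι₂ : Type} (V : Subspace η α ι₁) (y : ι₂ → α) (x : η → α) :
    subInl V y x = Sum.elim (V x) y := by
  funext j; cases j <;> rfl

def subInr {η α ι₁ ι₂ : Type} (y : ι₁ → α) (V : Subspace η α ι₂) : Subspace η α (ι₁ ⊕ ι₂) where
  idxFun := Sum.elim (fun j => Sum.inl (y j)) V.idxFun
  proper e := let ⟨i, hi⟩ := V.proper e; ⟨Sum.inr i, hi⟩

lemma subInr_apply {η α ι₁ ι₂ : Type} (y : ι₁ → α) (V : Subspace η α ι₂) (x : η → α) :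
    subInr y V x = Sum.elim y (V x) := by
  funext j; cases j <;> rfl

def subReindex {η α ι₁ ι₂ : Type} (V : Subspace η α ι₁) (e : ι₁ ≃ ι₂) : Subspace η α ι₂ where
  idxFun j := V.idxFun (e.symm j)
  proper t := let ⟨i, hi⟩ := V.proper t; ⟨e i, by simpa using hi⟩

lemma subReindex_apply {η α ι₁ ι₂ : Type} (V : Subspace η α ι₁) (e : ι₁ ≃ ι₂) (x : η → α) :
    subReindex V e x = V x ∘ e.symm := rfl

def subComp {η ζ α ι : Type} (V : Subspace ζ α ι) (W : Subspace η α ζ) : Subspace η α ι where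
  idxFun j := Sum.elim Sum.inl W.idxFun (V.idxFun j)
  proper t := by
    obtain ⟨i, hi⟩ := W.proper t
    obtain ⟨j, hj⟩ := V.proper i
    exact ⟨j, by simp [hj, hi]⟩

lemma subComp_apply {η ζ α ι : Type} (V : Subspace ζ α ι) (W : Subspace η α ζ) (x : η → α) :
    subComp V W x = V (W x) := by
  funext j
  simp only [Subspace.apply_def, subComp]
  cases V.idxFun j <;> rfl

def lineComp {ζ α ι : Type} (V : Subspace ζ α ι) (W : Line α ζ) : Line α ι where
  idxFun j := Sum.elim some W.idxFun (V.idxFun j)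
  proper := by
    obtain ⟨i, hi⟩ := W.proper
    obtain ⟨j, hj⟩ := V.proper i
    exact ⟨j, by simp [hj, hi]⟩

lemma lineComp_apply {ζ α ι : Type} (V : Subspace ζ α ι) (W : Line α ζ) (x : α) :
    lineComp V W x = V (W x) := by
  funext j
  simp only [Subspace.apply_def, Line.apply_def, lineComp]
  cases V.idxFun j <;> rfl

lemma sub_injective {η α ι : Type} (V : Subspace η α ι) : Function.Injective (V : (η → α) → ι → α) := by
  intro x y h
  funext e
  obtain ⟨i, hi⟩ := V.proper e
  have := congrFun h i
  rwa [Subspace.apply_inr hi, Subspace.apply_inr hi] at this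

/-- subspace fixing all coordinates outside `inl` -/
def subId {α ι₁ : Type} : Subspace ι₁ α ι₁ := ⟨Sum.inr, fun i => ⟨i, rfl⟩⟩

lemma subId_apply {α ι₁ : Type} (x : ι₁ → α) : (subId : Subspace ι₁ α ι₁) x = x := rfl

def subProd {d : ℕ} {α ι₁ ι₂ : Type} (L : Line α ι₁) (V : Subspace (Fin d) α ι₂) :
    Subspace (Fin (d+1)) α (ι₁ ⊕ ι₂) where
  idxFun := Sum.elim (fun j => (L.idxFun j).elim (Sum.inr 0) Sum.inl)
    (fun j => Sum.elim Sum.inl (fun t => Sum.inr t.succ) (V.idxFun j))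
  proper t := by
    refine Fin.cases ?_ ?_ t
    · obtain ⟨i, hi⟩ := L.proper
      exact ⟨Sum.inl i, by simp [hi]⟩
    · intro t
      obtain ⟨i, hi⟩ := V.proper t
      exact ⟨Sum.inr i, by simp [hi]⟩

lemma subProd_apply {d : ℕ} {α ι₁ ι₂ : Type} (L : Line α ι₁) (V : Subspace (Fin d) α ι₂)
    (x : Fin (d+1) → α) : subProd L V x = Sum.elim (L (x 0)) (V (fun t => x t.succ)) := by
  funext j
  rcases j with j | j
  · simp only [Subspace.apply_def, subProd, Sum.elim_inl, Line.apply_def]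
    cases L.idxFun j <;> rfl
  · simp only [Subspace.apply_def, subProd, Sum.elim_inr]
    cases V.idxFun j <;> rfl

/-- transport along equivalences of alphabets -/
lemma DHJ.congr {α β : Type} [Fintype α] [Fintype β] (e : α ≃ β) {δ : ℝ} (h : DHJ α δ) :
    DHJ β δ := by
  obtain ⟨N, hN⟩ := h
  refine ⟨N, fun ι _ _ hc A hA => ?_⟩
  obtain ⟨L, hL⟩ := hN ι hc {x | e ∘ x ∈ A} (by
    refine hA.trans (le_of_eq ?_)
    unfold pr
    rw [← exp_equiv (Equiv.arrowCongr (Equiv.refl ι) e) (fun x => ind (x ∈ A))]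
    rfl)
  refine ⟨L.map e, fun b => ?_⟩
  have := hL (e.symm b)
  simp only [Set.mem_ofPred_eq] at this
  rw [← Line.map_apply, Equiv.apply_symm_apply] at this
  exact this

lemma DHJ.mono {α : Type} [Fintype α] {δ δ' : ℝ} (h : DHJ α δ) (hd : δ ≤ δ') : DHJ α δ' := by
  obtain ⟨N, hN⟩ := h
  exact ⟨N, fun ι _ _ hc A hA => hN ι hc A (hd.trans hA)⟩

/-- multidimensional version from the one-dimensional version. -/
lemma mdhj_of_dhj {α : Type} [Fintype α] (h : ∀ δ : ℝ, 0 < δ → DHJ α δ) :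
    ∀ (d : ℕ) (δ : ℝ), 0 < δ → MDHJ α d δ := by
  intro d
  induction d with
  | zero =>
    intro δ hδ
    refine ⟨0, fun ι _ _ _ A hA => ?_⟩
    obtain ⟨x, hx⟩ := exists_ge_of_le_exp hδ hA
    have hxA : x ∈ A := by
      by_contra hn
      rw [ind_of_not hn] at hx
      linarith
    refine ⟨⟨fun j => Sum.inl (x j), fun e => e.elim0⟩, fun y => ?_⟩
    exact hxA
  | succ d ih =>
    intro δ hδ
    obtain ⟨N1, hN1⟩ := h (δ/2) (by linarith)
    set K : ℝ := ((Fintype.card (Line α (Fin N1)) : ℕ) : ℝ) with hK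
    by_cases hK0 : K = 0
    · -- no lines at all: contradiction with any dense set
      refine ⟨N1, fun ι _ _ hc A hA => ?_⟩
      exfalso
      obtain ⟨e⟩ := exists_split ι N1 hc
      unfold pr at hA
      rw [exp_split e, exp_comm] at hA
      obtain ⟨y, hy⟩ := exists_ge_of_le_exp hδ hA
      obtain ⟨L, _⟩ := hN1 (Fin N1) (by simp) {x | Sum.elim x y ∘ e.symm ∈ A} (by
        unfold pr; simp only [Set.mem_ofPred_eq]; linarith)
      have : (0:ℝ) < K := by
        rw [hK]; exact_mod_cast Fintype.card_pos_iff.mpr ⟨L⟩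
      linarith
    have hKpos : 0 < K := lt_of_le_of_ne (by rw [hK]; positivity) (Ne.symm hK0)
    obtain ⟨N2, hN2⟩ := ih (δ / 2 / K) (by positivity)
    refine ⟨N1 + N2, fun ι _ _ hc A hA => ?_⟩
    obtain ⟨e⟩ := exists_split ι N1 (by omega)
    unfold pr at hA
    rw [exp_split e, exp_comm] at hA
    have h1 := markov_half hδ (fun y => pr_le_one _) hA
    have h2 : δ / 2 ≤ pr (fun y : Fin (Fintype.card ι - N1) → α =>
        ∃ L : Line α (Fin N1), ∀ a, Sum.elim (L a) y ∘ e.symm ∈ A) := by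
      refine h1.trans (pr_mono fun y hy => ?_)
      obtain ⟨L, hL⟩ := hN1 (Fin N1) (by simp) {x | Sum.elim x y ∘ e.symm ∈ A} hy
      exact ⟨L, hL⟩
    obtain ⟨L, hL⟩ := pigeon _ (by positivity) h2
    obtain ⟨V, hV⟩ := hN2 (Fin (Fintype.card ι - N1)) (by simp; omega)
      {y | ∀ a, Sum.elim (L a) y ∘ e.symm ∈ A} hL
    refine ⟨subReindex (subProd L V) e, fun x => ?_⟩
    rw [subReindex_apply, subProd_apply]
    exact hV _ _

end HC

namespace HC
open Finset Combinatorics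
open scoped BigOperators

lemma exp_prod {β ι : Type} [Fintype β] [Fintype ι] [DecidableEq ι] (h : β → ℝ) :
    𝔼 φ : ι → β, ∏ j, h (φ j) = (𝔼 b, h b) ^ Fintype.card ι := by
  rw [Fintype.expect_eq_sum_div_card, Fintype.expect_eq_sum_div_card, div_pow]
  congr 1
  · rw [← Finset.card_univ, ← Finset.prod_const, Finset.prod_univ_sum, Fintype.piFinset_univ]
  · simp

/-- the subspace freeing the coordinates in `S` and fixing the others to `y` -/
noncomputable def coordSub {α ι : Type} (S : Finset ι) (y : ι → α) : Subspace S α ι where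
  idxFun j := if h : j ∈ S then Sum.inr ⟨j, h⟩ else Sum.inl (y j)
  proper e := ⟨e.1, by simp⟩

lemma coordSub_apply {α ι : Type} (S : Finset ι) (y : ι → α) (z : S → α) (j : ι) :
    coordSub S y z j = if h : j ∈ S then z ⟨j, h⟩ else y j := by
  simp only [Subspace.apply_def, coordSub]
  split_ifs <;> rfl

lemma mix (α β : Type) [Fintype α] [Fintype β] [Nonempty α] (m : ℕ) (η : ℝ) (hη : 0 < η) :
    ∃ M : ℕ, ∀ (ι : Type) [Fintype ι] [DecidableEq ι], M ≤ Fintype.card ι →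
      ∀ (π : β → α) (s : α → β), (∀ a, π (s a) = a) → ∀ E : Set (ι → α),
      η ≤ pr (fun φ : ι → β => π ∘ φ ∈ E) →
      ∃ (S : Finset ι) (y : ι → α), m ≤ S.card ∧
        η / 4 ≤ pr (fun z : S → α => coordSub S y z ∈ E) := by
  rcases isEmpty_or_nonempty β with hβ | hβ
  · exact ⟨0, fun ι _ _ _ π s => (hβ.elim (s (Classical.arbitrary α)))⟩
  set q : ℝ := 1 - 1 / (2 * Fintype.card β) with hq
  have hcβ : (1:ℝ) ≤ Fintype.card β := by exact_mod_cast Fintype.card_pos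
  have hq0 : 0 ≤ q := by
    rw [hq, sub_nonneg, div_le_one (by positivity)]; linarith
  have hq1 : q < 1 := by
    rw [hq]; have : (0:ℝ) < 1 / (2 * Fintype.card β) := by positivity
    linarith
  obtain ⟨M, hM⟩ := exists_pow_lt_of_lt_one (show 0 < η / 2 / 2 ^ m by positivity) hq1
  refine ⟨M, fun ι _ _ hc π s hs E hE => ?_⟩
  set SS : (ι → β) → Finset ι := fun φ => univ.filter (fun j => φ j ∈ Set.range s) with hSS
  set h : β → ℝ := fun b => if b ∈ Set.range s then 1/2 else 1 with hh
  have hprod : ∀ φ : ι → β, ∏ j, h (φ j) = (1/2) ^ (SS φ).card := by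
    intro φ
    simp only [hh, hSS]
    rw [Finset.prod_ite, Finset.prod_const, Finset.prod_const_one, mul_one]
  have hExp : 𝔼 b, h b ≤ q := by
    rw [Fintype.expect_eq_sum_div_card, div_le_iff₀ (by linarith), hq]
    have hle : ∑ b, h b ≤ ∑ b, (1 - if b = s (Classical.arbitrary α) then (1/2 : ℝ) else 0) := by
      apply Finset.sum_le_sum
      intro b _
      simp only [hh]
      by_cases hb : b = s (Classical.arbitrary α)
      · rw [if_pos hb, if_pos ⟨_, hb.symm⟩]; norm_num
      · rw [if_neg hb]; split_ifs <;> norm_num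
    rw [Finset.sum_sub_distrib] at hle
    simp at hle
    have : (1 - 1 / (2 * (Fintype.card β:ℝ))) * Fintype.card β = Fintype.card β - 1/2 := by
      field_simp
    rw [this]; linarith
  have hExp0 : 0 ≤ 𝔼 b, h b := expect_nonneg fun b _ => by
    simp only [hh]; split_ifs <;> norm_num
  have htail : pr (fun φ : ι → β => ¬ m ≤ (SS φ).card) ≤ η / 2 := by
    have h1 : pr (fun φ : ι → β => ¬ m ≤ (SS φ).card) ≤ 𝔼 φ : ι → β, 2 ^ m * ∏ j, h (φ j) := by
      apply exp_mono
      intro φ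
      rw [hprod]
      by_cases hm : m ≤ (SS φ).card
      · rw [ind_of_not (by simpa using hm)]; positivity
      · rw [ind_of hm, one_div, inv_pow, ← div_eq_mul_inv, le_div_iff₀ (by positivity), one_mul]
        exact pow_le_pow_right₀ (by norm_num) (by omega)
    rw [exp_mul_left, exp_prod] at h1
    have h2 : (𝔼 b, h b) ^ Fintype.card ι ≤ q ^ M :=
      (pow_le_pow_left₀ hExp0 hExp _).trans (pow_le_pow_of_le_one hq0 hq1.le hc)
    calc _ ≤ _ := h1
      _ ≤ 2 ^ m * (η / 2 / 2 ^ m) := by gcongr; exact h2.trans hM.le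
      _ = η / 2 := by field_simp
  set F : (ι → β) → ℝ := fun φ =>
    ind (π ∘ φ ∈ E ∧ m ≤ (SS φ).card) - η / 4 * ind (m ≤ (SS φ).card) with hF
  have hFpos : 0 < 𝔼 φ, F φ := by
    have h1 : pr (fun φ : ι → β => π ∘ φ ∈ E) ≤
        𝔼 φ, (F φ + (η / 4 + ind (¬ m ≤ (SS φ).card))) := by
      apply exp_mono
      intro φ
      simp only [hF]
      by_cases hm : m ≤ (SS φ).card
      · simp only [hm, and_true, not_true_eq_false, ind_of_not not_false, ind_of trivial]
        linarith
      · simp only [hm, and_false, not_false_eq_true, ind_of_not not_false, ind_of trivial]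
        linarith [ind_le_one (π ∘ φ ∈ E)]
    rw [exp_add, exp_add, exp_const] at h1
    unfold pr at htail hE h1
    linarith
  have hsum : 0 < ∑ φ, F φ := by
    rw [Fintype.expect_eq_sum_div_card] at hFpos
    by_contra hcon
    push Not at hcon
    have := div_nonpos_of_nonpos_of_nonneg hcon (show (0:ℝ) ≤ Fintype.card (ι → β) by positivity)
    linarith
  set key : (ι → β) → (ι → Option β) := fun φ j => if φ j ∈ Set.range s then none else some (φ j)
    with hkey
  rw [← Finset.sum_fiberwise (s := univ) (g := key)] at hsum
  obtain ⟨k, _, hk⟩ := Finset.exists_lt_of_sum_lt (f := fun _ => (0:ℝ)) (by simpa using hsum)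
  have hne : ∃ φ0, key φ0 = k := by
    by_contra hcon
    push Not at hcon
    rw [Finset.filter_false_of_mem (fun φ _ => hcon φ)] at hk
    simp at hk
  obtain ⟨φ0, rfl⟩ := hne
  have hSSk : ∀ φ, key φ = key φ0 → SS φ = SS φ0 := by
    intro φ hφ
    ext j
    have := congrFun hφ j
    simp only [hkey] at this
    simp only [hSS, mem_filter, mem_univ, true_and]
    split_ifs at this with h1 h2 <;> simp_all
  have hout : ∀ φ, key φ = key φ0 → ∀ j, j ∉ SS φ0 → φ j = φ0 j := by
    intro φ hφ j hj
    have := congrFun hφ j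
    simp only [hkey] at this
    simp only [hSS, mem_filter, mem_univ, true_and] at hj
    rw [if_neg hj] at this
    split_ifs at this with h1
    exact Option.some.inj this
  set S := SS φ0 with hS
  have hmS : m ≤ S.card := by
    by_contra hcon
    have : ∑ φ ∈ univ.filter (fun φ => key φ = key φ0), F φ = 0 := by
      apply Finset.sum_eq_zero
      intro φ hφ
      rw [mem_filter] at hφ
      simp only [hF, hSSk φ hφ.2, hcon, and_false, ind_of_not not_false]
      ring
    linarith
  refine ⟨S, π ∘ φ0, hmS, ?_⟩
  set gl : (S → α) → (ι → β) := fun z j => if h : j ∈ S then s (z ⟨j, h⟩) else φ0 j with hgl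
  have hbij : ∑ φ ∈ univ.filter (fun φ => key φ = key φ0), F φ =
      ∑ z : S → α, (ind (coordSub S (π ∘ φ0) z ∈ E) - η / 4) := by
    symm
    refine Finset.sum_nbij' gl (fun φ j => π (φ j)) ?_ ?_ ?_ ?_ ?_
    · intro z _
      simp only [mem_filter, mem_univ, true_and]
      funext j
      simp only [hkey, hgl]
      by_cases hj : j ∈ S
      · rw [dif_pos hj, if_pos ⟨_, rfl⟩, if_pos (by simpa [hS, hSS] using hj)]
      · rw [dif_neg hj]
    · intro φ _; simp
    · intro z _
      funext j
      simp [hgl, hs]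
    · intro φ hφ
      simp only [mem_filter, mem_univ, true_and] at hφ
      funext j
      simp only [hgl]
      by_cases hj : j ∈ S
      · rw [dif_pos hj]
        have : j ∈ SS φ := by rw [hSSk φ hφ]; exact hj
        simp only [hSS, mem_filter, mem_univ, true_and] at this
        obtain ⟨a, ha⟩ := this
        rw [← ha, hs]
      · rw [dif_neg hj, hout φ hφ j hj]
    · intro z _
      have hz : key (gl z) = key φ0 := by
        funext j
        simp only [hkey, hgl]
        by_cases hj : j ∈ S
        · rw [dif_pos hj, if_pos ⟨_, rfl⟩, if_pos (by simpa [hS, hSS] using hj)]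
        · rw [dif_neg hj]
      have hpi : π ∘ gl z = coordSub S (π ∘ φ0) z := by
        funext j
        rw [coordSub_apply]
        simp only [Function.comp_apply, hgl]
        split_ifs
        · rw [hs]
        · rfl
      simp only [hF, hpi, hSSk _ hz, hmS, and_true, ind_of trivial, mul_one]
  rw [hbij] at hk
  rw [Finset.sum_sub_distrib, sum_const, card_univ, nsmul_eq_mul] at hk
  unfold pr
  rw [Fintype.expect_eq_sum_div_card, le_div_iff₀ (by exact_mod_cast Fintype.card_pos)]
  linarith

end HC

namespace HC
open Finset Combinatorics
open scoped BigOperators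

/-- `D` is insensitive to swapping the letters `a` and `none`. -/
def Insens {α ι : Type} (a : α) (D : Set (ι → Option α)) : Prop :=
  ∀ x y : ι → Option α, (∀ j, (x j).getD a = (y j).getD a) → x ∈ D → y ∈ D

lemma Insens.compl {α ι : Type} {a : α} {D : Set (ι → Option α)} (h : Insens a D) :
    Insens a {x | x ∉ D} := by
  intro x y hxy hx hy
  exact hx (h y x (fun j => (hxy j).symm) hy)

def subLift {η α ι : Type} (V : Subspace η α ι) : Subspace η (Option α) ι where
  idxFun j := Sum.map some id (V.idxFun j)
  proper t := let ⟨i, hi⟩ := V.proper t; ⟨i, by simp [hi]⟩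

lemma subLift_getD {η α ι : Type} (V : Subspace η α ι) (a : α) (x : η → Option α) (j : ι) :
    ((subLift V x) j).getD a = V (fun t => (x t).getD a) j := by
  simp only [Subspace.apply_def, subLift]
  cases V.idxFun j <;> rfl

lemma find_insens {α : Type} [Fintype α] (H : ∀ (d : ℕ) (δ : ℝ), 0 < δ → MDHJ α d δ)
    (a : α) (d : ℕ) (η : ℝ) (hη : 0 < η) :
    ∃ m : ℕ, ∀ (ι : Type) [Fintype ι] [DecidableEq ι], m ≤ Fintype.card ι →
      ∀ D : Set (ι → Option α), Insens a D → η ≤ pr (fun x => x ∈ D) →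
      ∃ V : Subspace (Fin d) (Option α) ι, ∀ x, V x ∈ D := by
  obtain ⟨N, hN⟩ := H d (η / 4) (by positivity)
  have : Nonempty α := ⟨a⟩
  obtain ⟨M, hM⟩ := mix α (Option α) N η hη
  refine ⟨M, fun ι _ _ hc D hD hp => ?_⟩
  obtain ⟨S, y, hS, hy⟩ := hM ι hc (fun o => o.getD a) some (fun _ => rfl)
    {u | some ∘ u ∈ D} (by
      refine hp.trans (pr_mono fun φ hφ => ?_)
      exact hD φ _ (fun j => by simp) hφ)
  obtain ⟨W, hW⟩ := hN S (by simpa using hS) {z | some ∘ (coordSub S y z) ∈ D} hy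
  refine ⟨subLift (subComp (coordSub S y) W), fun x => ?_⟩
  refine hD _ _ ?_ (hW (fun t => (x t).getD a))
  intro j
  rw [subLift_getD, subComp_apply]
  rfl

lemma exp_range {d : ℕ} {α ι : Type} [Fintype α] [Fintype ι] [DecidableEq ι]
    (V : Subspace (Fin d) α ι) (f : (ι → α) → ℝ) (h : 𝔼 u, f (V u) ≤ 0) :
    𝔼 x, f x * ind (x ∈ Set.range (V : (Fin d → α) → ι → α)) ≤ 0 := by
  rcases isEmpty_or_nonempty (Fin d → α) with h0 | h0
  · apply le_of_eq
    apply expect_eq_zero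
    intro x _
    rw [ind_of_not, mul_zero]
    rintro ⟨u, _⟩
    exact h0.elim u
  rw [Fintype.expect_eq_sum_div_card] at h ⊢
  have hs : ∑ x, f x * ind (x ∈ Set.range (V : (Fin d → α) → ι → α)) = ∑ u, f (V u) := by
    have : ∀ x, f x * ind (x ∈ Set.range (V : (Fin d → α) → ι → α)) =
        if x ∈ univ.image (V : (Fin d → α) → ι → α) then f x else 0 := by
      intro x
      by_cases hx : x ∈ Set.range (V : (Fin d → α) → ι → α)
      · rw [ind_of hx, if_pos (by simpa using hx), mul_one]
      · rw [ind_of_not hx, if_neg (by simpa using hx), mul_zero]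
    rw [Finset.sum_congr rfl fun x _ => this x, Finset.sum_ite_mem, univ_inter,
      Finset.sum_image (fun x _ y _ hxy => sub_injective V hxy)]
  rw [hs]
  have hc : (0:ℝ) < Fintype.card (Fin d → α) := by exact_mod_cast Fintype.card_pos
  rw [div_le_iff₀ hc, zero_mul] at h
  exact div_nonpos_of_nonpos_of_nonneg h (by positivity)

/-- the range of a chosen subspace inside `E` (or the empty set). -/
noncomputable def pick {α ι : Type} (d : ℕ) (E : Set (ι → α)) : Set (ι → α) :=
  if h : ∃ V : Subspace (Fin d) α ι, ∀ x, V x ∈ E then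
    Set.range (h.choose : (Fin d → α) → ι → α) else ∅

lemma pick_sub {α ι : Type} (d : ℕ) (E : Set (ι → α)) {x : ι → α} (hx : x ∈ pick d E) : x ∈ E := by
  unfold pick at hx
  split_ifs at hx with h
  · obtain ⟨u, rfl⟩ := hx
    exact h.choose_spec u
  · exact hx.elim

lemma tile_aux {α : Type} [Fintype α] (a : α) (d m : ℕ) (η c : ℝ) (hη : 0 < η)
    (hc : c = 1 / (Fintype.card (Fin m → Option α) : ℝ))
    (hm : ∀ D : Set (Fin m → Option α), Insens a D → η ≤ pr (fun x => x ∈ D) →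
      ∃ V : Subspace (Fin d) (Option α) (Fin m), ∀ x, V x ∈ D) (s : ℕ) :
    ∀ (ι : Type) [Fintype ι] [DecidableEq ι], s * m ≤ Fintype.card ι →
      ∀ D : Set (ι → Option α), Insens a D → ∀ g : (ι → Option α) → ℝ, (∀ x, g x ≤ 1) →
      (∀ V : Subspace (Fin d) (Option α) ι, 𝔼 x, g (V x) ≤ 0) →
      𝔼 x, g x * ind (x ∈ D) ≤ (1 - c) ^ s * pr (fun x => x ∈ D) + η * (1 - (1 - c) ^ s) := by
  have hcpos : 0 < c := by
    rw [hc]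
    have : (0:ℝ) < Fintype.card (Fin m → Option α) := by exact_mod_cast Fintype.card_pos
    positivity
  have hc1 : c ≤ 1 := by
    rw [hc, div_le_one (by exact_mod_cast Fintype.card_pos)]
    exact_mod_cast Fintype.card_pos
  induction s with
  | zero =>
    intro ι _ _ _ D hD g hg _
    simp only [pow_zero, one_mul, sub_self, mul_zero, add_zero]
    apply exp_mono
    intro x
    nlinarith [ind_nonneg (x ∈ D), hg x]
  | succ s ih =>
    intro ι _ _ hcard D hD g hg hV
    have hmc : m ≤ Fintype.card ι := by nlinarith
    obtain ⟨e⟩ := exists_split ι m hmc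
    set r := Fintype.card ι - m with hr
    have hrs : s * m ≤ r := by
      have : (s + 1) * m = s * m + m := by ring
      omega
    set G : (Fin m → Option α) → (Fin r → Option α) → (ι → Option α) :=
      fun x y => Sum.elim x y ∘ e.symm with hG
    set Dy : (Fin r → Option α) → Set (Fin m → Option α) := fun y => {x | G x y ∈ D} with hDy
    have hGgetD : ∀ x x' y y', (∀ j, (x j).getD a = (x' j).getD a) →
        (∀ j, (y j).getD a = (y' j).getD a) → ∀ j, (G x y j).getD a = (G x' y' j).getD a := by
      intro x x' y y' h1 h2 j
      simp only [hG, Function.comp_apply]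
      rcases e.symm j with t | t
      · exact h1 t
      · exact h2 t
    have hDyI : ∀ y, Insens a (Dy y) := by
      intro y x x' hx hxD
      exact hD _ _ (hGgetD x x' y y hx (fun _ => rfl)) hxD
    have hDyeq : ∀ y y', (∀ j, (y j).getD a = (y' j).getD a) → Dy y = Dy y' := by
      intro y y' h
      ext x
      exact ⟨fun hx => hD _ _ (hGgetD x x y y' (fun _ => rfl) h) hx,
        fun hx => hD _ _ (hGgetD x x y' y (fun _ => rfl) (fun j => (h j).symm)) hx⟩
    set D' : (Fin m → Option α) → Set (Fin r → Option α) :=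
      fun x => {y | x ∈ Dy y ∧ x ∉ pick d (Dy y)} with hD'
    have hD'I : ∀ x, Insens a (D' x) := by
      intro x y y' h hy
      simp only [hD', Set.mem_ofPred_eq] at hy ⊢
      rw [← hDyeq y y' h]
      exact hy
    have hsplit : 𝔼 x, g x * ind (x ∈ D) =
        𝔼 y, 𝔼 x, g (G x y) * ind (x ∈ pick d (Dy y)) + 𝔼 x, 𝔼 y, g (G x y) * ind (y ∈ D' x) := by
      rw [exp_split e, exp_comm (fun x y => g (G x y) * ind (y ∈ D' x)), ← exp_add, exp_comm]
      apply exp_congr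
      intro y
      rw [← exp_add]
      apply exp_congr
      intro x
      change g (G x y) * ind (x ∈ Dy y) = _
      by_cases h1 : x ∈ pick d (Dy y)
      · rw [ind_of (pick_sub d _ h1), ind_of h1, ind_of_not (by simp [hD', h1])]; ring
      · by_cases h2 : x ∈ Dy y
        · rw [ind_of h2, ind_of_not h1, ind_of ⟨h2, h1⟩]; ring
        · rw [ind_of_not h2, ind_of_not h1, ind_of_not (by simp [hD', h2])]; ring
    have hfirst : 𝔼 y, 𝔼 x, g (G x y) * ind (x ∈ pick d (Dy y)) ≤ 0 := by
      apply exp_le_of_le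
      intro y
      unfold pick
      split_ifs with h
      · apply exp_range h.choose (fun x => g (G x y))
        refine le_trans (le_of_eq ?_) (hV (subReindex (subInl h.choose y) e))
        apply exp_congr
        intro u
        rw [subReindex_apply, subInl_apply]
      · apply exp_le_of_le
        intro x
        rw [ind_of_not (Set.notMem_empty x), mul_zero]
    have hsecond : ∀ x, 𝔼 y, g (G x y) * ind (y ∈ D' x) ≤
        (1 - c) ^ s * pr (fun y => y ∈ D' x) + η * (1 - (1 - c) ^ s) := by
      intro x
      apply ih (Fin r) (by simpa using hrs) (D' x) (hD'I x) (fun y => g (G x y)) (fun y => hg _)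
      intro V
      refine le_trans (le_of_eq ?_) (hV (subReindex (subInr x V) e))
      apply exp_congr
      intro u
      rw [subReindex_apply, subInr_apply]
    have hden : ∀ y, pr (fun x => x ∈ Dy y ∧ x ∉ pick d (Dy y)) ≤
        (1 - c) * pr (fun x => x ∈ Dy y) + c * η := by
      intro y
      by_cases hy : η ≤ pr (fun x => x ∈ Dy y)
      · have hex := hm (Dy y) (hDyI y) hy
        have h1 : c ≤ pr (fun x => x ∈ pick d (Dy y)) := by
          rw [hc]
          apply pr_ge_of_exists
          refine ⟨hex.choose (fun _ => none), ?_⟩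
          unfold pick
          rw [dif_pos hex]
          exact ⟨_, rfl⟩
        have h2 : pr (fun x => x ∈ Dy y ∧ x ∉ pick d (Dy y)) + pr (fun x => x ∈ pick d (Dy y)) ≤
            pr (fun x => x ∈ Dy y) := by
          unfold pr
          rw [← exp_add]
          apply exp_mono
          intro x
          by_cases h1 : x ∈ pick d (Dy y)
          · rw [ind_of (pick_sub d _ h1), ind_of h1, ind_of_not (by simp [h1])]; norm_num
          · rw [ind_of_not h1, add_zero]; exact ind_mono fun h => h.1
        have h3 := pr_le_one (fun x => x ∈ Dy y)
        nlinarith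
      · push Not at hy
        have h2 : pr (fun x => x ∈ Dy y ∧ x ∉ pick d (Dy y)) ≤ pr (fun x => x ∈ Dy y) :=
          pr_mono fun x h => h.1
        nlinarith
    have hden2 : 𝔼 x, pr (fun y => y ∈ D' x) ≤ (1 - c) * pr (fun x => x ∈ D) + c * η := by
      have h1 : 𝔼 x, pr (fun y => y ∈ D' x) = 𝔼 y, pr (fun x => x ∈ Dy y ∧ x ∉ pick d (Dy y)) := by
        unfold pr
        rw [exp_comm]
        rfl
      have h2 : pr (fun x => x ∈ D) = 𝔼 y, pr (fun x => x ∈ Dy y) := by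
        unfold pr
        rw [exp_split e, exp_comm]
        rfl
      rw [h1, h2]
      refine (exp_mono hden).trans ?_
      rw [exp_add, exp_mul_left, exp_const]
    rw [hsplit]
    have h3 := exp_mono hsecond
    rw [exp_add, exp_mul_left, exp_const] at h3
    have hpow : 0 ≤ (1 - c) ^ s := pow_nonneg (by linarith) _
    have h4 := mul_le_mul_of_nonneg_left hden2 hpow
    have : (1 - c) ^ (s+1) = (1 - c) ^ s * (1 - c) := pow_succ _ _
    rw [this]
    nlinarith

lemma tile_one {α : Type} [Fintype α] (H : ∀ (d : ℕ) (δ : ℝ), 0 < δ → MDHJ α d δ)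
    (a : α) (d : ℕ) (η : ℝ) (hη : 0 < η) :
    ∃ n : ℕ, ∀ (ι : Type) [Fintype ι] [DecidableEq ι], n ≤ Fintype.card ι →
      ∀ D : Set (ι → Option α), Insens a D → ∀ g : (ι → Option α) → ℝ, (∀ x, g x ≤ 1) →
      (∀ V : Subspace (Fin d) (Option α) ι, 𝔼 x, g (V x) ≤ 0) →
      𝔼 x, g x * ind (x ∈ D) ≤ η := by
  obtain ⟨m, hm⟩ := find_insens H a d (η/2) (by positivity)
  set c : ℝ := 1 / (Fintype.card (Fin m → Option α) : ℝ) with hc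
  have hcpos : 0 < c := by
    rw [hc]
    have : (0:ℝ) < Fintype.card (Fin m → Option α) := by exact_mod_cast Fintype.card_pos
    positivity
  have hc1 : c ≤ 1 := by
    rw [hc, div_le_one (by exact_mod_cast Fintype.card_pos)]
    exact_mod_cast Fintype.card_pos
  obtain ⟨s, hs⟩ := exists_pow_lt_of_lt_one (show 0 < η / 2 by positivity) (show 1 - c < 1 by linarith)
  refine ⟨s * m, fun ι _ _ hcard D hD g hg hV => ?_⟩
  have h := tile_aux a d m (η/2) c (by positivity) hc (hm (Fin m) (by simp)) s ι hcard D hD g hg hV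
  have h1 := pr_le_one (fun x => x ∈ D)
  have h0 := pr_nonneg (fun x => x ∈ D)
  have hpow : 0 ≤ (1 - c) ^ s := pow_nonneg (by linarith) _
  nlinarith

lemma tile_many {α : Type} [Fintype α] (H : ∀ (d : ℕ) (δ : ℝ), 0 < δ → MDHJ α d δ)
    (l : List α) : ∀ (d : ℕ) (η : ℝ), 0 < η →
    ∃ n : ℕ, ∀ (ι : Type) [Fintype ι] [DecidableEq ι], n ≤ Fintype.card ι →
      ∀ C : α → Set (ι → Option α), (∀ a, Insens a (C a)) →
      ∀ g : (ι → Option α) → ℝ, (∀ x, g x ≤ 1) →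
      (∀ V : Subspace (Fin d) (Option α) ι, 𝔼 x, g (V x) ≤ 0) →
      𝔼 x, g x * ind (∃ a ∈ l, x ∉ C a) ≤ η := by
  induction l with
  | nil =>
    intro d η hη
    refine ⟨0, fun ι _ _ _ C _ g _ _ => ?_⟩
    apply exp_le_of_le
    intro x
    rw [ind_of_not (by simp)]
    linarith
  | cons b l ih =>
    intro d η hη
    obtain ⟨n1, hn1⟩ := tile_one H b d (η/3) (by positivity)
    obtain ⟨n2, hn2⟩ := ih d (η/3) (by positivity)
    obtain ⟨n3, hn3⟩ := tile_one H b n2 (η/3) (by positivity)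
    refine ⟨max n1 n3, fun ι _ _ hcard C hC g hg hV => ?_⟩
    have h1 := hn1 ι (le_trans (le_max_left _ _) hcard) _ (hC b).compl g hg hV
    have h3 := hn3 ι (le_trans (le_max_right _ _) hcard) _ (hC b)
      (fun x => g x * ind (∃ a ∈ l, x ∉ C a) - η/3) (by
        intro x
        have := hg x
        nlinarith [ind_nonneg (∃ a ∈ l, x ∉ C a), ind_le_one (∃ a ∈ l, x ∉ C a)]) (by
        intro V
        rw [exp_sub, exp_const]
        have := hn2 (Fin n2) (by simp) (fun a => {u | V u ∈ C a}) (by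
          intro a u u' hu hmem
          refine hC a _ _ ?_ hmem
          intro j
          simp only [Subspace.apply_def]
          cases V.idxFun j with
          | inl t => rfl
          | inr t => exact hu t) (fun u => g (V u)) (fun u => hg _) (by
          intro W
          refine le_trans (le_of_eq ?_) (hV (subComp V W))
          apply exp_congr
          intro u
          rw [subComp_apply])
        have h5 : 𝔼 x, g (V x) * ind (∃ a ∈ l, V x ∉ C a) ≤ η / 3 := this
        linarith)
    have h4 : 𝔼 x, g x * ind (∃ a ∈ b :: l, x ∉ C a) ≤
        𝔼 x, (g x * ind (x ∈ {x | x ∉ C b}) +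
          ((g x * ind (∃ a ∈ l, x ∉ C a) - η/3) * ind (x ∈ C b) + η / 3)) := by
      apply exp_mono
      intro x
      by_cases hb : x ∈ C b
      · rw [ind_of hb, ind_of_not (show ¬ (x ∈ {x | x ∉ C b}) from fun h => h hb)]
        have : (∃ a ∈ b :: l, x ∉ C a) ↔ (∃ a ∈ l, x ∉ C a) := by simp [hb]
        rw [this]; linarith
      · rw [ind_of_not hb, ind_of (show (x ∈ {x | x ∉ C b}) from hb),
          ind_of (show ∃ a ∈ b :: l, x ∉ C a from ⟨b, by simp, hb⟩)]
        linarith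
    rw [exp_add, exp_add, exp_const] at h4
    linarith

end HC

namespace HC
open Finset Combinatorics
open scoped BigOperators

lemma pr_no_none (α : Type) [Fintype α] (τ : ℝ) (hτ : 0 < τ) :
    ∃ m : ℕ, ∀ (ι : Type) [Fintype ι] [DecidableEq ι], m ≤ Fintype.card ι →
      pr (fun z : ι → Option α => ∀ j, z j ≠ none) ≤ τ := by
  set q : ℝ := 𝔼 b : Option α, ind (b ≠ none) with hq
  have hq0 : 0 ≤ q := pr_nonneg _
  have hq1 : q < 1 := by
    have h1 : (1:ℝ) / Fintype.card (Option α) ≤ pr (fun b : Option α => b = none) :=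
      pr_ge_of_exists ⟨none, rfl⟩
    have h2 : q = 1 - pr (fun b : Option α => b = none) := pr_not _
    have h3 : (0:ℝ) < 1 / Fintype.card (Option α) := by
      have : 0 < Fintype.card (Option α) := Fintype.card_pos
      positivity
    linarith
  obtain ⟨m, hm⟩ := exists_pow_lt_of_lt_one hτ hq1
  refine ⟨m, fun ι _ _ hc => ?_⟩
  have : pr (fun z : ι → Option α => ∀ j, z j ≠ none) = q ^ Fintype.card ι := by
    rw [hq, ← exp_prod]
    unfold pr
    apply exp_congr
    intro z
    by_cases h : ∀ j, z j ≠ none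
    · rw [ind_of h, Finset.prod_eq_one]
      intro j _
      exact ind_of (h j)
    · rw [ind_of_not h]
      push Not at h
      obtain ⟨j, hj⟩ := h
      symm
      apply Finset.prod_eq_zero (mem_univ j)
      exact ind_of_not (by simpa using hj)
  rw [this]
  exact (pow_le_pow_of_le_one hq0 hq1.le hc).trans hm.le

lemma endgame {α : Type} [Fintype α] (H : ∀ (d : ℕ) (δ : ℝ), 0 < δ → MDHJ α d δ)
    (δ ε : ℝ) (hδ : 0 < δ) (hε : 0 < ε) (hD : DHJ (Option α) (δ + ε)) :
    ∃ m : ℕ, ∀ (ι : Type) [Fintype ι] [DecidableEq ι], m ≤ Fintype.card ι →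
      ∀ (A : Set (ι → Option α)) (C : α → Set (ι → Option α)), (∀ a, Insens a (C a)) →
      (¬ ∃ L : Line (Option α) ι, ∀ a, L a ∈ A) →
      (∀ z ∈ A, (∀ a, z ∈ C a) → ∀ j, z j ≠ none) →
      pr (fun z => z ∈ A) + δ * pr (fun z => ∀ a, z ∈ C a) ≤ δ + 3 * ε := by
  obtain ⟨d, hd⟩ := hD
  obtain ⟨n, hn⟩ := tile_many H (univ : Finset α).toList d ε hε
  obtain ⟨m, hm⟩ := pr_no_none α ε hε
  refine ⟨max n m, fun ι _ _ hc A C hC hA hAC => ?_⟩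
  have h1 := hn ι ((le_max_left _ _).trans hc) C hC (fun z => ind (z ∈ A) - (δ + ε))
    (fun x => by have := ind_le_one (x ∈ A); linarith) (by
      intro V
      rw [exp_sub, exp_const]
      by_contra hcon
      push Not at hcon
      obtain ⟨L, hL⟩ := hd (Fin d) (by simp) {u | V u ∈ A} (by
        show δ + ε ≤ 𝔼 x, ind (V x ∈ A)
        linarith)
      exact hA ⟨lineComp V L, fun a => by rw [lineComp_apply]; exact hL a⟩)
  have h2 := hm ι ((le_max_right _ _).trans hc)
  have h3 : pr (fun z => z ∈ A) - (δ + ε) + δ * pr (fun z : ι → Option α => ∀ a, z ∈ C a)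
      - pr (fun z : ι → Option α => ∀ j, z j ≠ none) ≤
      𝔼 x : ι → Option α, (ind (x ∈ A) - (δ + ε)) * ind (∃ a ∈ (univ : Finset α).toList, x ∉ C a) := by
    unfold pr
    rw [← exp_mul_left, ← exp_const (X := ι → Option α) (δ + ε), ← exp_sub, ← exp_add, ← exp_sub]
    apply exp_mono
    intro z
    rw [exp_const]
    by_cases h : ∀ a, z ∈ C a
    · rw [ind_of h, ind_of_not (p := ∃ a ∈ _, _) (by push Not; exact fun a _ => h a)]
      by_cases hz : z ∈ A
      · rw [ind_of hz, ind_of (hAC z hz h)]; linarith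
      · rw [ind_of_not hz]
        have := ind_nonneg (∀ j, z j ≠ none)
        linarith
    · rw [ind_of_not h, ind_of (p := ∃ a ∈ _, _) (by
        push Not at h
        obtain ⟨a, ha⟩ := h
        exact ⟨a, by simp, ha⟩)]
      have := ind_nonneg (∀ j, z j ≠ none)
      linarith
  linarith

/-- the line obtained from a word having a `none` -/
def wordLine {α ι : Type} (w : ι → Option α) (h : ∃ j, w j = none) : Line (Option α) ι where
  idxFun j := (w j).map some
  proper := let ⟨j, hj⟩ := h; ⟨j, by simp [hj]⟩

lemma wordLine_none {α ι : Type} (w : ι → Option α) (h : ∃ j, w j = none) :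
    wordLine w h none = w := by
  funext j
  simp only [Line.apply_def, wordLine]
  cases w j <;> rfl

lemma wordLine_some {α ι : Type} (w : ι → Option α) (h : ∃ j, w j = none) (a : α) :
    wordLine w h (some a) = fun j => some ((w j).getD a) := by
  funext j
  simp only [Line.apply_def, wordLine]
  cases w j <;> rfl

/-- given near-uniform fibres, find a correlated pattern. -/
lemma find_pattern {α : Type} [Fintype α] [Nonempty α] (δ : ℝ) (hδ : 0 < δ)
    (h : DHJ α (δ / 2)) :
    ∃ θ : ℝ, 0 < θ ∧ ∀ m : ℕ, ∃ M : ℕ, ∀ (ι Y : Type) [Fintype ι] [DecidableEq ι] [Fintype Y],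
      M ≤ Fintype.card ι → ∀ A : Y → Set (ι → Option α),
      (∀ x, δ ≤ pr (fun y => x ∈ A y)) →
      ∃ (S : Finset ι) (κ : ι → Option α), m ≤ S.card ∧
        θ ≤ 𝔼 z : S → Option α, pr (fun y => ∀ a, (fun j => some ((coordSub S κ z j).getD a)) ∈ A y) := by
  obtain ⟨m0, hm0⟩ := h
  set K : ℝ := ((Fintype.card (Line α (Fin (m0+1))) : ℕ) : ℝ) with hK
  have hKpos : 0 < K := by
    have : Nonempty (Line α (Fin (m0+1))) := ⟨Line.diagonal α _⟩
    rw [hK]; exact_mod_cast Fintype.card_pos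
  refine ⟨(1 / K / 4) * (δ / 2 / K), by positivity, fun m => ?_⟩
  obtain ⟨M, hM⟩ := mix (Option α) (Fin (m0+1) ⊕ α) m (1 / K) (by positivity)
  refine ⟨M, fun ι Y _ _ _ hc A hA => ?_⟩
  set f : (ι → Option α) → ℝ := fun w => pr (fun y => ∀ a, (fun j => some ((w j).getD a)) ∈ A y)
    with hf
  have step1 : ∀ φ : ι → Fin (m0+1) ⊕ α, ∃ L : Line α (Fin (m0+1)),
      δ / 2 / K ≤ f (Sum.elim L.idxFun some ∘ φ) := by
    intro φ
    have e1 : δ ≤ 𝔼 y : Y, pr (fun w : Fin (m0+1) → α => (fun j => some (Sum.elim w id (φ j))) ∈ A y) := by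
      unfold pr
      rw [exp_comm]
      have : δ = 𝔼 _w : Fin (m0+1) → α, δ := (exp_const δ).symm
      rw [this]
      exact exp_mono fun w => hA _
    have e2 := markov_half hδ (fun y => pr_le_one _) e1
    have e3 : δ / 2 ≤ pr (fun y : Y => ∃ L : Line α (Fin (m0+1)), ∀ a,
        (fun j => some (Sum.elim (L a) id (φ j))) ∈ A y) := by
      refine e2.trans (pr_mono fun y hy => ?_)
      exact hm0 (Fin (m0+1)) (by simp) {w | (fun j => some (Sum.elim w id (φ j))) ∈ A y} hy
    obtain ⟨L, hL⟩ := pigeon _ (by positivity) e3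
    refine ⟨L, hL.trans (pr_mono fun y hy a => ?_)⟩
    convert hy a using 2 with j
    rcases hj : φ j with i | b
    · simp [hj, Line.apply_def]
    · simp [hj]
  have step2 : (1:ℝ) ≤ pr (fun φ : ι → Fin (m0+1) ⊕ α => ∃ L : Line α (Fin (m0+1)),
      δ / 2 / K ≤ f (Sum.elim L.idxFun some ∘ φ)) := by
    unfold pr
    rw [← exp_const (X := ι → Fin (m0+1) ⊕ α) (1:ℝ)]
    apply exp_mono
    intro φ
    rw [ind_of (step1 φ)]
  obtain ⟨L, hL⟩ := pigeon _ one_pos step2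
  obtain ⟨i0, hi0⟩ := L.proper
  obtain ⟨S, κ, hS, hκ⟩ := hM ι hc (Sum.elim L.idxFun some)
    (fun o => o.elim (Sum.inl i0) Sum.inr) (by rintro (_ | a) <;> simp [hi0])
    {w | δ / 2 / K ≤ f w} hL
  refine ⟨S, κ, hS, ?_⟩
  have : (1 / K / 4) * (δ / 2 / K) ≤ 𝔼 z : S → Option α, (δ / 2 / K) * ind (δ / 2 / K ≤ f (coordSub S κ z)) := by
    rw [exp_mul_left, mul_comm]
    exact mul_le_mul_of_nonneg_left hκ (by positivity)
  refine this.trans (exp_mono fun z => ?_)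
  by_cases hz : δ / 2 / K ≤ f (coordSub S κ z)
  · rw [ind_of hz, mul_one]; exact hz
  · rw [ind_of_not hz, mul_zero]; exact pr_nonneg _

lemma exp_ge_of_one_low {X : Type*} [Fintype X] {f : X → ℝ} {u t s : ℝ} (hub : ∀ x, f x ≤ u)
    (hE : t ≤ 𝔼 x, f x) (hs : (u - t) * Fintype.card X ≤ s) : ∀ x, u - s ≤ f x := by
  intro x
  have : Nonempty X := ⟨x⟩
  rw [Fintype.expect_eq_sum_div_card, le_div_iff₀ (by exact_mod_cast Fintype.card_pos)] at hE
  have h1 : u - f x ≤ ∑ z, (u - f z) :=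
    single_le_sum (f := fun z => u - f z) (fun z _ => by have := hub z; simp; linarith) (mem_univ x)
  rw [sum_sub_distrib] at h1
  simp at h1
  linarith

lemma dhj_step {α : Type} [Fintype α] [Nonempty α] (h : ∀ δ : ℝ, 0 < δ → DHJ α δ) :
    ∀ δ : ℝ, 0 < δ → DHJ (Option α) δ := by
  by_contra hcon
  push Not at hcon
  obtain ⟨δ1, hδ1, hn1⟩ := hcon
  set T : Set ℝ := {δ | 0 < δ ∧ DHJ (Option α) δ} with hT
  have hT1 : (2:ℝ) ∈ T := by
    refine ⟨by norm_num, 0, fun ι _ _ _ A hA => ?_⟩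
    have := pr_le_one (fun x => x ∈ A)
    linarith
  have hlb : ∀ x ∈ T, δ1 ≤ x := by
    intro x hx
    by_contra hlt
    push Not at hlt
    exact hn1 (hx.2.mono hlt.le)
  set δ := sInf T with hδdef
  have hδ : 0 < δ := lt_of_lt_of_le hδ1 (le_csInf ⟨2, hT1⟩ hlb)
  have hup : ∀ γ : ℝ, 0 < γ → DHJ (Option α) (δ + γ) := by
    intro γ hγ
    obtain ⟨x, hx, hlt⟩ := exists_lt_of_csInf_lt ⟨2, hT1⟩ (show sInf T < δ + γ by linarith)
    exact hx.2.mono hlt.le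
  have hdn : ∀ γ : ℝ, 0 < γ → γ < δ → ¬ DHJ (Option α) (δ - γ) := by
    intro γ hγ hγ' hD
    have : δ ≤ δ - γ := csInf_le ⟨δ1, hlb⟩ ⟨by linarith, hD⟩
    linarith
  have H := mdhj_of_dhj h
  obtain ⟨θ, hθ, hpat⟩ := find_pattern (δ / 2) (by positivity) (h (δ / 2 / 2) (by positivity))
  -- parameters
  obtain ⟨ε, hε0, hε1, hε2⟩ : ∃ ε : ℝ, 0 < ε ∧ ε ≤ δ / 2 ∧ 5 * ε ≤ δ * θ :=
    ⟨min (δ / 2) (δ * θ / 5), by positivity, min_le_left _ _, by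
      have := min_le_right (δ / 2) (δ * θ / 5); linarith⟩
  obtain ⟨m, hm⟩ := endgame H δ ε hδ hε0 (hup ε hε0)
  obtain ⟨M, hM⟩ := hpat m
  set Q : ℝ := ((Fintype.card (Fin M → Option α) : ℕ) : ℝ) with hQ
  have hQ1 : 1 ≤ Q := by
    rw [hQ]; exact_mod_cast Fintype.card_pos
  set γ : ℝ := min (ε / 2 / Q) (δ / 2) / 2 with hγ
  have hγ0 : 0 < γ := by positivity
  have hγδ : γ < δ := by
    have := min_le_right (ε / 2 / Q) (δ / 2); rw [hγ]; linarith
  have hγε : (2 * γ) * Q ≤ ε / 2 := by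
    have := min_le_left (ε / 2 / Q) (δ / 2)
    rw [← le_div_iff₀ (by linarith)]; rw [hγ]; linarith
  obtain ⟨d', hd'⟩ := hup γ hγ0
  have hno := hdn γ hγ0 hγδ
  unfold DHJ at hno
  push Not at hno
  obtain ⟨ι, _, _, hι, A, hA, hAL⟩ := hno (M + d')
  obtain ⟨e⟩ := exists_split ι M (by omega)
  set ι₂ := Fin (Fintype.card ι - M)
  set B : (ι₂ → Option α) → Set (Fin M → Option α) := fun y => {x | Sum.elim x y ∘ e.symm ∈ A} with hB
  have hBline : ∀ y, ¬ ∃ L : Line (Option α) (Fin M), ∀ a, L a ∈ B y := by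
    rintro y ⟨L, hL⟩
    obtain ⟨a, ha⟩ := hAL ⟨fun j => Sum.elim L.idxFun (fun j => some (y j)) (e.symm j), by
      obtain ⟨i, hi⟩ := L.proper
      exact ⟨e (Sum.inl i), by simpa using hi⟩⟩
    apply ha
    convert hL a using 1
    simp only [hB, Set.mem_ofPred_eq]
    apply iff_of_eq; apply congrArg (· ∈ A)
    funext j
    simp only [Line.apply_def, Function.comp]
    cases e.symm j <;> rfl
  have hup' : ∀ x, pr (fun y => x ∈ B y) ≤ δ + γ := by
    intro x
    by_contra hlt
    push Not at hlt
    obtain ⟨L, hL⟩ := hd' ι₂ (by simp [ι₂]; omega) {y | x ∈ B y} hlt.le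
    obtain ⟨a, ha⟩ := hAL ⟨fun j => Sum.elim (fun j => some (x j)) L.idxFun (e.symm j), by
      obtain ⟨i, hi⟩ := L.proper
      exact ⟨e (Sum.inr i), by simpa using hi⟩⟩
    apply ha
    convert hL a using 1
    simp only [hB, Set.mem_ofPred_eq]
    apply iff_of_eq; apply congrArg (· ∈ A)
    funext j
    simp only [Line.apply_def, Function.comp]
    cases e.symm j <;> rfl
  have havg : δ - γ ≤ 𝔼 x, pr (fun y => x ∈ B y) := by
    refine hA.trans (le_of_eq ?_)
    unfold pr
    rw [exp_split e]
    rfl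
  have hlow : ∀ x, δ - ε ≤ pr (fun y => x ∈ B y) := by
    intro x
    have := exp_ge_of_one_low hup' havg (s := ε / 2) (by
      rw [← hQ]; linarith) x
    linarith
  obtain ⟨S, κ, hS, hκ⟩ := hM (Fin M) (ι₂ → Option α) (by simp) B (fun x => by
    have := hlow x; linarith)
  -- choose y
  have hE : δ - ε + δ * θ ≤ 𝔼 y, (pr (fun z : S → Option α => coordSub S κ z ∈ B y) +
      δ * pr (fun z : S → Option α => ∀ a, (fun j => some ((coordSub S κ z j).getD a)) ∈ B y)) := by
    rw [exp_add, exp_mul_left]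
    have h1 : δ - ε ≤ 𝔼 y, pr (fun z : S → Option α => coordSub S κ z ∈ B y) := by
      unfold pr
      rw [exp_comm, ← exp_const (X := S → Option α) (δ - ε)]
      exact exp_mono fun z => hlow _
    have h2 : θ ≤ 𝔼 y, pr (fun z : S → Option α => ∀ a, (fun j => some ((coordSub S κ z j).getD a)) ∈ B y) := by
      refine hκ.trans (le_of_eq ?_)
      unfold pr
      rw [exp_comm]
    have := mul_le_mul_of_nonneg_left h2 hδ.le
    linarith
  obtain ⟨y, hy⟩ := exists_ge_of_le_exp (by
    have : 0 < δ * θ := by positivity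
    linarith) hE
  have hfin := hm S (by simpa using hS) {z | coordSub S κ z ∈ B y}
    (fun a => {z | (fun j => some ((coordSub S κ z j).getD a)) ∈ B y}) (by
      intro a z z' hzz hz
      simp only [Set.mem_ofPred_eq] at hz ⊢
      convert hz using 3 with j
      rw [coordSub_apply, coordSub_apply]
      split_ifs with hj
      · exact (hzz _).symm
      · rfl) (by
      rintro ⟨L, hL⟩
      exact hBline y ⟨lineComp (coordSub S κ) L, fun a => by rw [lineComp_apply]; exact hL a⟩) (by
      intro z hz hzC j hj
      have hw : ∃ j, coordSub S κ z j = none := ⟨j, by rw [coordSub_apply]; simp [hj]⟩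
      refine hBline y ⟨wordLine _ hw, ?_⟩
      rintro (_ | a)
      · rw [wordLine_none]; exact hz
      · rw [wordLine_some]; exact hzC a)
  simp only [Set.mem_ofPred_eq] at hfin
  linarith

lemma dhj_fin (k : ℕ) : ∀ δ : ℝ, 0 < δ → DHJ (Fin (k+1)) δ := by
  induction k with
  | zero =>
    intro δ hδ
    refine ⟨1, fun ι _ _ hc A hA => ?_⟩
    have : Nonempty ι := Fintype.card_pos_iff.mp hc
    refine ⟨Line.diagonal _ _, fun a => ?_⟩
    obtain ⟨x, hx⟩ := exists_ge_of_le_exp hδ hA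
    have : x ∈ A := by
      by_contra h
      rw [ind_of_not h] at hx; linarith
    have e : Line.diagonal (Fin (0+1)) ι a = x := by
      funext j; exact Subsingleton.elim (α := Fin 1) _ _
    rw [e]; exact this
  | succ k ih =>
    intro δ hδ
    exact (dhj_step ih δ hδ).congr (finSuccEquiv (k+1)).symm

lemma dhj {α : Type} [Fintype α] [Nonempty α] (δ : ℝ) (hδ : 0 < δ) : DHJ α δ := by
  obtain ⟨k, hk⟩ : ∃ k, Fintype.card α = k + 1 := ⟨_, (Nat.succ_pred_eq_of_pos Fintype.card_pos).symm⟩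
  exact (dhj_fin k δ hδ).congr ((Fintype.equivFinOfCardEq hk).symm)

end HC

namespace HC
open Finset Combinatorics
open scoped BigOperators

section cont
variable {V : Type}

/-- degree of a set in a hypergraph -/
noncomputable def dg (H : Finset (Finset V)) (T : Finset V) : ℕ := (H.filter (fun e => T ⊆ e)).card

/-- the surviving hypergraph -/
noncomputable def surv (H : Finset (Finset V)) (Q : ℝ) (s : ℕ) (S : Finset V)
    (G : Finset (Finset V)) : Finset (Finset V) :=
  H.filter (fun e => Disjoint e S ∧ ∀ T ⊆ e, T.Nonempty → (dg G T : ℝ) < Q ^ (s - T.card))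

/-- invariants of the process -/
structure Inv (X : Finset V) (H : Finset (Finset V)) (Q K δ : ℝ) (s : ℕ) (S : Finset V)
    (G : Finset (Finset V)) : Prop where
  unif : ∀ e ∈ G, e.card = s
  sub : ∀ e ∈ G, e ⊆ X
  bdd : ∀ T : Finset V, T.Nonempty → (dg G T : ℝ) ≤ (1 + K) * Q ^ (s - T.card)
  large : (S.card : ℝ) * (δ * Q ^ s) ≤ (G.card : ℝ)
  gen : ∀ e ∈ G, ∃ v ∈ S, insert v e ∈ H

/-- the link of a vertex -/
noncomputable def lnk (H : Finset (Finset V)) (v : V) : Finset (Finset V) :=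
  (H.filter (fun e => {v} ⊆ e)).image (fun e => e.erase v)

lemma lnk_card (H : Finset (Finset V)) (v : V) : (lnk H v).card = dg H {v} := by
  unfold lnk dg
  apply card_image_of_injOn
  intro e he e' he' h
  simp only [coe_filter, singleton_subset_iff, Set.mem_ofPred_eq] at he he'
  simp only at h
  rw [← insert_erase he.2, h, insert_erase he'.2]

lemma Inv.step {X : Finset V} {H : Finset (Finset V)} {Q K δ : ℝ} {s : ℕ} {S : Finset V}
    {G : Finset (Finset V)} (hs : 1 ≤ s) (hK : 0 ≤ K) (hQ : 1 ≤ Q) (hδ : 0 < δ)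
    (hu : ∀ e ∈ H, e.card = s + 1) (hX : ∀ e ∈ H, e ⊆ X)
    (hb : ∀ T : Finset V, T.Nonempty → (dg H T : ℝ) ≤ K * Q ^ (s + 1 - T.card))
    (h : Inv X H Q K δ s S G) (v : V) (hv : δ * Q ^ s ≤ (dg (surv H Q s S G) {v} : ℝ)) :
    v ∉ S ∧ Inv X H Q K δ s (insert v S) (G ∪ lnk (surv H Q s S G) v) := by
  have hmem : ∀ e ∈ lnk (surv H Q s S G) v, v ∉ e ∧ insert v e ∈ surv H Q s S G := by
    intro e he
    simp only [lnk, mem_image, mem_filter, singleton_subset_iff] at he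
    obtain ⟨e', ⟨he', hv'⟩, rfl⟩ := he
    exact ⟨by simp, by rwa [insert_erase hv']⟩
  have hsH : ∀ e ∈ surv H Q s S G, e ∈ H := fun e he => (mem_filter.mp he).1
  have hcard : ∀ e ∈ lnk (surv H Q s S G) v, e.card = s := by
    intro e he
    obtain ⟨h1, h2⟩ := hmem e he
    have := hu _ (hsH _ h2)
    rw [card_insert_of_notMem h1] at this
    omega
  have hvS : v ∉ S := by
    have : (0:ℝ) < (dg (surv H Q s S G) {v} : ℝ) := lt_of_lt_of_le (by positivity) hv
    have h0 : 0 < dg (surv H Q s S G) {v} := by exact_mod_cast this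
    obtain ⟨e, he⟩ := card_pos.mp h0
    simp only [mem_filter, singleton_subset_iff] at he
    have hd := (mem_filter.mp he.1).2.1
    exact fun hS => (disjoint_left.mp hd he.2 hS)
  refine ⟨hvS, ?_, ?_, ?_, ?_, ?_⟩
  · intro e he
    rcases mem_union.mp he with he | he
    · exact h.unif e he
    · exact hcard e he
  · intro e he
    rcases mem_union.mp he with he | he
    · exact h.sub e he
    · exact (subset_insert v e).trans (hX _ (hsH _ (hmem e he).2))
  · intro T hT
    by_cases hex : ∃ e ∈ lnk (surv H Q s S G) v, T ⊆ e
    · obtain ⟨e, he, hTe⟩ := hex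
      have hlt : (dg G T : ℝ) < Q ^ (s - T.card) :=
        (mem_filter.mp (hmem e he).2).2.2 T (hTe.trans (subset_insert v e)) hT
      have hvT : v ∉ T := fun hh => (hmem e he).1 (hTe hh)
      have h2 : (dg (lnk (surv H Q s S G) v) T : ℝ) ≤ K * Q ^ (s - T.card) := by
        have h3 := hb (insert v T) (insert_nonempty v T)
        rw [card_insert_of_notMem hvT, Nat.add_sub_add_right] at h3
        refine le_trans ?_ h3
        have : dg (lnk (surv H Q s S G) v) T ≤ dg H (insert v T) := by
          unfold dg
          apply card_le_card_of_injOn (fun e => insert v e)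
          · intro e' he'
            simp only [coe_filter, Set.mem_ofPred_eq] at he' ⊢
            exact ⟨hsH _ (hmem e' he'.1).2, insert_subset_insert v he'.2⟩
          · intro e1 h1 e2 h2 h12
            simp only [coe_filter, Set.mem_ofPred_eq] at h1 h2 h12
            rw [← erase_insert (hmem e1 h1.1).1, h12, erase_insert (hmem e2 h2.1).1]
        exact_mod_cast this
      have h4 : dg (G ∪ lnk (surv H Q s S G) v) T ≤ dg G T + dg (lnk (surv H Q s S G) v) T := by
        unfold dg
        rw [filter_union]
        exact card_union_le _ _
      have h5 : (dg (G ∪ lnk (surv H Q s S G) v) T : ℝ) ≤ dg G T + dg (lnk (surv H Q s S G) v) T := by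
        exact_mod_cast h4
      linarith
    · push Not at hex
      have : dg (G ∪ lnk (surv H Q s S G) v) T = dg G T := by
        unfold dg
        rw [filter_union, filter_false_of_mem (s := lnk _ _) hex, union_empty]
      rw [this]
      exact h.bdd T hT
  · have hdisj : Disjoint G (lnk (surv H Q s S G) v) := by
      rw [disjoint_left]
      intro e he he'
      have h1 := hcard e he'
      have h2 : (dg G e : ℝ) < Q ^ (s - e.card) :=
        (mem_filter.mp (hmem e he').2).2.2 e (subset_insert v e) (card_pos.mp (by omega))
      rw [h1, Nat.sub_self, pow_zero] at h2
      have h3 : 0 < dg G e := card_pos.mpr ⟨e, by simp [he]⟩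
      have : dg G e < 1 := by exact_mod_cast h2
      omega
    rw [card_insert_of_notMem hvS, card_union_of_disjoint hdisj, lnk_card]
    push_cast
    have := h.large
    linarith
  · intro e he
    rcases mem_union.mp he with he | he
    · obtain ⟨w, hw, hw'⟩ := h.gen e he
      exact ⟨w, mem_insert_of_mem hw, hw'⟩
    · exact ⟨v, mem_insert_self _ _, hsH _ (hmem e he).2⟩

/-- running the process -/
lemma process [Countable V] {X : Finset V} {H : Finset (Finset V)} {Q K δ : ℝ} {s : ℕ}
    (hs : 1 ≤ s) (hK : 0 ≤ K) (hQ : 1 ≤ Q) (hδ : 0 < δ)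
    (hu : ∀ e ∈ H, e.card = s + 1) (hX : ∀ e ∈ H, e ⊆ X)
    (hb : ∀ T : Finset V, T.Nonempty → (dg H T : ℝ) ≤ K * Q ^ (s + 1 - T.card)) (b : ℕ) :
    ∀ (S0 : Finset V) (G0 : Finset (Finset V)), Inv X H Q K δ s S0 G0 →
    ∃ f : Finset V → Finset V × Finset (Finset V),
      (∀ S, Inv X H Q K δ s (f S).1 (f S).2) ∧
      ∀ I : Finset V, S0 ⊆ I → ∃ S ⊆ I, S.card ≤ b ∧ Disjoint S S0 ∧ (f S).1 ⊆ I ∧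
        (S0.card + b ≤ (f S).1.card ∨
          ∀ v ∈ I, (dg (surv H Q s (f S).1 (f S).2) {v} : ℝ) < δ * Q ^ s) := by
  obtain ⟨rk, hrk⟩ := exists_injective_nat V
  induction b with
  | zero =>
    intro S0 G0 h
    refine ⟨fun _ => (S0, G0), fun _ => h, fun I hI => ⟨∅, by simp, by simp, by simp, hI, Or.inl (by simp)⟩⟩
  | succ b ih =>
    intro S0 G0 h
    set el : V → Prop := fun v => δ * Q ^ s ≤ (dg (surv H Q s S0 G0) {v} : ℝ) with hel
    have key : ∀ v, ∃ f : Finset V → Finset V × Finset (Finset V), el v →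
      (∀ S, Inv X H Q K δ s (f S).1 (f S).2) ∧
      ∀ I : Finset V, insert v S0 ⊆ I → ∃ S ⊆ I, S.card ≤ b ∧ Disjoint S (insert v S0) ∧ (f S).1 ⊆ I ∧
        ((insert v S0).card + b ≤ (f S).1.card ∨
          ∀ v ∈ I, (dg (surv H Q s (f S).1 (f S).2) {v} : ℝ) < δ * Q ^ s) := by
      intro v
      by_cases hv : el v
      · obtain ⟨f, hf⟩ := ih _ _ (h.step hs hK hQ hδ hu hX hb v hv).2
        exact ⟨f, fun _ => hf⟩
      · exact ⟨fun _ => (∅, ∅), fun h => absurd h hv⟩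
    choose F hF using key
    have hmin : ∀ S : Finset V, (∃ v ∈ S, el v) → ∃ v ∈ S, el v ∧ ∀ w ∈ S, el w → rk v ≤ rk w := by
      rintro S ⟨v, hv, hv'⟩
      obtain ⟨w, hw, hw'⟩ := exists_min_image (S.filter el) rk ⟨v, by simp [hv, hv']⟩
      rw [mem_filter] at hw
      exact ⟨w, hw.1, hw.2, fun u hu hu' => hw' u (by simp [hu, hu'])⟩
    refine ⟨fun S => if hS : ∃ v ∈ S, el v then
      F (hmin S hS).choose (S.erase (hmin S hS).choose) else (S0, G0), ?_, ?_⟩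
    · intro S
      by_cases hS : ∃ v ∈ S, el v
      · simp only [dif_pos hS]
        exact (hF _ (hmin S hS).choose_spec.2.1).1 _
      · simp only [dif_neg hS]; exact h
    · intro I hI
      by_cases hIe : ∃ v ∈ I, el v
      · obtain ⟨v, hvI, hve, hvm⟩ := hmin I hIe
        have hvS0 := (h.step hs hK hQ hδ hu hX hb v hve).1
        obtain ⟨S, hSI, hSc, hSd, hS1, hS2⟩ := (hF v hve).2 I (insert_subset hvI hI)
        rw [disjoint_insert_right] at hSd
        have hex : ∃ w ∈ insert v S, el w := ⟨v, mem_insert_self _ _, hve⟩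
        have hch : (hmin _ hex).choose = v := by
          obtain ⟨h1, h2, h3⟩ := (hmin _ hex).choose_spec
          apply hrk
          apply le_antisymm
          · exact h3 v (mem_insert_self _ _) hve
          · exact hvm _ (insert_subset hvI hSI h1) h2
        refine ⟨insert v S, insert_subset hvI hSI, ?_, ?_, ?_⟩
        · rw [card_insert_of_notMem hSd.1]; omega
        · rw [disjoint_insert_left]; exact ⟨hvS0, hSd.2⟩
        · simp only [dif_pos hex]
          rw [hch, erase_insert hSd.1]
          refine ⟨hS1, ?_⟩
          rw [card_insert_of_notMem hvS0] at hS2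
          rcases hS2 with h | h
          · left; omega
          · right; exact h
      · refine ⟨∅, by simp, by simp, by simp, ?_⟩
        have : ¬ ∃ v ∈ (∅ : Finset V), el v := by simp
        simp only [dif_neg this]
        refine ⟨hI, Or.inr fun v hv => ?_⟩
        by_contra hcon
        exact hIe ⟨v, hv, not_lt.mp hcon⟩

end cont
end HC

namespace HC
open Finset Combinatorics
open scoped BigOperators

section cont
variable {V : Type}

lemma lost {X : Finset V} {H : Finset (Finset V)} {Q K δ : ℝ} {s : ℕ} {S : Finset V}
    {G : Finset (Finset V)} (hK : 0 ≤ K) (hQ : 1 ≤ Q)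
    (hX : ∀ e ∈ H, e ⊆ X)
    (hb : ∀ T : Finset V, T.Nonempty → (dg H T : ℝ) ≤ K * Q ^ (s + 1 - T.card))
    (h : Inv X H Q K δ s S G) :
    (H.card : ℝ) ≤ (surv H Q s S G).card + S.card * (K * Q ^ s) + K * Q * (2 ^ s * G.card) := by
  set sat : Finset (Finset V) := X.powerset.filter
    (fun T => T.Nonempty ∧ Q ^ (s - T.card) ≤ (dg G T : ℝ)) with hsat
  have hcov : H ⊆ surv H Q s S G ∪ (S.biUnion (fun v => H.filter (fun e => {v} ⊆ e)) ∪
      sat.biUnion (fun T => H.filter (fun e => T ⊆ e))) := by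
    intro e he
    by_cases h1 : e ∈ surv H Q s S G
    · exact mem_union_left _ h1
    apply mem_union_right
    by_cases hd : Disjoint e S
    · apply mem_union_right
      have : ∃ T ⊆ e, T.Nonempty ∧ Q ^ (s - T.card) ≤ (dg G T : ℝ) := by
        by_contra hcon
        push Not at hcon
        exact h1 (mem_filter.mpr ⟨he, hd, hcon⟩)
      obtain ⟨T, hTe, hT, hT'⟩ := this
      rw [mem_biUnion]
      refine ⟨T, ?_, by simp [he, hTe]⟩
      simp only [hsat, mem_filter, mem_powerset]
      exact ⟨hTe.trans (hX e he), hT, hT'⟩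
    · apply mem_union_left
      rw [not_disjoint_iff] at hd
      obtain ⟨v, hve, hvS⟩ := hd
      rw [mem_biUnion]
      exact ⟨v, hvS, by simp [he, hve]⟩
  have h1 : H.card ≤ (surv H Q s S G).card + (∑ v ∈ S, dg H {v} + ∑ T ∈ sat, dg H T) :=
    (card_le_card hcov).trans ((card_union_le _ _).trans (Nat.add_le_add_left
      ((card_union_le _ _).trans (Nat.add_le_add card_biUnion_le card_biUnion_le)) _))
  have h2 : ∑ v ∈ S, (dg H {v} : ℝ) ≤ S.card * (K * Q ^ s) := by
    rw [← nsmul_eq_mul]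
    apply sum_le_card_nsmul
    intro v _
    simpa using hb {v} (singleton_nonempty v)
  have h3 : ∑ T ∈ sat, dg G T ≤ 2 ^ s * G.card := by
    unfold dg
    calc ∑ T ∈ sat, (G.filter (fun e => T ⊆ e)).card
        = ∑ e ∈ G, (sat.filter (fun T => T ⊆ e)).card := by
          exact sum_card_bipartiteAbove_eq_sum_card_bipartiteBelow (fun T e : Finset V => T ⊆ e)
      _ ≤ ∑ e ∈ G, 2 ^ s := by
          apply sum_le_sum
          intro e he
          rw [← h.unif e he, ← card_powerset]
          apply card_le_card
          intro T hT
          exact mem_powerset.mpr (mem_filter.mp hT).2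
      _ = 2 ^ s * G.card := by rw [sum_const, smul_eq_mul, mul_comm]
  have h4 : ∑ T ∈ sat, (dg H T : ℝ) ≤ K * Q * (2 ^ s * G.card) := by
    have : ∑ T ∈ sat, (dg H T : ℝ) ≤ ∑ T ∈ sat, K * Q * (dg G T : ℝ) := by
      apply sum_le_sum
      intro T hT
      simp only [hsat, mem_filter] at hT
      refine (hb T hT.2.1).trans ?_
      have e1 : Q ^ (s + 1 - T.card) ≤ Q * Q ^ (s - T.card) := by
        rw [← pow_succ']
        exact pow_le_pow_right₀ hQ (by omega)
      have e2 : Q * Q ^ (s - T.card) ≤ Q * (dg G T : ℝ) :=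
        mul_le_mul_of_nonneg_left hT.2.2 (by linarith)
      rw [mul_assoc]
      exact mul_le_mul_of_nonneg_left (e1.trans e2) hK
    refine this.trans ?_
    rw [← mul_sum]
    apply mul_le_mul_of_nonneg_left _ (by positivity)
    exact_mod_cast h3
  have h5 : (H.card : ℝ) ≤ (surv H Q s S G).card + (∑ v ∈ S, (dg H {v} : ℝ) + ∑ T ∈ sat, (dg H T : ℝ)) := by
    exact_mod_cast h1
  linarith

/-- number of low degree vertices -/
lemma low_deg {X : Finset V} {H : Finset (Finset V)} {N D c K : ℝ} (hD : 0 < D) (hK : 0 < K) (hc : 0 < c)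
    (hX : ∀ e ∈ H, e ⊆ X) (hne : ∀ e ∈ H, e.Nonempty) (hXN : (X.card : ℝ) ≤ N)
    (hdeg : ∀ v, (dg H {v} : ℝ) ≤ K * D) (hH : c * D * N ≤ H.card) :
    ((X.filter (fun v => (dg H {v} : ℝ) < c / 2 * D)).card : ℝ) ≤ X.card - c / (2 * K) * N := by
  have h1 : H.card ≤ ∑ v ∈ X, dg H {v} := by
    unfold dg
    refine (card_le_card ?_).trans card_biUnion_le
    intro e he
    obtain ⟨v, hv⟩ := hne e he
    exact mem_biUnion.mpr ⟨v, hX e he hv, by simp [he, hv]⟩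
  have h1' : (H.card : ℝ) ≤ ∑ v ∈ X, (dg H {v} : ℝ) := by exact_mod_cast h1
  rw [← sum_filter_add_sum_filter_not X (fun v => (dg H {v} : ℝ) < c / 2 * D)] at h1'
  have hcard := card_filter_add_card_filter_not (s := X) (fun v => (dg H {v} : ℝ) < c / 2 * D)
  set L := X.filter (fun v => (dg H {v} : ℝ) < c / 2 * D)
  set R := X.filter (fun v => ¬ (dg H {v} : ℝ) < c / 2 * D)
  have h2 : ∑ v ∈ L, (dg H {v} : ℝ) ≤ L.card • (c / 2 * D) :=
    sum_le_card_nsmul _ _ _ fun v hv => (mem_filter.mp hv).2.le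
  have h3 : ∑ v ∈ R, (dg H {v} : ℝ) ≤ R.card • (K * D) :=
    sum_le_card_nsmul _ _ _ fun v hv => hdeg v
  rw [nsmul_eq_mul] at h2 h3
  have hc' : (L.card : ℝ) + R.card = X.card := by exact_mod_cast hcard
  have hLN : (L.card : ℝ) ≤ N := by
    have : (0:ℝ) ≤ R.card := by positivity
    linarith
  have h4 : c * N ≤ N * (c / 2) + R.card * K := by
    have : D * (c * N) ≤ D * (N * (c / 2) + R.card * K) := by
      have : (L.card : ℝ) * (c / 2 * D) ≤ N * (c / 2 * D) := by gcongr
      nlinarith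
    exact le_of_mul_le_mul_left this hD
  have h5 : c / (2 * K) * N ≤ R.card := by
    rw [div_mul_eq_mul_div, div_le_iff₀ (by positivity)]
    linarith
  linarith

/-- one shrinking step -/
lemma shrink [Countable V] (s : ℕ) : ∀ (K c : ℝ), 0 < K → 0 < c → ∃ (B ε : ℝ), 0 < B ∧ 0 < ε ∧
    ∀ (X : Finset V) (H : Finset (Finset V)) (Q N : ℝ), 1 ≤ Q → Q ≤ N → (X.card : ℝ) ≤ N →
      (∀ e ∈ H, e.card = s + 1) → (∀ e ∈ H, e ⊆ X) →
      (∀ T : Finset V, T.Nonempty → (dg H T : ℝ) ≤ K * Q ^ (s + 1 - T.card)) →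
      c * Q ^ s * N ≤ H.card →
      ∃ f : List (Finset V) → Finset V, (∀ l, f l ⊆ X ∧ ((f l).card : ℝ) ≤ X.card - ε * N) ∧
        ∀ I ⊆ X, (∀ e ∈ H, ¬ e ⊆ I) → ∃ l : List (Finset V), l.length = s ∧
          (∀ S ∈ l, S ⊆ I ∧ (S.card : ℝ) ≤ B * (N / Q)) ∧ I ⊆ f l := by
  induction s with
  | zero =>
    intro K c hK hc
    refine ⟨1, c, one_pos, hc, fun X H Q N hQ hQN hXN hu hX hb hH => ?_⟩
    refine ⟨fun _ => X.filter (fun v => {v} ∉ H), fun l => ⟨filter_subset _ _, ?_⟩, ?_⟩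
    · have hcard := card_filter_add_card_filter_not (s := X) (fun v => {v} ∈ H)
      have : H.card ≤ (X.filter (fun v => {v} ∈ H)).card := by
        have : H ⊆ (X.filter (fun v => {v} ∈ H)).image (fun v => {v}) := by
          intro e he
          obtain ⟨v, rfl⟩ := card_eq_one.mp (hu e he)
          exact mem_image.mpr ⟨v, mem_filter.mpr ⟨hX _ he (mem_singleton_self v), he⟩, rfl⟩
        exact (card_le_card this).trans card_image_le
      have h1 : (H.card : ℝ) ≤ (X.filter (fun v => {v} ∈ H)).card := by exact_mod_cast this
      have h2 : ((X.filter (fun v => {v} ∈ H)).card : ℝ) + (X.filter (fun v => {v} ∉ H)).card = X.card := by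
        exact_mod_cast hcard
      simp only [pow_zero, mul_one] at hH
      linarith
    · intro I hI hind
      refine ⟨[], rfl, by simp, fun v hv => ?_⟩
      exact mem_filter.mpr ⟨hI hv, fun hh => hind _ hh (by simpa using hv)⟩
  | succ s ih =>
    intro K c hK hc
    set δ : ℝ := c / 2 / 2 with hδdef
    have hδ : 0 < δ := by positivity
    set c1 : ℝ := (c / 2) / (K / δ + K * 2 ^ (s + 1)) with hc1def
    have hc1 : 0 < c1 := by positivity
    obtain ⟨B', ε', hB', hε', IH⟩ := ih (1 + K) c1 (by linarith) hc1
    refine ⟨max B' (c1 / δ + 1), min ε' (c / 2 / (2 * K)), by positivity, by positivity, ?_⟩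
    intro X H Q N hQ hQN hXN hu hX hb hH
    have hQ0 : 0 < Q := by linarith
    have hN0 : 0 < N := by linarith
    have hI0 : Inv X H Q K δ (s+1) ∅ ∅ := by
      refine ⟨by simp, by simp, ?_, by simp, by simp⟩
      intro T _
      simp only [dg, filter_empty, card_empty, Nat.cast_zero]
      positivity
    set b : ℕ := ⌈c1 / δ * (N / Q)⌉₊ with hbdef
    have hb1 : c1 / δ * (N / Q) ≤ b := Nat.le_ceil _
    have hb2 : (b : ℝ) ≤ (c1 / δ + 1) * (N / Q) := by
      have h1 : (b : ℝ) < c1 / δ * (N / Q) + 1 := Nat.ceil_lt_add_one (by positivity)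
      have h2 : 1 ≤ N / Q := by rw [le_div_iff₀ hQ0]; linarith
      linarith
    obtain ⟨f, hfI, hf⟩ := process (by omega) hK.le hQ hδ hu hX hb b ∅ ∅ hI0
    have key : ∀ S : Finset V, ∃ g : List (Finset V) → Finset V,
        (∀ l, g l ⊆ X ∧ ((g l).card : ℝ) ≤ X.card - (min ε' (c / 2 / (2 * K))) * N) ∧
        ∀ I ⊆ X, (∀ e ∈ H, ¬ e ⊆ I) → (f S).1 ⊆ I →
          (b ≤ (f S).1.card ∨
          ∀ v ∈ I, (dg (surv H Q (s+1) (f S).1 (f S).2) {v} : ℝ) < δ * Q ^ (s+1)) →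
          ∃ l : List (Finset V), l.length = s ∧
          (∀ S ∈ l, S ⊆ I ∧ (S.card : ℝ) ≤ B' * (N / Q)) ∧ I ⊆ g l := by
      intro S
      have hinv := hfI S
      by_cases hbig : c1 * Q ^ s * N ≤ (f S).2.card
      · obtain ⟨g, hg1, hg2⟩ := IH X (f S).2 Q N hQ hQN hXN hinv.unif hinv.sub hinv.bdd hbig
        refine ⟨g, fun l => ⟨(hg1 l).1, (hg1 l).2.trans ?_⟩, fun I hI hind hSI _ => hg2 I hI ?_⟩
        · have := min_le_left ε' (c / 2 / (2 * K))
          nlinarith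
        · intro e he heI
          obtain ⟨v, hv, hve⟩ := hinv.gen e he
          exact hind _ hve (insert_subset (hSI hv) heI)
      · push Not at hbig
        set S1 := (f S).1
        set G1 := (f S).2
        have hS1 : (S1.card : ℝ) * δ * Q ≤ c1 * N := by
          have h1 := hinv.large
          have h2 : (S1.card : ℝ) * (δ * Q ^ (s+1)) < c1 * Q ^ s * N := lt_of_le_of_lt h1 hbig
          have h3 : Q ^ s * ((S1.card : ℝ) * δ * Q) ≤ Q ^ s * (c1 * N) := by
            rw [pow_succ] at h2; nlinarith
          exact le_of_mul_le_mul_left h3 (by positivity)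
        have hlost := lost hK.le hQ hX hb hinv
        have hsurv : c / 2 * Q ^ (s+1) * N ≤ (surv H Q (s+1) S1 G1).card := by
          have e1 : (S1.card : ℝ) * (K * Q ^ (s+1)) ≤ c1 / δ * K * (Q ^ (s+1) * N) := by
            have : (S1.card : ℝ) ≤ c1 / δ * N := by
              rw [div_mul_eq_mul_div, le_div_iff₀ hδ]
              have : (0:ℝ) ≤ S1.card * δ := by positivity
              nlinarith
            calc (S1.card : ℝ) * (K * Q ^ (s+1)) ≤ (c1 / δ * N) * (K * Q ^ (s+1)) := by gcongr
              _ = _ := by ring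
          have e2 : K * Q * (2 ^ (s+1) * (G1.card : ℝ)) ≤ K * 2 ^ (s+1) * c1 * (Q ^ (s+1) * N) := by
            calc K * Q * (2 ^ (s+1) * (G1.card : ℝ)) ≤ K * Q * (2 ^ (s+1) * (c1 * Q ^ s * N)) := by
                  gcongr
              _ = _ := by ring
          have e3 : c1 * (K / δ + K * 2 ^ (s + 1)) = c / 2 := by
            rw [hc1def]; field_simp
          have e4 : c1 / δ * K * (Q ^ (s+1) * N) + K * 2 ^ (s+1) * c1 * (Q ^ (s+1) * N) =
              c / 2 * (Q ^ (s+1) * N) := by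
            rw [← e3]; ring
          nlinarith
        have hsub : ∀ e ∈ surv H Q (s+1) S1 G1, e ∈ H := fun e he => (mem_filter.mp he).1
        have hlow := low_deg (X := X) (H := surv H Q (s+1) S1 G1) (N := N) (D := Q ^ (s+1))
          (c := c / 2) (K := K) (by positivity) hK (by positivity) (fun e he => hX e (hsub e he))
          (fun e he => card_pos.mp (by rw [hu e (hsub e he)]; omega)) hXN (fun v => by
            have h1 := hb {v} (singleton_nonempty v)
            rw [card_singleton, Nat.add_sub_cancel] at h1
            refine le_trans ?_ h1
            have : dg (surv H Q (s+1) S1 G1) {v} ≤ dg H {v} :=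
              card_le_card (filter_subset_filter _ (filter_subset _ _))
            exact_mod_cast this) hsurv
        refine ⟨fun _ => X.filter (fun v => (dg (surv H Q (s+1) S1 G1) {v} : ℝ) < c / 2 / 2 * Q ^ (s+1)),
          fun l => ⟨filter_subset _ _, hlow.trans ?_⟩, ?_⟩
        · have := min_le_right ε' (c / 2 / (2 * K))
          nlinarith
        · intro I hI hind hSI hor
          rcases hor with hor | hor
          · exfalso
            have h1 : c1 / δ * (N / Q) ≤ S1.card := hb1.trans (by exact_mod_cast hor)
            have h2 := hinv.large
            have h3 : c1 * Q ^ s * N ≤ (S1.card : ℝ) * (δ * Q ^ (s+1)) := by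
              calc c1 * Q ^ s * N = c1 / δ * (N / Q) * (δ * Q ^ (s+1)) := by
                    rw [pow_succ]; field_simp
                _ ≤ _ := by gcongr
            linarith
          · exact ⟨List.replicate s ∅, by simp, fun T hT => by
              rw [List.eq_of_mem_replicate hT]
              exact ⟨by simp, by simp; positivity⟩, fun v hv => mem_filter.mpr ⟨hI hv, hor v hv⟩⟩
    choose g hg1 hg2 using key
    refine ⟨fun l => g (l.headD ∅) l.tail, fun l => hg1 _ _, ?_⟩
    intro I hI hind
    obtain ⟨S, hSI, hSb, _, hS1, hS2⟩ := hf I (by simp)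
    obtain ⟨l, hl1, hl2, hl3⟩ := hg2 S I hI hind hS1 (by simpa using hS2)
    refine ⟨S :: l, by simp [hl1], ?_, hl3⟩
    intro T hT
    rcases List.mem_cons.mp hT with rfl | hT
    · refine ⟨hSI, ?_⟩
      calc (T.card : ℝ) ≤ b := by exact_mod_cast hSb
        _ ≤ (c1 / δ + 1) * (N / Q) := hb2
        _ ≤ _ := by gcongr; exact le_max_right _ _
    · refine ⟨(hl2 T hT).1, (hl2 T hT).2.trans ?_⟩
      gcongr; exact le_max_left _ _

/-- iterated shrinking -/
lemma containers [Countable V] (s : ℕ) (K c β : ℝ) (hK : 0 < K) (hc : 0 < c) :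
    ∃ (B : ℝ) (t : ℕ), 0 < B ∧
    ∀ (X : Finset V) (H : Finset (Finset V)) (Q N : ℝ), 1 ≤ Q → Q ≤ N → (X.card : ℝ) ≤ N →
      (∀ e ∈ H, e.card = s + 1) →
      (∀ T : Finset V, T.Nonempty → (dg H T : ℝ) ≤ K * Q ^ (s + 1 - T.card)) →
      (∀ Y ⊆ X, β * N ≤ Y.card → c * Q ^ s * N ≤ (H.filter (fun e => e ⊆ Y)).card) →
      ∃ f : List (Finset V) → Finset V, (∀ l, f l ⊆ X ∧ ((f l).card : ℝ) ≤ max (β * N) 0) ∧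
        ∀ I ⊆ X, (∀ e ∈ H, ¬ e ⊆ I) → ∃ l : List (Finset V), l.length = t ∧
          (∀ S ∈ l, S ⊆ I ∧ (S.card : ℝ) ≤ B * (N / Q)) ∧ I ⊆ f l := by
  obtain ⟨B, ε, hB, hε, hshr⟩ := shrink (V := V) s K c hK hc
  obtain ⟨t, ht⟩ := exists_nat_ge (1 / ε)
  refine ⟨B, t * s, hB, fun X H Q N hQ hQN hXN hu hb hsup => ?_⟩
  have hQ0 : 0 < Q := by linarith
  have hN0 : 0 < N := by linarith
  have main : ∀ t : ℕ, ∀ Y ⊆ X, ∃ f : List (Finset V) → Finset V,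
      (∀ l, f l ⊆ Y ∧ ((f l).card : ℝ) ≤ max (β * N) (Y.card - t * ε * N)) ∧
        ∀ I ⊆ Y, (∀ e ∈ H, ¬ e ⊆ I) → ∃ l : List (Finset V), l.length = t * s ∧
          (∀ S ∈ l, S ⊆ I ∧ (S.card : ℝ) ≤ B * (N / Q)) ∧ I ⊆ f l := by
    intro t
    induction t with
    | zero =>
      intro Y hY
      exact ⟨fun _ => Y, fun _ => ⟨Subset.rfl, by simp⟩, fun I hI _ => ⟨[], by simp, by simp, hI⟩⟩
    | succ t ih =>
      intro Y hY
      by_cases hYb : β * N ≤ Y.card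
      · obtain ⟨f1, hf1, hf1'⟩ := hshr Y (H.filter (fun e => e ⊆ Y)) Q N hQ hQN
          (le_trans (by exact_mod_cast card_le_card hY) hXN)
          (fun e he => hu e (mem_filter.mp he).1) (fun e he => (mem_filter.mp he).2)
          (fun T hT => le_trans (by
            have : dg (H.filter (fun e => e ⊆ Y)) T ≤ dg H T :=
              card_le_card (filter_subset_filter _ (filter_subset _ _))
            exact_mod_cast this) (hb T hT)) (hsup Y hY hYb)
        have key := fun l => ih (f1 l) ((hf1 l).1.trans hY)
        choose g hg1 hg2 using key
        refine ⟨fun l => g (l.take s) (l.drop s), fun l => ⟨(hg1 _ _).1.trans (hf1 _).1,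
          (hg1 _ _).2.trans ?_⟩, ?_⟩
        · apply max_le_max le_rfl
          have := (hf1 (l.take s)).2
          push_cast
          linarith
        · intro I hI hind
          obtain ⟨l1, h1, h2, h3⟩ := hf1' I hI (fun e he => hind e (mem_filter.mp he).1)
          obtain ⟨l2, h1', h2', h3'⟩ := hg2 l1 I h3 hind
          refine ⟨l1 ++ l2, by rw [List.length_append, h1, h1']; ring, ?_, ?_⟩
          · intro S hS
            rcases List.mem_append.mp hS with h | h
            · exact h2 S h
            · exact h2' S h
          · show I ⊆ g (List.take s (l1 ++ l2)) (List.drop s (l1 ++ l2))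
            rw [List.take_left' h1, List.drop_left' h1]; exact h3'
      · refine ⟨fun _ => Y, fun _ => ⟨Subset.rfl, le_max_of_le_left (not_le.mp hYb).le⟩,
          fun I hI _ => ⟨List.replicate ((t+1) * s) ∅, by simp, fun T hT => ?_, hI⟩⟩
        rw [List.eq_of_mem_replicate hT]
        exact ⟨by simp, by simp; positivity⟩
  obtain ⟨f, hf1, hf2⟩ := main t X Subset.rfl
  refine ⟨f, fun l => ⟨(hf1 l).1, (hf1 l).2.trans (max_le_max le_rfl ?_)⟩, hf2⟩
  have : 1 ≤ t * ε := by rwa [div_le_iff₀ hε] at ht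
  nlinarith

end cont
end HC

namespace HC
open Finset Combinatorics
open scoped BigOperators

lemma choose_ratio_pow (N P s : ℕ) (a : ℝ) (ha : 0 < a) (hs : s ≤ P) (h : (N : ℝ) ≤ a * ((P : ℝ) + 1 - s)) :
    (N.choose s : ℝ) ≤ a ^ s * P.choose s := by
  have h1 : N.descFactorial s ≤ N ^ s := Nat.descFactorial_le_pow N s
  have h2 : (P + 1 - s) ^ s ≤ P.descFactorial s := Nat.pow_sub_le_descFactorial P s
  rw [Nat.descFactorial_eq_factorial_mul_choose] at h1 h2
  have h1' : (s.factorial : ℝ) * N.choose s ≤ (N : ℝ) ^ s := by exact_mod_cast h1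
  have h2' : ((P : ℝ) + 1 - s) ^ s ≤ (s.factorial : ℝ) * P.choose s := by
    have : (((P + 1 - s) ^ s : ℕ) : ℝ) ≤ (s.factorial : ℝ) * P.choose s := by exact_mod_cast h2
    rw [Nat.cast_pow, Nat.cast_sub (by omega)] at this
    push_cast at this
    exact this
  have h3 : (N : ℝ) ^ s ≤ a ^ s * ((P : ℝ) + 1 - s) ^ s := by
    rw [← mul_pow]
    exact pow_le_pow_left₀ (by positivity) h s
  have hf : (0:ℝ) < s.factorial := by exact_mod_cast Nat.factorial_pos s
  have h4 : (s.factorial : ℝ) * N.choose s ≤ s.factorial * (a ^ s * P.choose s) := by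
    calc _ ≤ _ := h1'
      _ ≤ _ := h3
      _ ≤ a ^ s * ((s.factorial : ℝ) * P.choose s) := by gcongr
      _ = _ := by ring
  exact le_of_mul_le_mul_left h4 hf

lemma choose_ratio_small (M R : ℕ) (ρ : ℝ) (h0 : 0 ≤ ρ) (h1 : ρ ≤ 1) (h : (M : ℝ) ≤ ρ * R) (j : ℕ) :
    (M.choose j : ℝ) ≤ ρ ^ j * R.choose j := by
  induction j with
  | zero => simp
  | succ j ih =>
    have hMR : M ≤ R := by
      have : (M : ℝ) ≤ R := h.trans (by nlinarith [(Nat.cast_nonneg R : (0:ℝ) ≤ R)])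
      exact_mod_cast this
    by_cases hj : M ≤ j
    · rw [Nat.choose_eq_zero_of_lt (by omega)]
      simp only [Nat.cast_zero]; positivity
    · push Not at hj
      have e1 : (M.choose (j+1) : ℝ) * (j + 1) = M.choose j * ((M : ℝ) - j) := by
        have := Nat.choose_succ_right_eq M j
        rw [← Nat.cast_sub hj.le]; exact_mod_cast this
      have e2 : (R.choose (j+1) : ℝ) * (j + 1) = R.choose j * ((R : ℝ) - j) := by
        have := Nat.choose_succ_right_eq R j
        rw [← Nat.cast_sub (by omega)]; exact_mod_cast this
      have e3 : (M : ℝ) - j ≤ ρ * (R - j) := by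
        have : (0:ℝ) ≤ j := by positivity
        nlinarith
      have e4 : (0:ℝ) ≤ (M : ℝ) - j := by
        have : (j : ℝ) < M := by exact_mod_cast hj
        linarith
      have : (M.choose (j+1) : ℝ) * (j + 1) ≤ (ρ ^ (j+1) * R.choose (j+1)) * (j + 1) := by
        rw [e1, mul_assoc, e2]
        calc (M.choose j : ℝ) * ((M : ℝ) - j) ≤ (ρ ^ j * R.choose j) * (ρ * (R - j)) := by
              apply mul_le_mul ih e3 e4 (by positivity)
          _ = _ := by ring
      exact le_of_mul_le_mul_right this (by positivity)

lemma numeric (β : ℝ) (hβ : 0 < β) (N P M m q t L : ℕ) (hM : (M : ℝ) ≤ β * N / 256)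
    (hP : β * N / 2 ≤ P) (hmM : m ≤ M) (hq : 2 * q ≤ m) (hL : 2 ^ t * (4 / β) ≤ 2 ^ L)
    (hLq : L * q ≤ m) :
    ∑ s ∈ range (q + 1), N.choose s * (2 ^ s) ^ t * M.choose (m - s) ≤ P.choose m := by
  have hMr : (m : ℝ) ≤ M := by exact_mod_cast hmM
  have hN0 : (0:ℝ) ≤ β * N := by positivity
  have term : ∀ s ∈ range (q + 1), ((N.choose s * (2 ^ s) ^ t * M.choose (m - s) : ℕ) : ℝ) ≤
      (1 / 2) ^ m * P.choose m := by
    intro s hs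
    have hsq : s ≤ q := by simpa [Nat.lt_succ_iff] using hs
    have hsm : s ≤ m := by omega
    have hsr : (s : ℝ) ≤ m := by exact_mod_cast hsm
    have hmP : m ≤ P := by
      have : (m : ℝ) ≤ P := by linarith
      exact_mod_cast this
    have a1 := choose_ratio_pow N P s (4 / β) (by positivity) (by omega) (by
      have : β * N / 4 ≤ (P : ℝ) + 1 - s := by linarith
      rw [div_mul_eq_mul_div, le_div_iff₀ hβ]
      linarith)
    have a2 := choose_ratio_small M (P - s) (1 / 64) (by norm_num) (by norm_num) (by
      rw [Nat.cast_sub (by omega)]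
      linarith) (m - s)
    have a3 : (P.choose s : ℝ) * (P - s).choose (m - s) ≤ P.choose m * 2 ^ m := by
      have h1 := Nat.choose_mul (n := P) (k := m) (s := s) hsm
      have h2 : m.choose s ≤ 2 ^ m := Nat.choose_le_two_pow m s
      have h3 : P.choose s * (P - s).choose (m - s) ≤ P.choose m * 2 ^ m := by
        rw [← h1]; exact Nat.mul_le_mul_left _ h2
      exact_mod_cast h3
    have a4 : (4 / β) ^ s * ((2:ℝ) ^ s) ^ t ≤ 2 ^ m := by
      calc (4 / β) ^ s * ((2:ℝ) ^ s) ^ t = (2 ^ t * (4 / β)) ^ s := by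
            rw [mul_pow, ← pow_mul, ← pow_mul, mul_comm t s]; ring
        _ ≤ (2 ^ L) ^ s := pow_le_pow_left₀ (by positivity) hL s
        _ = 2 ^ (L * s) := by rw [pow_mul]
        _ ≤ 2 ^ m := pow_le_pow_right₀ (by norm_num) ((Nat.mul_le_mul_left L hsq).trans hLq)
    have a5 : (1 / 64 : ℝ) ^ (m - s) ≤ (1 / 8) ^ m := by
      have : (1 / 64 : ℝ) = (1 / 8) ^ 2 := by norm_num
      rw [this, ← pow_mul]
      exact pow_le_pow_of_le_one (by norm_num) (by norm_num) (by omega)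
    push_cast
    calc (N.choose s : ℝ) * (2 ^ s) ^ t * M.choose (m - s)
        ≤ ((4 / β) ^ s * P.choose s) * (2 ^ s) ^ t * ((1 / 64) ^ (m - s) * (P - s).choose (m - s)) := by
          gcongr
      _ = ((4 / β) ^ s * ((2:ℝ) ^ s) ^ t) * (1 / 64) ^ (m - s) * ((P.choose s : ℝ) * (P - s).choose (m - s)) := by
          ring
      _ ≤ 2 ^ m * (1 / 8) ^ m * (P.choose m * 2 ^ m) := by gcongr
      _ = (2 * (1 / 8) * 2) ^ m * P.choose m := by rw [mul_pow, mul_pow]; ring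
      _ = (1 / 2) ^ m * P.choose m := by norm_num
  have hsum : ((∑ s ∈ range (q + 1), N.choose s * (2 ^ s) ^ t * M.choose (m - s) : ℕ) : ℝ) ≤
      (q + 1) * ((1 / 2) ^ m * P.choose m) := by
    rw [Nat.cast_sum]
    refine (sum_le_card_nsmul _ _ _ term).trans ?_
    rw [card_range, nsmul_eq_mul]; push_cast; exact le_rfl
  have hq2 : ((q : ℝ) + 1) * (1 / 2) ^ m ≤ 1 := by
    have h1 : q + 1 ≤ 2 ^ m := (Nat.lt_two_pow_self (n := q)).trans_le
      (Nat.pow_le_pow_right (by norm_num) (by omega))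
    have h2 : (q : ℝ) + 1 ≤ 2 ^ m := by exact_mod_cast h1
    calc ((q : ℝ) + 1) * (1 / 2) ^ m ≤ 2 ^ m * (1 / 2) ^ m := by gcongr
      _ = 1 := by rw [← mul_pow]; norm_num
  have : ((∑ s ∈ range (q + 1), N.choose s * (2 ^ s) ^ t * M.choose (m - s) : ℕ) : ℝ) ≤ P.choose m := by
    refine hsum.trans ?_
    rw [← mul_assoc]
    exact mul_le_of_le_one_left (by positivity) hq2
  exact_mod_cast this

lemma count_family {V : Type} (X : Finset V) (f : List (Finset V) → Finset V) (t b M m : ℕ)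
    (hM : ∀ l, (f l).card ≤ M) (𝓘 : Finset (Finset V)) (hm : ∀ I ∈ 𝓘, I ⊆ X ∧ I.card = m)
    (h : ∀ I ∈ 𝓘, ∃ l : List (Finset V), l.length = t ∧ (∀ S ∈ l, S ⊆ I ∧ S.card ≤ b) ∧ I ⊆ f l) :
    𝓘.card ≤ ∑ s ∈ range (t * b + 1), X.card.choose s * (2 ^ s) ^ t * M.choose (m - s) := by
  have hcov : 𝓘 ⊆ (range (t * b + 1)).biUnion (fun s => (X.powersetCard s).biUnion (fun S =>
      (Fintype.piFinset (fun _ : Fin t => S.powerset)).biUnion (fun g =>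
        ((f (List.ofFn g)).powersetCard (m - s)).image (fun J => J ∪ S)))) := by
    intro I hI
    obtain ⟨hIX, hIm⟩ := hm I hI
    obtain ⟨l, hl, hl2, hl3⟩ := h I hI
    subst hl
    set g : Fin l.length → Finset V := fun i => l.get i with hg
    have hgl : List.ofFn g = l := List.ofFn_get l
    set S : Finset V := univ.biUnion g with hS
    have hSI : S ⊆ I := by
      rw [hS, biUnion_subset]
      intro i _
      exact (hl2 _ (List.get_mem l i)).1
    have hSc : S.card ≤ l.length * b := by
      refine card_biUnion_le.trans ?_
      refine (sum_le_card_nsmul _ _ b ?_).trans ?_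
      · intro i _; exact (hl2 _ (List.get_mem l i)).2
      · simp
    simp only [mem_biUnion, mem_range, mem_powersetCard, Fintype.mem_piFinset, mem_powerset, mem_image]
    refine ⟨S.card, by omega, S, ⟨hSI.trans hIX, rfl⟩, g, fun i => ?_, I \ S, ⟨?_, ?_⟩, ?_⟩
    · exact subset_biUnion_of_mem g (mem_univ i)
    · rw [hgl]; exact sdiff_subset.trans hl3
    · rw [card_sdiff_of_subset hSI, hIm]
    · exact sdiff_union_of_subset hSI
  refine (card_le_card hcov).trans (card_biUnion_le.trans (sum_le_sum fun s _ => ?_))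
  refine card_biUnion_le.trans ?_
  rw [← card_powersetCard s X, mul_assoc, ← smul_eq_mul]
  apply sum_le_card_nsmul
  intro S hS
  rw [mem_powersetCard] at hS
  refine card_biUnion_le.trans ?_
  have : (2 ^ s) ^ t = (Fintype.piFinset (fun _ : Fin t => S.powerset)).card := by
    rw [Fintype.card_piFinset]; simp [hS.2]
  rw [this, ← smul_eq_mul]
  apply sum_le_card_nsmul
  intro g _
  refine card_image_le.trans ?_
  rw [card_powersetCard]
  exact Nat.choose_le_choose _ (hM _)

end HC

namespace HC
open Finset Combinatorics
open scoped BigOperators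

lemma dg_le_card {V β : Type} {H : Finset (Finset V)} {T : Finset V} {t : Finset β}
    (r : Finset V → β → Prop) (h1 : ∀ e ∈ H, T ⊆ e → ∃ b ∈ t, r e b)
    (h2 : ∀ b ∈ t, ∀ e e', r e b → r e' b → e = e') : dg H T ≤ t.card := by
  unfold dg
  apply card_le_card_of_forall_subsingleton r
  · intro e he
    obtain ⟨he, hv⟩ := mem_filter.mp he
    exact h1 e he hv
  · intro b hb e he e' he'
    exact h2 b hb e e' he.2 he'.2

section hyp
variable {ℓ : ℕ}

/-- a positive homothetic copy -/
noncomputable def cpy (F : Finset (Fin ℓ → ℕ)) (a : Fin ℓ → ℕ) (b : ℕ) : Finset (Fin ℓ → ℕ) :=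
  F.image (fun x => a + b • x)

/-- the box -/
noncomputable def box (ℓ n : ℕ) : Finset (Fin ℓ → ℕ) := Fintype.piFinset fun _ : Fin ℓ => Finset.Icc 1 n

/-- the hypergraph of homothetic copies -/
noncomputable def hyp (F : Finset (Fin ℓ → ℕ)) (n : ℕ) : Finset (Finset (Fin ℓ → ℕ)) :=
  (box ℓ n).powerset.filter (fun e => ∃ (a : Fin ℓ → ℕ) (b : ℕ), 1 ≤ b ∧ e = cpy F a b)

lemma box_card (n : ℕ) : (box ℓ n).card = n ^ ℓ := by
  simp [box, Fintype.card_piFinset]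

lemma cpy_card (F : Finset (Fin ℓ → ℕ)) (a : Fin ℓ → ℕ) (b : ℕ) (hb : 1 ≤ b) :
    (cpy F a b).card = F.card := by
  apply card_image_of_injective
  intro x y h
  funext i
  have := congrFun h i
  simp only [Pi.add_apply, Pi.smul_apply, smul_eq_mul] at this
  exact Nat.eq_of_mul_eq_mul_left hb (by omega)

lemma hyp_card {F : Finset (Fin ℓ → ℕ)} {n : ℕ} : ∀ e ∈ hyp F n, e.card = F.card := by
  intro e he
  obtain ⟨_, a, b, hb, rfl⟩ := mem_filter.mp he
  exact cpy_card F a b hb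

/-- two points determine the parameters -/
lemma two_points {a a' x y : Fin ℓ → ℕ} {b b' : ℕ} (hxy : x ≠ y)
    (h1 : a + b • x = a' + b' • x) (h2 : a + b • y = a' + b' • y) : a = a' ∧ b = b' := by
  obtain ⟨i, hi⟩ := Function.ne_iff.mp hxy
  have e1 := congrFun h1 i
  have e2 := congrFun h2 i
  simp only [Pi.add_apply, Pi.smul_apply, smul_eq_mul] at e1 e2
  have hb : b = b' := by
    have e3 : ((b : ℤ) - b') * ((x i : ℤ) - y i) = 0 := by
      have e1' : (a i : ℤ) + b * x i = a' i + b' * x i := by exact_mod_cast e1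
      have e2' : (a i : ℤ) + b * y i = a' i + b' * y i := by exact_mod_cast e2
      linear_combination e1' - e2'
    rcases mul_eq_zero.mp e3 with h | h
    · omega
    · exfalso; apply hi; omega
  subst hb
  exact ⟨add_right_cancel h1, rfl⟩

lemma b_le {F : Finset (Fin ℓ → ℕ)} (hF : 2 ≤ F.card) {n b : ℕ} {a : Fin ℓ → ℕ}
    (h : cpy F a b ⊆ box ℓ n) : b ≤ n := by
  obtain ⟨x, hx, y, hy, hxy⟩ := one_lt_card.mp hF
  obtain ⟨i, hi⟩ := Function.ne_iff.mp hxy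
  have hx' := h (mem_image_of_mem _ hx)
  have hy' := h (mem_image_of_mem _ hy)
  simp only [box, Fintype.mem_piFinset, mem_Icc, Pi.add_apply, Pi.smul_apply, smul_eq_mul] at hx' hy'
  have h1 := (hx' i).2
  have h2 := (hy' i).2
  rcases Nat.lt_or_gt_of_ne hi with h | h
  · have : b * (x i + 1) ≤ b * y i := Nat.mul_le_mul_left b h
    rw [mul_add] at this; omega
  · have : b * (y i + 1) ≤ b * x i := Nat.mul_le_mul_left b h
    rw [mul_add] at this; omega

lemma dg_one {F : Finset (Fin ℓ → ℕ)} (hF : 2 ≤ F.card) (n : ℕ) (v : Fin ℓ → ℕ) :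
    dg (hyp F n) {v} ≤ F.card * n := by
  have : (F ×ˢ Finset.Icc 1 n).card = F.card * n := by simp
  rw [← this]
  apply dg_le_card
    (fun e p => ∃ a : Fin ℓ → ℕ, e = cpy F a p.2 ∧ v = a + p.2 • p.1)
  · intro e he hv
    obtain ⟨hb, a, b, hb1, rfl⟩ := mem_filter.mp he
    obtain ⟨x, hx, hxv⟩ := mem_image.mp (hv (mem_singleton_self v))
    exact ⟨(x, b), by simp [hx, hb1, b_le hF (mem_powerset.mp hb)], a, rfl, hxv.symm⟩
  · rintro ⟨x, b⟩ _ e e' ⟨a, rfl, h1⟩ ⟨a', rfl, h2⟩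
    have : a = a' := add_right_cancel (h1.symm.trans h2)
    rw [this]

lemma dg_two {F : Finset (Fin ℓ → ℕ)} (n : ℕ) (T : Finset (Fin ℓ → ℕ)) (hT : 2 ≤ T.card) :
    dg (hyp F n) T ≤ F.card * F.card := by
  obtain ⟨u, hu, v, hv, huv⟩ := one_lt_card.mp hT
  have : (F ×ˢ F).card = F.card * F.card := by simp
  rw [← this]
  apply dg_le_card
    (fun e p => ∃ (a : Fin ℓ → ℕ) (b : ℕ), e = cpy F a b ∧ u = a + b • p.1 ∧ v = a + b • p.2)
  · intro e he hTe
    obtain ⟨hb, a, b, hb1, rfl⟩ := mem_filter.mp he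
    obtain ⟨x, hx, hxu⟩ := mem_image.mp (hTe hu)
    obtain ⟨y, hy, hyv⟩ := mem_image.mp (hTe hv)
    exact ⟨(x, y), by simp [hx, hy], a, b, rfl, hxu.symm, hyv.symm⟩
  · rintro ⟨x, y⟩ _ e e' ⟨a, b, rfl, h1, h1'⟩ ⟨a', b', rfl, h2, h2'⟩
    have hxy : x ≠ y := by
      rintro rfl
      exact huv (h1.trans h1'.symm)
    obtain ⟨ha, hb⟩ := two_points hxy (h1.symm.trans h2) (h1'.symm.trans h2')
    rw [ha, hb]

lemma dg_bound {F : Finset (Fin ℓ → ℕ)} (s : ℕ) (hs : 1 ≤ s) (hF : F.card = s + 1) (n : ℕ) (Q : ℝ)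
    (hQ : 1 ≤ Q) (hQn : Q ^ s = n) (T : Finset (Fin ℓ → ℕ)) (hT : T.Nonempty) :
    (dg (hyp F n) T : ℝ) ≤ ((F.card : ℝ) * F.card) * Q ^ (s + 1 - T.card) := by
  rcases Nat.lt_or_ge T.card 2 with h | h
  · have h1 : T.card = 1 := by have := card_pos.mpr hT; omega
    obtain ⟨v, rfl⟩ := card_eq_one.mp h1
    have h2 := dg_one (F := F) (by omega) n v
    rw [card_singleton, Nat.add_sub_cancel, hQn]
    have h3 : (dg (hyp F n) {v} : ℝ) ≤ F.card * n := by exact_mod_cast h2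
    refine h3.trans ?_
    have : (1:ℝ) ≤ F.card := by exact_mod_cast (by omega : 1 ≤ F.card)
    gcongr
    nlinarith
  · have h2 : (dg (hyp F n) T : ℝ) ≤ (F.card : ℝ) * F.card := by exact_mod_cast dg_two n T h
    refine h2.trans ?_
    have : 1 ≤ Q ^ (s + 1 - T.card) := one_le_pow₀ hQ
    have h0 : (0:ℝ) ≤ (F.card : ℝ) * F.card := by positivity
    nlinarith

/-- the sum of a word -/
def shift {F : Finset (Fin ℓ → ℕ)} {k : ℕ} (w : Fin k → F) : Fin ℓ → ℕ := ∑ j, (w j : Fin ℓ → ℕ)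

lemma shift_line {F : Finset (Fin ℓ → ℕ)} {k : ℕ} (L : Line F (Fin k)) :
    ∃ (σ : Fin ℓ → ℕ) (b : ℕ), 1 ≤ b ∧ ∀ x : F, shift (L x) = σ + b • (x : Fin ℓ → ℕ) := by
  refine ⟨∑ j, (L.idxFun j).elim 0 (fun x => (x : Fin ℓ → ℕ)),
    (univ.filter (fun j => L.idxFun j = none)).card, ?_, ?_⟩
  · obtain ⟨i, hi⟩ := L.proper
    exact card_pos.mpr ⟨i, by simp [hi]⟩
  · intro x
    unfold shift
    rw [← sum_const, sum_filter, ← sum_add_distrib]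
    apply sum_congr rfl
    intro j _
    rw [Line.apply_def]
    rcases h : L.idxFun j with _ | y <;> simp [h]

/-- translates inside the box -/
lemma translate_count (n r : ℕ) (X : Finset (Fin ℓ → ℕ)) (hX : X ⊆ box ℓ n) (σ : Fin ℓ → ℕ)
    (hσ : ∀ i, σ i ≤ r) :
    (X.card : ℝ) - ((n : ℝ) ^ ℓ - ((n - r : ℕ) : ℝ) ^ ℓ) ≤
      ((box ℓ n).filter (fun a => a + σ ∈ X)).card := by
  set G : Finset (Fin ℓ → ℕ) := Fintype.piFinset fun _ : Fin ℓ => Finset.Icc (r+1) n with hG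
  have hGc : G.card = (n - r) ^ ℓ := by
    simp [hG, Fintype.card_piFinset]
  have hGb : G ⊆ box ℓ n := by
    intro x hx
    simp only [hG, box, Fintype.mem_piFinset, mem_Icc] at hx ⊢
    exact fun i => ⟨by have := (hx i).1; omega, (hx i).2⟩
  have h1 : (X ∩ G).card ≤ ((box ℓ n).filter (fun a => a + σ ∈ X)).card := by
    apply card_le_card_of_injOn (fun x i => x i - σ i)
    · intro x hx
      simp only [coe_inter, Set.mem_inter_iff, mem_coe] at hx
      obtain ⟨hxX, hxG⟩ := hx
      simp only [hG, Fintype.mem_piFinset, mem_Icc] at hxG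
      simp only [coe_filter, box, Fintype.mem_piFinset, mem_Icc, Set.mem_ofPred_eq]
      refine ⟨fun i => ?_, ?_⟩
      · have := hσ i; have := hxG i; omega
      · convert hxX using 1
        funext i
        have := hσ i; have := hxG i
        simp only [Pi.add_apply]; omega
    · intro x hx y hy hxy
      simp only [coe_inter, Set.mem_inter_iff, mem_coe, hG, Fintype.mem_piFinset, mem_Icc] at hx hy
      funext i
      have e := congrFun hxy i
      have := hσ i; have := hx.2 i; have := hy.2 i
      simp only at e
      omega
  have h2 : (X \ G).card ≤ (box ℓ n \ G).card := card_le_card (sdiff_subset_sdiff hX Subset.rfl)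
  have h3 := card_inter_add_card_sdiff X G
  rw [card_sdiff_of_subset hGb, hGc, box_card] at h2
  have h4 : (n - r) ^ ℓ ≤ n ^ ℓ := Nat.pow_le_pow_left (by omega) _
  have h5 : ((X \ G).card : ℝ) ≤ (n : ℝ) ^ ℓ - ((n - r : ℕ) : ℝ) ^ ℓ := by
    have : ((X \ G).card : ℝ) ≤ ((n ^ ℓ - (n - r) ^ ℓ : ℕ) : ℝ) := by exact_mod_cast h2
    rw [Nat.cast_sub h4] at this
    push_cast at this
    exact this
  have h6 : ((X ∩ G).card : ℝ) + (X \ G).card = X.card := by exact_mod_cast h3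
  have h7 : ((X ∩ G).card : ℝ) ≤ ((box ℓ n).filter (fun a => a + σ ∈ X)).card := by exact_mod_cast h1
  linarith

lemma bernoulli_box (ℓ n r : ℕ) (τ : ℝ) (h1 : τ ≤ 1) (h : (r : ℝ) ≤ τ * n) :
    (n : ℝ) ^ ℓ - ((n - r : ℕ) : ℝ) ^ ℓ ≤ ℓ * τ * (n : ℝ) ^ ℓ := by
  have hrn : r ≤ n := by
    have : (r : ℝ) ≤ n := h.trans (by nlinarith [(Nat.cast_nonneg n : (0:ℝ) ≤ n)])
    exact_mod_cast this
  rw [Nat.cast_sub hrn]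
  have h2 : (1 - τ) * n ≤ (n : ℝ) - r := by linarith
  have h3 : ((1 - τ) * n) ^ ℓ ≤ ((n : ℝ) - r) ^ ℓ :=
    pow_le_pow_left₀ (mul_nonneg (by linarith) (by positivity)) h2 ℓ
  have h4 : 1 + (ℓ : ℝ) * (-τ) ≤ (1 + (-τ)) ^ ℓ := one_add_mul_le_pow (by linarith) ℓ
  rw [mul_pow] at h3
  have h5 : (1 + (ℓ : ℝ) * (-τ)) * (n : ℝ) ^ ℓ ≤ (1 - τ) ^ ℓ * (n : ℝ) ^ ℓ := by
    apply mul_le_mul_of_nonneg_right _ (by positivity)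
    simpa [sub_eq_add_neg] using h4
  linarith

lemma pr_box (n : ℕ) (p : (Fin ℓ → ℕ) → Prop) [DecidablePred p] :
    pr (fun a : box ℓ n => p a) = ((box ℓ n).filter p).card / (n : ℝ) ^ ℓ := by
  unfold pr
  rw [Fintype.expect_eq_sum_div_card]
  congr 1
  · rw [sum_coe_sort (box ℓ n) (fun a => ind (p a))]
    unfold ind
    rw [card_filter]
    push_cast
    apply sum_congr rfl
    intro a _
    by_cases hp : p a <;> simp [hp]
  · rw [Fintype.card_coe, box_card]; push_cast; rfl

lemma supersat (hℓ : 1 ≤ ℓ) (F : Finset (Fin ℓ → ℕ)) (hF : 2 ≤ F.card) (β : ℝ) (hβ : 0 < β) :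
    ∃ (c : ℝ) (n₀ : ℕ), 0 < c ∧ ∀ n ≥ n₀, ∀ X ⊆ box ℓ n, β * (n : ℝ) ^ ℓ ≤ X.card →
      c * (n : ℝ) * (n : ℝ) ^ ℓ ≤ ((hyp F n).filter (fun e => e ⊆ X)).card := by
  have hFne : Nonempty F := by
    obtain ⟨x, hx⟩ := card_pos.mp (by omega : 0 < F.card)
    exact ⟨⟨x, hx⟩⟩
  obtain ⟨k, hk⟩ := dhj (α := F) (β / 2 / 2) (by positivity)
  set R : ℕ := 1 + ∑ w : Fin k → F, ∑ i, shift w i with hR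
  have hRb : ∀ (w : Fin k → F) i, shift w i ≤ R := by
    intro w i
    have h1 : shift w i ≤ ∑ i, shift w i :=
      single_le_sum (f := fun i => shift w i) (fun _ _ => Nat.zero_le _) (mem_univ i)
    have h2 : ∑ i, shift w i ≤ ∑ w : Fin k → F, ∑ i, shift w i :=
      single_le_sum (f := fun w : Fin k → F => ∑ i, shift w i) (fun _ _ => Nat.zero_le _) (mem_univ w)
    omega
  have hR0 : (0:ℝ) < R := by exact_mod_cast (by omega : 0 < R)
  have hℓ0 : (1:ℝ) ≤ ℓ := by exact_mod_cast hℓ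
  set τ : ℝ := min 1 (β / 2 / ℓ) with hτ
  have hτ0 : 0 < τ := by positivity
  have hτβ : ℓ * τ ≤ β / 2 := by
    have : τ ≤ β / 2 / ℓ := min_le_right _ _
    rw [le_div_iff₀ (by linarith)] at this
    linarith
  set Λ : ℝ := ((Fintype.card (Line F (Fin k)) : ℕ) : ℝ) + 1 with hΛ
  have hΛ0 : 0 < Λ := by positivity
  have hFc : (0:ℝ) < F.card := by exact_mod_cast (by omega : 0 < F.card)
  refine ⟨(τ / R / 2) * (β / 2 / 2) / (Λ * (F.card * F.card)), ⌈R / τ⌉₊ + 1, by positivity, ?_⟩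
  intro n hn X hX hXc
  have hn1 : R / τ ≤ n := by
    have h1 := Nat.le_ceil ((R : ℝ) / τ)
    have h2 : ((⌈R / τ⌉₊ : ℕ) : ℝ) ≤ n := by exact_mod_cast (by omega : ⌈R / τ⌉₊ ≤ n)
    linarith
  have hn0 : (0:ℝ) < n := lt_of_lt_of_le (by positivity) hn1
  set D : ℕ := ⌊τ / R * n⌋₊ with hD
  have hD1 : (D : ℝ) ≤ τ / R * n := Nat.floor_le (by positivity)
  have hy1 : 1 ≤ τ / R * n := by
    rw [div_le_iff₀ hτ0] at hn1
    rw [div_mul_eq_mul_div, le_div_iff₀ hR0]; linarith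
  have hD2 : τ / R / 2 * n ≤ D := by
    have h1 : τ / R * n < D + 1 := Nat.lt_floor_add_one _
    have h2 : 1 ≤ D := Nat.one_le_floor_iff _ |>.mpr hy1
    have h3 : (1:ℝ) ≤ D := by exact_mod_cast h2
    linarith
  -- good pairs
  set good : ℕ → (Fin ℓ → ℕ) → Prop := fun d a => ∃ L : Line F (Fin k), ∀ x, a + d • shift (L x) ∈ X
    with hgood
  have hgc : ∀ d ∈ Finset.Icc 1 D, β / 2 / 2 * (n : ℝ) ^ ℓ ≤ ((box ℓ n).filter (good d)).card := by
    intro d hd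
    rw [mem_Icc] at hd
    have hdR : ((d * R : ℕ) : ℝ) ≤ τ * n := by
      have : (d : ℝ) ≤ D := by exact_mod_cast hd.2
      push_cast
      calc (d : ℝ) * R ≤ (τ / R * n) * R := by gcongr; linarith
        _ = τ * n := by field_simp
    have hw : ∀ w : Fin k → F, β / 2 ≤ pr (fun a : box ℓ n => (a : Fin ℓ → ℕ) + d • shift w ∈ X) := by
      intro w
      rw [pr_box n (fun a => a + d • shift w ∈ X), le_div_iff₀ (by positivity)]
      have h1 := translate_count n (d * R) X hX (d • shift w) (fun i => by
        simp only [Pi.smul_apply, smul_eq_mul]; exact Nat.mul_le_mul_left d (hRb w i))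
      have h2 := bernoulli_box ℓ n (d * R) τ (min_le_left _ _) hdR
      have h3 : ℓ * τ * (n : ℝ) ^ ℓ ≤ β / 2 * (n : ℝ) ^ ℓ := by gcongr
      linarith
    have e1 : β / 2 ≤ 𝔼 a : box ℓ n, pr (fun w : Fin k → F => (a : Fin ℓ → ℕ) + d • shift w ∈ X) := by
      unfold pr
      rw [exp_comm, ← exp_const (X := Fin k → F) (β / 2)]
      exact exp_mono fun w => hw w
    have e2 := markov_half (by positivity) (fun a => pr_le_one _) e1
    have e3 : β / 2 / 2 ≤ pr (fun a : box ℓ n => good d a) := by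
      refine e2.trans (pr_mono fun a ha => ?_)
      exact hk (Fin k) (by simp) {w | (a : Fin ℓ → ℕ) + d • shift w ∈ X} ha
    rwa [pr_box n (good d), le_div_iff₀ (by positivity)] at e3
  set prs : Finset (ℕ × (Fin ℓ → ℕ)) := (Finset.Icc 1 D ×ˢ box ℓ n).filter (fun p => good p.1 p.2) with hprs
  have hprs1 : (τ / R / 2 * n) * (β / 2 / 2 * (n : ℝ) ^ ℓ) ≤ prs.card := by
    have h1 : prs.card = ∑ d ∈ Finset.Icc 1 D, ((box ℓ n).filter (good d)).card := by
      rw [hprs, card_filter, sum_product]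
      apply sum_congr rfl
      intro d _
      rw [card_filter]
    have h2 : (D : ℝ) * (β / 2 / 2 * (n : ℝ) ^ ℓ) ≤ prs.card := by
      rw [h1]; push_cast
      have := card_nsmul_le_sum (Finset.Icc 1 D) (fun d => (((box ℓ n).filter (good d)).card : ℝ)) _ hgc
      rwa [Nat.card_Icc, Nat.add_sub_cancel, nsmul_eq_mul] at this
    refine le_trans ?_ h2
    gcongr
  set E := (hyp F n).filter (fun e => e ⊆ X) with hE
  have hL : ∀ L : Line F (Fin k),
      (prs.filter (fun p => ∀ x, p.2 + p.1 • shift (L x) ∈ X)).card ≤ (F.card * F.card) * E.card := by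
    intro L
    obtain ⟨σ, b, hb, hσ⟩ := shift_line L
    set P := prs.filter (fun p => ∀ x, p.2 + p.1 • shift (L x) ∈ X) with hP
    set φ : ℕ × (Fin ℓ → ℕ) → Finset (Fin ℓ → ℕ) := fun p => cpy F (p.2 + p.1 • σ) (p.1 * b) with hφ
    have hPd : ∀ p ∈ P, 1 ≤ p.1 := by
      intro p hp
      have := (mem_filter.mp hp).1
      rw [hprs, mem_filter, mem_product, mem_Icc] at this
      exact this.1.1.1
    have him : P.image φ ⊆ E := by
      intro e he
      obtain ⟨p, hp, rfl⟩ := mem_image.mp he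
      have hsub : φ p ⊆ X := by
        intro y hy
        obtain ⟨x, hx, rfl⟩ := mem_image.mp hy
        have := (mem_filter.mp hp).2 ⟨x, hx⟩
        rw [hσ] at this
        convert this using 1
        rw [smul_add, add_assoc, smul_smul]
      rw [hE, mem_filter]
      refine ⟨mem_filter.mpr ⟨mem_powerset.mpr (hsub.trans hX), _, _, ?_, rfl⟩, hsub⟩
      exact Nat.mul_pos (hPd p hp) hb
    obtain ⟨x, hx, y, hy, hxy⟩ := one_lt_card.mp (by omega : 1 < F.card)
    have hfib := card_le_mul_card_image (f := φ) P (F.card * F.card) (by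
      intro e he
      have hec : e.card = F.card := hyp_card e (mem_filter.mp (him he)).1
      have : (e ×ˢ e).card = F.card * F.card := by simp [hec]
      rw [← this]
      apply card_le_card_of_injOn
        (fun p => ((p.2 + p.1 • σ) + (p.1 * b) • x, (p.2 + p.1 • σ) + (p.1 * b) • y))
      · intro p hp
        simp only [coe_filter, Set.mem_ofPred_eq] at hp
        obtain ⟨hp, rfl⟩ := hp
        simp only [coe_product, Set.mem_prod, mem_coe]
        exact ⟨mem_image_of_mem _ hx, mem_image_of_mem _ hy⟩
      · intro p hp p' hp' hpp
        simp only [Prod.mk.injEq] at hpp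
        obtain ⟨h1, h2⟩ := two_points hxy hpp.1 hpp.2
        have h3 : p.1 = p'.1 := Nat.eq_of_mul_eq_mul_right hb h2
        rw [h3] at h1
        exact Prod.ext h3 (add_right_cancel h1))
    exact hfib.trans (Nat.mul_le_mul_left _ (card_le_card him))
  have htot : prs.card ≤ Fintype.card (Line F (Fin k)) * ((F.card * F.card) * E.card) := by
    have hc : prs ⊆ univ.biUnion (fun L : Line F (Fin k) =>
        prs.filter (fun p => ∀ x, p.2 + p.1 • shift (L x) ∈ X)) := by
      intro p hp
      obtain ⟨L, hL⟩ := (mem_filter.mp hp).2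
      exact mem_biUnion.mpr ⟨L, mem_univ _, mem_filter.mpr ⟨hp, hL⟩⟩
    refine (card_le_card hc).trans (card_biUnion_le.trans ?_)
    have := sum_le_card_nsmul (univ : Finset (Line F (Fin k))) _ _ (fun L _ => hL L)
    simpa using this
  have htot' : (prs.card : ℝ) ≤ Λ * (F.card * F.card) * E.card := by
    have h1 : (prs.card : ℝ) ≤ ((Fintype.card (Line F (Fin k)) : ℕ) : ℝ) * ((F.card * F.card) * E.card) := by
      exact_mod_cast htot
    have h2 : (0:ℝ) ≤ (F.card * F.card) * E.card := by positivity
    rw [hΛ]; nlinarith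
  rw [mul_assoc, div_mul_eq_mul_div, div_le_iff₀ (by positivity)]
  calc _ = (τ / R / 2 * n) * (β / 2 / 2 * (n : ℝ) ^ ℓ) := by ring
    _ ≤ _ := hprs1
    _ ≤ _ := htot'
    _ = _ := by ring

end hyp
end HC

namespace HC
open Finset Combinatorics
open scoped BigOperators

lemma main_count (β : ℝ) (hβ : 0 < β) (ℓ : ℕ) (hℓ : 1 ≤ ℓ)
    (F : Finset (Fin ℓ → ℕ)) (hF : 2 ≤ F.card) :
    ∃ (C : ℝ) (n₀ : ℕ), ∀ n : ℕ, n₀ ≤ n → ∀ m : ℕ,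
      C * (n : ℝ) ^ ((ℓ : ℝ) - 1 / ((F.card : ℝ) - 1)) ≤ (m : ℝ) →
      ∀ 𝓘 : Finset (Finset (Fin ℓ → ℕ)), (∀ I ∈ 𝓘, I ⊆ box ℓ n ∧ I.card = m) →
      (∀ I ∈ 𝓘, ∀ a : Fin ℓ → ℕ, ∀ b : ℕ, 1 ≤ b → ¬ cpy F a b ⊆ I) →
      𝓘.card ≤ Nat.choose ⌊β * (n : ℝ) ^ ℓ⌋₊ m := by
  obtain ⟨s, hs⟩ : ∃ s, F.card = s + 1 := ⟨F.card - 1, by omega⟩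
  have hs1 : 1 ≤ s := by omega
  have hs0 : (s : ℝ) ≠ 0 := by positivity
  have hK : (0:ℝ) < (F.card : ℝ) * F.card := by
    have : (0:ℝ) < F.card := by exact_mod_cast (by omega : 0 < F.card)
    positivity
  obtain ⟨c, n₁, hc, hsup⟩ := supersat hℓ F hF (β / 256) (by positivity)
  obtain ⟨B, t, hB, hcont⟩ := containers (V := Fin ℓ → ℕ) s ((F.card : ℝ) * F.card) c (β / 256) hK hc
  obtain ⟨L, hL⟩ : ∃ L : ℕ, (2:ℝ) ^ t * (4 / β) ≤ 2 ^ L := by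
    obtain ⟨L, hL⟩ := pow_unbounded_of_one_lt ((2:ℝ) ^ t * (4 / β)) (by norm_num : (1:ℝ) < 2)
    exact ⟨L, hL.le⟩
  refine ⟨(L + 2) * t * B, n₁ + ⌈2 / β⌉₊ + 1, ?_⟩
  intro n hn m hm 𝓘 hI1 hI2
  have hn1 : (1:ℝ) ≤ n := by exact_mod_cast (by omega : 1 ≤ n)
  have hn0 : (0:ℝ) < n := by linarith
  set Q : ℝ := (n : ℝ) ^ (1 / (s : ℝ)) with hQ
  have hQ1 : 1 ≤ Q := Real.one_le_rpow hn1 (by positivity)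
  have hQs : Q ^ s = n := by
    rw [hQ, ← Real.rpow_natCast, ← Real.rpow_mul hn0.le]
    rw [one_div_mul_cancel hs0, Real.rpow_one]
  set N : ℝ := (n : ℝ) ^ ℓ with hN
  have hnN : (n : ℝ) ≤ N := le_self_pow₀ hn1 (by omega)
  have hQn : Q ≤ n := by
    rw [← hQs]; exact le_self_pow₀ hQ1 (by omega)
  have hN0 : 0 < N := by positivity
  have hCm : (L + 2) * t * B * (N / Q) ≤ m := by
    convert hm using 2
    rw [hs]
    push_cast
    rw [add_sub_cancel_right, Real.rpow_sub hn0, Real.rpow_natCast]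
  obtain ⟨f, hf1, hf2⟩ := hcont (box ℓ n) (hyp F n) Q N hQ1 (hQn.trans hnN)
    (by rw [box_card]; push_cast; exact le_rfl) (fun e he => (hyp_card e he).trans hs)
    (fun T hT => dg_bound s hs1 hs n Q hQ1 hQs T hT)
    (fun Y hY hYc => by
      rw [hQs]
      convert hsup n (by omega) Y hY hYc using 4)
  have hM : ∀ l, (f l).card ≤ ⌊β / 256 * N⌋₊ := by
    intro l
    apply Nat.le_floor
    have := (hf1 l).2
    rwa [max_eq_left (by positivity)] at this
  have hind : ∀ I ∈ 𝓘, ∀ e ∈ hyp F n, ¬ e ⊆ I := by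
    intro I hI e he heI
    obtain ⟨_, a, b, hb, rfl⟩ := mem_filter.mp he
    exact hI2 I hI a b hb heI
  rcases Nat.lt_or_ge ⌊β / 256 * N⌋₊ m with hlt | hge
  · have : 𝓘 = ∅ := by
      rw [eq_empty_iff_forall_notMem]
      intro I hI
      obtain ⟨l, _, _, h⟩ := hf2 I (hI1 I hI).1 (hind I hI)
      have h1 := card_le_card h
      rw [(hI1 I hI).2] at h1
      have := hM l
      omega
    rw [this, card_empty]; exact Nat.zero_le _
  · have hbb : (⌊B * (N / Q)⌋₊ : ℝ) ≤ B * (N / Q) := Nat.floor_le (by positivity)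
    have hcf := count_family (box ℓ n) f t ⌊B * (N / Q)⌋₊ ⌊β / 256 * N⌋₊ m hM 𝓘 hI1 (by
      intro I hI
      obtain ⟨l, h1, h2, h3⟩ := hf2 I (hI1 I hI).1 (hind I hI)
      exact ⟨l, h1, fun S hS => ⟨(h2 S hS).1, Nat.le_floor (h2 S hS).2⟩, h3⟩)
    refine hcf.trans ?_
    have hq : ((L + 2 : ℕ) : ℝ) * ((t * ⌊B * (N / Q)⌋₊ : ℕ) : ℝ) ≤ m := by
      push_cast
      calc ((L:ℝ) + 2) * (t * ⌊B * (N / Q)⌋₊) ≤ ((L:ℝ) + 2) * (t * (B * (N / Q))) := by gcongr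
        _ = (L + 2) * t * B * (N / Q) := by ring
        _ ≤ m := hCm
    have hq' : (L + 2) * (t * ⌊B * (N / Q)⌋₊) ≤ m := by exact_mod_cast hq
    have hbN : 2 ≤ β * N := by
      have h1 : ((⌈2 / β⌉₊ : ℕ) : ℝ) ≤ n := by exact_mod_cast (by omega : ⌈2 / β⌉₊ ≤ n)
      have h2 := (Nat.le_ceil (2 / β)).trans (h1.trans hnN)
      rw [div_le_iff₀ hβ] at h2
      linarith
    rw [box_card]
    refine numeric β hβ (n ^ ℓ) ⌊β * N⌋₊ ⌊β / 256 * N⌋₊ m (t * ⌊B * (N / Q)⌋₊) t L ?_ ?_ hge ?_ hL ?_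
    · have := Nat.floor_le (by positivity : 0 ≤ β / 256 * N)
      push_cast
      rw [← hN]
      linarith
    · have := Nat.lt_floor_add_one (β * N)
      push_cast
      rw [← hN]
      linarith
    · nlinarith
    · nlinarith

end HC


/-- Theorem 4.3: counting `m`-subsets of `[n]^ℓ` containing no homothetic copy
`a + bF` (with `a ∈ ℕ^ℓ` and `b ∈ ℤ \ {0}`) of a fixed finite configuration `F ⊆ ℕ^ℓ`. -/
theorem count_sets_no_homothetic_copy (β : ℝ) (hβ : 0 < β) (ℓ : ℕ) (hℓ : 1 ≤ ℓ)
    (F : Finset (Fin ℓ → ℕ)) (hF : 2 ≤ F.card) :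
    ∃ (C : ℝ) (n₀ : ℕ), ∀ n : ℕ, n₀ ≤ n → ∀ m : ℕ,
      C * (n : ℝ) ^ ((ℓ : ℝ) - 1 / ((F.card : ℝ) - 1)) ≤ (m : ℝ) →
      (((Fintype.piFinset fun _ : Fin ℓ => Finset.Icc 1 n).powersetCard m).filter
          (fun A : Finset (Fin ℓ → ℕ) =>
            ¬ ∃ (a : Fin ℓ → ℕ) (b : ℤ), b ≠ 0 ∧
              ∀ x ∈ F, ∃ y ∈ A, ∀ i : Fin ℓ, (y i : ℤ) = (a i : ℤ) + b * (x i : ℤ))).card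
        ≤ Nat.choose ⌊β * (n : ℝ) ^ ℓ⌋₊ m := by
  obtain ⟨C, n₀, h⟩ := HC.main_count β hβ ℓ hℓ F hF
  refine ⟨C, n₀, fun n hn m hm => h n hn m hm _ ?_ ?_⟩
  · intro I hI
    have h1 := (Finset.mem_filter.mp hI).1
    exact Finset.mem_powersetCard.mp h1
  · intro I hI a b hb hsub
    refine (Finset.mem_filter.mp hI).2 ⟨a, (b : ℤ), by omega, fun x hx => ?_⟩
    refine ⟨a + b • x, hsub (Finset.mem_image_of_mem _ hx), fun i => ?_⟩
    simp
end
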